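/- arXiv:1909.10118 — 7 statements merged into one kernel-verified Lean document; each statement's English description precedes it below -/
import Mathlib

section
/- Let Q be a polynomial of degree n whose zeros all lie in the closed upper half-disk D⁺ = {z ∈ ℂ : |z| ≤ 1, Im z ≥ 0}, and for δ > 0 set E_δ := {x ∈ [-1,1] : |Q'(x)/Q(x)| ≤ nδ}. Then the Lebesgue measure of E_δ satisfies m(E_δ) < 70e·δ. -/
open Polynomial Set MeasureTheory

/-- The auxiliary function `Q / (Q' + i D Q)`. -/
noncomputable def glF (Q : Polynomial ℂ) (D : ℝ) (z : ℂ) : ℂ :=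
  Q.eval z / ((Polynomial.derivative Q).eval z + Complex.I * D * Q.eval z)

lemma gl_sum (Q : Polynomial ℂ) (z a : ℂ) (c : ℝ) (hQ : Q.eval z ≠ 0)
    (h : ∀ ζ : ℂ, Q.IsRoot ζ → c ≤ (a * (1 / (z - ζ))).re) :
    (Q.natDegree : ℝ) * c ≤ (a * ((Polynomial.derivative Q).eval z / Q.eval z)).re := by
  have hs : Q.Splits := IsAlgClosed.splits Q
  have hQ0 : Q ≠ 0 := by rintro rfl; simp at hQ
  rw [hs.eval_derivative_div_eval_of_ne_zero hQ, hs.natDegree_eq_card_roots]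
  have h' : ∀ ζ ∈ Q.roots, c ≤ (a * (1 / (z - ζ))).re := fun ζ hζ =>
    h ζ ((mem_roots hQ0).1 hζ)
  generalize Q.roots = s at h'
  induction s using Multiset.induction_on with
  | empty => simp
  | cons b s ih =>
    have h1 := h' b (Multiset.mem_cons_self b s)
    have h2 := ih (fun ζ hζ => h' ζ (Multiset.mem_cons_of_mem hζ))
    rw [Multiset.map_cons, Multiset.sum_cons, Multiset.card_cons, mul_add, Complex.add_re]
    push_cast
    linarith

lemma gl_re (z ζ : ℂ) : (1 / (z - ζ)).re =
    (z.re - ζ.re) / ((z.re - ζ.re)^2 + (z.im - ζ.im)^2) := by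
  rw [one_div, Complex.inv_re, Complex.normSq_apply]
  simp [sq]

lemma gl_im (z ζ : ℂ) : (1 / (z - ζ)).im =
    (ζ.im - z.im) / ((z.re - ζ.re)^2 + (z.im - ζ.im)^2) := by
  rw [one_div, Complex.inv_im, Complex.normSq_apply]
  simp [sq]

lemma gl_im_nonneg (Q : Polynomial ℂ) (hz : ∀ z : ℂ, Q.IsRoot z → ‖z‖ ≤ 1 ∧ 0 ≤ z.im)
    (z : ℂ) (hzi : z.im ≤ 0) (hQ : Q.eval z ≠ 0) :
    0 ≤ ((Polynomial.derivative Q).eval z / Q.eval z).im := by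
  have := gl_sum Q z (-Complex.I) 0 hQ (by
    intro ζ hζ
    have h1 := (hz ζ hζ).2
    have h2 := gl_im z ζ
    have : (-Complex.I * (1 / (z - ζ))).re = (1 / (z - ζ)).im := by
      rw [Complex.mul_re]; simp only [Complex.neg_re, Complex.neg_im, Complex.I_re, Complex.I_im]
      ring
    rw [this, h2]
    apply div_nonneg
    · linarith
    · positivity)
  rw [Complex.mul_re] at this
  simp only [Complex.neg_re, Complex.neg_im, Complex.I_re, Complex.I_im] at this
  linarith

lemma glF_eq (Q : Polynomial ℂ) (D : ℝ) (z : ℂ) (hQ : Q.eval z ≠ 0) :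
    glF Q D z = ((Polynomial.derivative Q).eval z / Q.eval z + Complex.I * D)⁻¹ := by
  unfold glF
  rw [← inv_div, add_div, mul_div_cancel_right₀ _ hQ]

lemma gl_den_ne (Q : Polynomial ℂ) (hz : ∀ z : ℂ, Q.IsRoot z → ‖z‖ ≤ 1 ∧ 0 ≤ z.im)
    (D : ℝ) (hD : 0 < D) (z : ℂ) (hzi : z.im ≤ 0) (hQ : Q.eval z ≠ 0) :
    (Polynomial.derivative Q).eval z + Complex.I * D * Q.eval z ≠ 0 := by
  intro h
  have h1 := gl_im_nonneg Q hz z hzi hQ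
  have h2 : (Polynomial.derivative Q).eval z / Q.eval z = - (Complex.I * D) := by
    rw [div_eq_iff hQ]; linear_combination h
  rw [h2] at h1
  simp at h1
  linarith

lemma gl_bound (Q : Polynomial ℂ) (hn : 1 ≤ Q.natDegree)
    (D : ℝ) (hD : 0 < D) (z a : ℂ) (ha : ‖a‖ = 1) (haI : 0 ≤ (a * Complex.I).re)
    (c : ℝ) (hc : 0 < c) (hQ : Q.eval z ≠ 0)
    (h : ∀ ζ : ℂ, Q.IsRoot ζ → c ≤ (a * (1 / (z - ζ))).re) :
    ‖glF Q D z‖ ≤ c⁻¹ / Q.natDegree := by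
  have hs := gl_sum Q z a c hQ h
  have hn' : (0:ℝ) < Q.natDegree := by exact_mod_cast hn
  rw [glF_eq Q D z hQ, norm_inv, div_eq_mul_inv c⁻¹, ← mul_inv]
  apply inv_anti₀ (by positivity)
  set q := (Polynomial.derivative Q).eval z / Q.eval z
  calc c * Q.natDegree ≤ (a * q).re + D * (a * Complex.I).re := by
        have := mul_nonneg hD.le haI
        linarith
    _ = (a * (q + Complex.I * D)).re := by
        rw [mul_add, Complex.add_re, ← mul_assoc, Complex.re_mul_ofReal]; ring
    _ ≤ ‖a * (q + Complex.I * D)‖ := Complex.re_le_norm _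
    _ = _ := by rw [norm_mul, ha, one_mul]

lemma gl_cont (Q : Polynomial ℂ) (hQ0 : Q ≠ 0)
    (hz : ∀ z : ℂ, Q.IsRoot z → ‖z‖ ≤ 1 ∧ 0 ≤ z.im)
    (D : ℝ) (hD : 0 < D) (z : ℂ) (hzi : z.im ≤ 0) : ContinuousAt (glF Q D) z := by
  by_cases hQ : Q.eval z = 0
  · obtain ⟨R, hR, hRd⟩ := Polynomial.exists_eq_pow_rootMultiplicity_mul_and_not_dvd Q hQ0 z
    have hk : 0 < Q.rootMultiplicity z := (rootMultiplicity_pos hQ0).2 hQ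
    obtain ⟨k, hk'⟩ : ∃ k, Q.rootMultiplicity z = k + 1 := ⟨_, (Nat.succ_pred_eq_of_pos hk).symm⟩
    rw [hk'] at hR
    have hRz : R.eval z ≠ 0 := fun h => hRd (dvd_iff_isRoot.2 h)
    have key : glF Q D = fun w => (w - z) * R.eval w /
        ((k + 1) * R.eval w + (w - z) * ((Polynomial.derivative R).eval w
          + Complex.I * D * R.eval w)) := by
      funext w
      unfold glF
      by_cases hw : w = z
      · subst hw
        simp [hQ]
      · have hw' : (w - z) ≠ 0 := sub_ne_zero.2 hw
        have e1 : Q.eval w = (w - z) ^ k * ((w - z) * R.eval w) := by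
          rw [hR]; simp [pow_succ]; ring
        have e2 : (Polynomial.derivative Q).eval w = (w - z) ^ k *
            ((k + 1) * R.eval w + (w - z) * (Polynomial.derivative R).eval w) := by
          rw [hR]
          rw [derivative_mul, derivative_pow_succ]
          simp [pow_succ]
          ring
        rw [e1, e2]
        rw [← mul_div_mul_left ((w - z) * R.eval w) _ (pow_ne_zero k hw')]
        congr 1
        ring
    rw [key]
    apply ContinuousAt.div
    · fun_prop
    · fun_prop
    · simp only [sub_self, zero_mul, add_zero]
      exact mul_ne_zero (by exact_mod_cast Nat.succ_ne_zero k) hRz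
  · unfold glF
    apply ContinuousAt.div
    · fun_prop
    · fun_prop
    · exact gl_den_ne Q hz D hD z hzi hQ

lemma gl_diff (Q : Polynomial ℂ) 
    (hz : ∀ z : ℂ, Q.IsRoot z → ‖z‖ ≤ 1 ∧ 0 ≤ z.im)
    (D : ℝ) (hD : 0 < D) (z : ℂ) (hzi : z.im < 0) : DifferentiableAt ℂ (glF Q D) z := by
  have hQ : Q.eval z ≠ 0 := fun h => by linarith [(hz z h).2]
  unfold glF
  apply DifferentiableAt.div
  · fun_prop
  · fun_prop
  · exact gl_den_ne Q hz D hD z hzi.le hQ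

lemma gl_neg_im (Q : Polynomial ℂ) (D : ℝ) (z : ℂ) (hQ : Q.eval z ≠ 0) :
    -(glF Q D z).im = (((Polynomial.derivative Q).eval z / Q.eval z).im + D) /
      (((Polynomial.derivative Q).eval z / Q.eval z).re ^ 2 +
        (((Polynomial.derivative Q).eval z / Q.eval z).im + D) ^ 2) := by
  rw [glF_eq Q D z hQ, Complex.inv_im, Complex.normSq_apply]
  generalize (Polynomial.derivative Q).eval z / Q.eval z = q
  simp [sq]
  ring

lemma gl_nonneg (Q : Polynomial ℂ) 
    (hz : ∀ z : ℂ, Q.IsRoot z → ‖z‖ ≤ 1 ∧ 0 ≤ z.im)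
    (D : ℝ) (hD : 0 < D) (z : ℂ) (hzi : z.im ≤ 0) : 0 ≤ -(glF Q D z).im := by
  by_cases hQ : Q.eval z = 0
  · simp [glF, hQ]
  · rw [gl_neg_im Q D z hQ]
    have := gl_im_nonneg Q hz z hzi hQ
    positivity

lemma gl_lower (Q : Polynomial ℂ) 
    (hz : ∀ z : ℂ, Q.IsRoot z → ‖z‖ ≤ 1 ∧ 0 ≤ z.im)
    (D : ℝ) (hD : 0 < D) (z : ℂ) (hzi : z.im ≤ 0) (hQ : Q.eval z ≠ 0)
    (hle : ‖(Polynomial.derivative Q).eval z / Q.eval z‖ ≤ D) :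
    1 / (2 * D) ≤ -(glF Q D z).im := by
  rw [gl_neg_im Q D z hQ]
  have h1 := gl_im_nonneg Q hz z hzi hQ
  generalize (Polynomial.derivative Q).eval z / Q.eval z = q at *
  have h2 : q.re ^ 2 + q.im ^ 2 ≤ D ^ 2 := by
    have := Complex.sq_norm q
    rw [Complex.normSq_apply] at this
    have h3 : ‖q‖ ^ 2 ≤ D ^ 2 := by gcongr
    nlinarith
  rw [div_le_div_iff₀ (by positivity) (by positivity)]
  nlinarith

lemma gl_abs (z : ℂ) (h : ‖z‖ ≤ 1) : (-1 ≤ z.re ∧ z.re ≤ 1) ∧ z.im ≤ 1 :=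
  ⟨abs_le.1 ((Complex.abs_re_le_norm z).trans h),
    (abs_le.1 ((Complex.abs_im_le_norm z).trans h)).2⟩

lemma gl_bottom (Q : Polynomial ℂ) (hn : 1 ≤ Q.natDegree)
    (hz : ∀ z : ℂ, Q.IsRoot z → ‖z‖ ≤ 1 ∧ 0 ≤ z.im)
    (D : ℝ) (hD : 0 < D) (z : ℂ) (hzi : z.im = -1) (h1 : -2 ≤ z.re) (h2 : z.re ≤ 2) :
    ‖glF Q D z‖ ≤ 10 / Q.natDegree := by
  have hQ : Q.eval z ≠ 0 := fun h => by linarith [(hz z h).2]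
  have := gl_bound Q hn D hD z (-Complex.I) (by simp) (by simp) (1/10) (by norm_num) hQ (by
    intro ζ hζ
    obtain ⟨⟨h3, h4⟩, h5⟩ := gl_abs ζ (hz ζ hζ).1
    have h6 := (hz ζ hζ).2
    have : (-Complex.I * (1 / (z - ζ))).re = (1 / (z - ζ)).im := by
      rw [Complex.mul_re]; simp only [Complex.neg_re, Complex.neg_im, Complex.I_re, Complex.I_im]
      ring
    rw [this, gl_im, hzi]
    have hb : 0 < (-1 - ζ.im) ^ 2 := by nlinarith
    rw [div_le_div_iff₀ (by norm_num) (by positivity)]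
    nlinarith [mul_nonneg (by linarith : 0 ≤ 3 - (z.re - ζ.re)) (by linarith : 0 ≤ 3 + (z.re - ζ.re))])
  simpa using this

lemma gl_right (Q : Polynomial ℂ) (hn : 1 ≤ Q.natDegree)
    (hz : ∀ z : ℂ, Q.IsRoot z → ‖z‖ ≤ 1 ∧ 0 ≤ z.im)
    (D : ℝ) (hD : 0 < D) (z : ℂ) (hzr : z.re = 2) (h1 : -1 ≤ z.im) (h2 : z.im ≤ 0) :
    ‖glF Q D z‖ ≤ 5 / Q.natDegree := by
  have hQ : Q.eval z ≠ 0 := fun h => by linarith [(gl_abs z (hz z h).1).1.2]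
  have := gl_bound Q hn D hD z 1 (by simp) (by simp) (1/5) (by norm_num) hQ (by
    intro ζ hζ
    obtain ⟨⟨h3, h4⟩, h5⟩ := gl_abs ζ (hz ζ hζ).1
    have h6 := (hz ζ hζ).2
    rw [one_mul, gl_re, hzr]
    have hb : 0 < (2 - ζ.re) ^ 2 := by nlinarith
    rw [div_le_div_iff₀ (by norm_num) (by positivity)]
    have : (z.im - ζ.im) ^ 2 ≤ 4 := by nlinarith
    nlinarith)
  simpa using this

lemma gl_left (Q : Polynomial ℂ) (hn : 1 ≤ Q.natDegree)
    (hz : ∀ z : ℂ, Q.IsRoot z → ‖z‖ ≤ 1 ∧ 0 ≤ z.im)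
    (D : ℝ) (hD : 0 < D) (z : ℂ) (hzr : z.re = -2) (h1 : -1 ≤ z.im) (h2 : z.im ≤ 0) :
    ‖glF Q D z‖ ≤ 5 / Q.natDegree := by
  have hQ : Q.eval z ≠ 0 := fun h => by linarith [(gl_abs z (hz z h).1).1.1]
  have := gl_bound Q hn D hD z (-1) (by simp) (by simp) (1/5) (by norm_num) hQ (by
    intro ζ hζ
    obtain ⟨⟨h3, h4⟩, h5⟩ := gl_abs ζ (hz ζ hζ).1
    have h6 := (hz ζ hζ).2
    rw [neg_one_mul, Complex.neg_re, gl_re, hzr, ← neg_div]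
    have hb : 0 < (-2 - ζ.re) ^ 2 := by nlinarith
    rw [div_le_div_iff₀ (by norm_num) (by positivity)]
    have : (z.im - ζ.im) ^ 2 ≤ 4 := by nlinarith
    nlinarith)
  simpa using this

lemma gl_contx (Q : Polynomial ℂ) (hQ0 : Q ≠ 0)
    (hz : ∀ z : ℂ, Q.IsRoot z → ‖z‖ ≤ 1 ∧ 0 ≤ z.im)
    (D : ℝ) (hD : 0 < D) : Continuous (fun x : ℝ => glF Q D (x : ℂ)) := by
  rw [continuous_iff_continuousAt]
  intro x
  exact ContinuousAt.comp (f := fun x : ℝ => (x : ℂ)) (g := glF Q D)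
    (gl_cont Q hQ0 hz D hD x (by simp)) Complex.continuous_ofReal.continuousAt

lemma gl_int (Q : Polynomial ℂ) (hn : 1 ≤ Q.natDegree)
    (hz : ∀ z : ℂ, Q.IsRoot z → ‖z‖ ≤ 1 ∧ 0 ≤ z.im)
    (D : ℝ) (hD : 0 < D) :
    ∫ x in (-2:ℝ)..2, -(glF Q D (x : ℂ)).im ≤ 50 / Q.natDegree := by
  have hQ0 : Q ≠ 0 := by rintro rfl; simp at hn
  have H := Complex.integral_boundary_rect_eq_zero_of_continuousOn_of_differentiableOn (glF Q D)
    (⟨-2, -1⟩ : ℂ) (⟨2, 0⟩ : ℂ)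
    (by
      intro z hzz
      rw [Complex.mem_reProdIm] at hzz
      have h2 := hzz.2
      simp only [] at h2
      rw [uIcc_of_le (by norm_num)] at h2
      exact (gl_cont Q hQ0 hz D hD z h2.2).continuousWithinAt)
    (by
      intro z hzz
      rw [Complex.mem_reProdIm] at hzz
      have h2 := hzz.2.2
      simp only [] at h2
      refine (gl_diff Q hz D hD z (lt_of_lt_of_le h2 ?_)).differentiableWithinAt
      norm_num)
  simp only [] at H
  have B := intervalIntegral.norm_integral_le_of_norm_le_const (a := -2) (b := 2)
    (f := fun x : ℝ => glF Q D (x + ((-1:ℝ):ℂ) * Complex.I)) (C := 10 / Q.natDegree) (by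
      intro x hx
      rw [uIoc_of_le (by norm_num)] at hx
      apply gl_bottom Q hn hz D hD
      · simp
      · simpa using hx.1.le
      · simpa using hx.2)
  have R := intervalIntegral.norm_integral_le_of_norm_le_const (a := -1) (b := 0)
    (f := fun y : ℝ => glF Q D (((2:ℝ):ℂ) + y * Complex.I)) (C := 5 / Q.natDegree) (by
      intro x hx
      rw [uIoc_of_le (by norm_num)] at hx
      apply gl_right Q hn hz D hD
      · simp
      · simpa using hx.1.le
      · simpa using hx.2)
  have L := intervalIntegral.norm_integral_le_of_norm_le_const (a := -1) (b := 0)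
    (f := fun y : ℝ => glF Q D (((-2:ℝ):ℂ) + y * Complex.I)) (C := 5 / Q.natDegree) (by
      intro x hx
      rw [uIoc_of_le (by norm_num)] at hx
      apply gl_left Q hn hz D hD
      · simp
      · simpa using hx.1.le
      · simpa using hx.2)
  have T : (∫ x in (-2:ℝ)..2, -(glF Q D (x : ℂ)).im) = -(∫ x in (-2:ℝ)..2, glF Q D (x : ℂ)).im := by
    rw [intervalIntegral.integral_neg]
    congr 1
    exact Complex.imCLM.intervalIntegral_comp_comm
      ((gl_contx Q hQ0 hz D hD).intervalIntegrable _ _)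
  rw [T]
  have e0 : (fun x : ℝ => glF Q D (x + ((0:ℝ):ℂ) * Complex.I)) = fun x : ℝ => glF Q D (x:ℂ) := by
    funext x; simp
  rw [e0] at H
  generalize (∫ x in (-2:ℝ)..2, glF Q D (x : ℂ)) = t at *
  generalize (∫ x in (-2:ℝ)..2, glF Q D (x + ((-1:ℝ):ℂ) * Complex.I)) = b at *
  generalize (∫ y in (-1:ℝ)..0, glF Q D (((2:ℝ):ℂ) + y * Complex.I)) = r at *
  generalize (∫ y in (-1:ℝ)..0, glF Q D (((-2:ℝ):ℂ) + y * Complex.I)) = l at *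
  have ht : t = b + Complex.I * r - Complex.I * l := by
    simp only [smul_eq_mul] at H
    linear_combination -H
  have : ‖t‖ ≤ ‖b‖ + ‖r‖ + ‖l‖ := by
    rw [ht]
    calc _ ≤ ‖b + Complex.I * r‖ + ‖Complex.I * l‖ := norm_sub_le _ _
      _ ≤ ‖b‖ + ‖Complex.I * r‖ + ‖Complex.I * l‖ := by gcongr; exact norm_add_le _ _
      _ = _ := by simp
  have h3 := (abs_le.1 (Complex.abs_im_le_norm t)).1
  norm_num at B R L
  have : (50:ℝ) / Q.natDegree = 10 / Q.natDegree * 4 + 5 / Q.natDegree + 5 / Q.natDegree := by ring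
  linarith

theorem govorov_lapenko (Q : Polynomial ℂ) (n : ℕ) (hn : 1 ≤ n) (hdeg : Q.natDegree = n)
    (hz : ∀ z : ℂ, Q.IsRoot z → ‖z‖ ≤ 1 ∧ 0 ≤ z.im) (δ : ℝ) (hδ : 0 < δ) :
    volume {x : ℝ | x ∈ Icc (-1:ℝ) 1 ∧ Q.eval (x : ℂ) ≠ 0 ∧
        ‖(Polynomial.derivative Q).eval (x : ℂ) / Q.eval (x : ℂ)‖ ≤ (n : ℝ) * δ} <
      ENNReal.ofReal (70 * Real.exp 1 * δ) := by
  subst hdeg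
  have hQ0 : Q ≠ 0 := by rintro rfl; simp at hn
  have hn' : (0:ℝ) < Q.natDegree := by exact_mod_cast hn
  set D : ℝ := Q.natDegree * δ with hDdef
  have hD : 0 < D := by positivity
  have hI := gl_int Q hn hz D hD
  rw [intervalIntegral.integral_of_le (by norm_num)] at hI
  have hc : Continuous (fun x : ℝ => -(glF Q D (x : ℂ)).im) :=
    (Complex.continuous_im.comp (gl_contx Q hQ0 hz D hD)).neg
  have hM := mul_meas_ge_le_integral_of_nonneg (μ := volume.restrict (Ioc (-2:ℝ) 2))
    (f := fun x : ℝ => -(glF Q D (x : ℂ)).im)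
    (Filter.Eventually.of_forall (fun x => gl_nonneg Q hz D hD x (by simp)))
    ((hc.intervalIntegrable (-2) 2).1) (1 / (2 * D))
  set S := {x : ℝ | 1 / (2 * D) ≤ -(glF Q D (x : ℂ)).im}
  have hsub : volume {x : ℝ | x ∈ Icc (-1:ℝ) 1 ∧ Q.eval (x : ℂ) ≠ 0 ∧
        ‖(Polynomial.derivative Q).eval (x : ℂ) / Q.eval (x : ℂ)‖ ≤ D} ≤
      volume.restrict (Ioc (-2:ℝ) 2) S := by
    rw [Measure.restrict_apply' measurableSet_Ioc]
    apply measure_mono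
    rintro x ⟨hx, hx1, hx2⟩
    exact ⟨gl_lower Q hz D hD x (by simp) hx1 hx2, by linarith [hx.1], by linarith [hx.2]⟩
  refine lt_of_le_of_lt hsub ?_
  rw [← ENNReal.ofReal_toReal (measure_ne_top (volume.restrict (Ioc (-2:ℝ) 2)) S)]
  change ENNReal.ofReal ((volume.restrict (Ioc (-2:ℝ) 2)).real S) < _
  have hm : (volume.restrict (Ioc (-2:ℝ) 2)).real S ≤ 100 * δ := by
    have h1 := hM.trans hI
    rw [one_div, inv_mul_le_iff₀ (by positivity)] at h1
    calc _ ≤ _ := h1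
      _ = 100 * δ := by rw [hDdef]; field_simp; norm_num
  have he : (2:ℝ) ≤ Real.exp 1 := by linarith [Real.add_one_le_exp (1:ℝ)]
  apply (ENNReal.ofReal_lt_ofReal_iff (by positivity)).2
  nlinarith
end

section
/- Let R be a complex polynomial of degree at most k and α > 0. Then the Lebesgue measure of F_α := {x ∈ ℝ : |R'(x)/R(x)| ≥ α} is at most 8√2·k/α. -/
open Polynomial Set MeasureTheory

noncomputable def ldsG (s : Multiset ℂ) (z : ℂ) : ℂ := (s.map fun w => 1 / (z - w)).sum

lemma ldsG_cons (w : ℂ) (s : Multiset ℂ) (z : ℂ) : ldsG (w ::ₘ s) z = 1 / (z - w) + ldsG s z := by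
  simp [ldsG]

lemma ldsG_diff (s : Multiset ℂ) (z : ℂ) (h : ∀ w ∈ s, z ≠ w) : DifferentiableAt ℂ (ldsG s) z := by
  induction s using Multiset.induction with
  | empty => 
    have : ldsG 0 = fun _ => 0 := by ext; simp [ldsG]
    rw [this]; fun_prop
  | cons w s ih =>
    have : ldsG (w ::ₘ s) = fun z => 1 / (z - w) + ldsG s z := by ext; simp [ldsG]
    rw [this]
    have h1 := ih (fun v hv => h v (Multiset.mem_cons_of_mem hv))
    have h2 : z - w ≠ 0 := sub_ne_zero.2 (h w (Multiset.mem_cons_self _ _))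
    fun_prop (disch := assumption)

lemma ldsG_im (s : Multiset ℂ) (z : ℂ) (hz : 0 ≤ z.im) (h : ∀ w ∈ s, w.im < 0) :
    (ldsG s z).im ≤ 0 := by
  induction s using Multiset.induction with
  | empty => simp [ldsG]
  | cons w s ih =>
    rw [ldsG_cons, Complex.add_im]
    have h1 := ih (fun v hv => h v (Multiset.mem_cons_of_mem hv))
    have h2 := h w (Multiset.mem_cons_self _ _)
    have : (1 / (z - w)).im ≤ 0 := by
      rw [one_div, Complex.inv_im]
      apply div_nonpos_of_nonpos_of_nonneg
      · simp; linarith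
      · exact Complex.normSq_nonneg _
    linarith

lemma lds_inv_O (w : ℂ) : (fun z : ℂ => 1 / (z - w)) =O[Bornology.cobounded ℂ] (fun z : ℂ => z⁻¹) := by
  rw [Asymptotics.isBigO_iff]
  refine ⟨2, ?_⟩
  filter_upwards [Filter.hasBasis_cobounded_norm.mem_of_mem (i := 2 * ‖w‖ + 1) trivial] with z hz
  have hz : 2 * ‖w‖ + 1 ≤ ‖z‖ := hz
  have h1 := norm_sub_norm_le z w
  have h0 := norm_nonneg w
  rw [norm_div, norm_one, norm_inv, div_le_iff₀ (by linarith)]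
  have : 0 < ‖z‖ := by linarith
  field_simp
  linarith

lemma ldsG_asymp (s : Multiset ℂ) :
    (fun z : ℂ => ldsG s z - (s.card : ℂ) / (z + Complex.I)) =O[Bornology.cobounded ℂ]
      (fun z : ℂ => z⁻¹ ^ 2) := by
  induction s using Multiset.induction with
  | empty => simpa [ldsG] using Asymptotics.isBigO_zero _ _
  | cons w s ih =>
    have h1 := ((lds_inv_O w).mul (lds_inv_O (-Complex.I))).const_mul_left (w + Complex.I)
    have h2 : (fun z : ℂ => ldsG (w ::ₘ s) z - ((w ::ₘ s).card : ℂ) / (z + Complex.I)) 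
        =ᶠ[Bornology.cobounded ℂ] (fun z => (w + Complex.I) * (1 / (z - w) * (1 / (z - -Complex.I))) + 
        (ldsG s z - (s.card : ℂ) / (z + Complex.I))) := by
      filter_upwards [Filter.hasBasis_cobounded_norm.mem_of_mem (i := ‖w‖ + 2) trivial] with z hz
      have hz : ‖w‖ + 2 ≤ ‖z‖ := hz
      have e1 : z - w ≠ 0 := by
        intro h; rw [sub_eq_zero.1 h] at hz; linarith
      have e2 : z + Complex.I ≠ 0 := by
        intro h; rw [eq_neg_of_add_eq_zero_left h] at hz; simp at hz; linarith [norm_nonneg w]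
      rw [ldsG_cons]
      simp only [Multiset.card_cons, sub_neg_eq_add]
      push_cast
      field_simp
      ring
    refine h2.trans_isBigO (Asymptotics.IsBigO.add ?_ ih)
    simpa [pow_two] using h1

lemma lds_abstract (f : ℂ → ℂ) (hd : ∀ z : ℂ, 0 ≤ z.im → DifferentiableAt ℂ f z) (a : ℝ) (ha : 0 ≤ a)
    (hre : ∀ x : ℝ, 0 ≤ (f x).re)
    (hO : (fun z : ℂ => f z - Complex.I * a / (z + Complex.I)) =O[Bornology.cobounded ℂ]
      (fun z : ℂ => z⁻¹ ^ 2)) (E : Set ℝ) (hEm : MeasurableSet E)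
    (hE : ∀ x ∈ E, 1 / 2 ≤ (f x).re) : volume E ≤ ENNReal.ofReal (2 * Real.pi * a) := by
  obtain ⟨K, hK⟩ := Asymptotics.isBigO_iff.1 hO
  obtain ⟨M, -, hM⟩ := Filter.hasBasis_cobounded_norm.mem_iff.1 hK
  have hK' : ∀ z : ℂ, M ≤ ‖z‖ → ‖f z - Complex.I * a / (z + Complex.I)‖ ≤ K * ‖z⁻¹ ^ 2‖ := fun z hz => hM hz
  set G : ℂ → ℂ := fun z => f z - Complex.I * a / (z + Complex.I) with hG
  have hGd : ∀ z : ℂ, 0 ≤ z.im → DifferentiableAt ℂ G z := by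
    intro z hz
    have h1 := hd z hz
    have h2 : z + Complex.I ≠ 0 := by
      intro h
      have := congrArg Complex.im h
      simp at this; linarith
    simp only [hG]
    fun_prop (disch := assumption)
  have hfc : Continuous (fun x : ℝ => (f x).re) := by
    rw [continuous_iff_continuousAt]
    intro x
    have : ContinuousAt f (x : ℂ) := (hd x (by simp)).continuousAt
    exact Complex.continuous_re.continuousAt.comp (this.comp Complex.continuous_ofReal.continuousAt)
  have hGc : Continuous (fun x : ℝ => G x) := by
    rw [continuous_iff_continuousAt]
    intro x
    have : ContinuousAt G (x : ℂ) := (hGd x (by simp)).continuousAt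
    exact this.comp Complex.continuous_ofReal.continuousAt
  have key : ∀ T : ℝ, 0 < T → M ≤ T → ∫ x in (-T)..T, (f x).re ≤ Real.pi * a + 4 * |K| / T := by
    intro T hT hMT
    have hb : ∀ z : ℂ, T ≤ ‖z‖ → ‖G z‖ ≤ |K| / T ^ 2 := by
      intro z hz
      refine (hK' z (hMT.trans hz)).trans ?_
      rw [norm_pow, norm_inv, inv_pow, ← div_eq_mul_inv]
      gcongr
      exact le_abs_self K
    have hrect := Complex.integral_boundary_rect_eq_zero_of_differentiableOn G (-T : ℝ) (T + T * Complex.I)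
      (by
        intro z hz
        apply (hGd z _).differentiableWithinAt
        rw [Complex.mem_reProdIm] at hz
        have := hz.2
        simp [Set.uIcc_of_le hT.le] at this
        exact this.1)
    simp at hrect
    have b1 : ‖∫ x in (-T)..T, G (x + T * Complex.I)‖ ≤ |K| / T ^ 2 * |T - -T| := by
      apply intervalIntegral.norm_integral_le_of_norm_le_const
      intro x _
      apply hb
      have := Complex.abs_im_le_norm (x + T * Complex.I)
      simp at this
      exact (le_abs_self T).trans this
    have b2 : ‖∫ y in (0:ℝ)..T, G (T + y * Complex.I)‖ ≤ |K| / T ^ 2 * |T - 0| := by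
      apply intervalIntegral.norm_integral_le_of_norm_le_const
      intro x _
      apply hb
      have := Complex.abs_re_le_norm (T + x * Complex.I)
      simp at this
      exact (le_abs_self T).trans this
    have b3 : ‖∫ y in (0:ℝ)..T, G (-T + y * Complex.I)‖ ≤ |K| / T ^ 2 * |T - 0| := by
      apply intervalIntegral.norm_integral_le_of_norm_le_const
      intro x _
      apply hb
      have := Complex.abs_re_le_norm (-T + x * Complex.I)
      simp at this
      exact (le_abs_self T).trans this
    have b0 : ‖∫ x in (-T)..T, G x‖ ≤ 4 * |K| / T := by
      have e : (∫ x in (-T)..T, G x) = (∫ x in (-T)..T, G (x + T * Complex.I))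
          - Complex.I * (∫ y in (0:ℝ)..T, G (T + y * Complex.I))
          + Complex.I * (∫ y in (0:ℝ)..T, G (-T + y * Complex.I)) := by
        linear_combination hrect
      rw [e]
      refine (norm_add_le _ _).trans ?_
      have := norm_sub_le (∫ x in (-T)..T, G (x + T * Complex.I)) (Complex.I * (∫ y in (0:ℝ)..T, G (T + y * Complex.I)))
      rw [norm_mul, Complex.norm_I, one_mul] at *
      rw [sub_zero, abs_of_pos hT] at b2 b3
      rw [show T - -T = 2 * T by ring, abs_of_pos (a := 2 * T) (by linarith)] at b1
      have e4 : 4 * |K| / T = |K| / T ^ 2 * (2 * T) + |K| / T ^ 2 * T + |K| / T ^ 2 * T := by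
        field_simp; ring
      rw [e4]; linarith
    have e1 : ∀ x : ℝ, (f x).re = (G x).re + a * (1 + x ^ 2)⁻¹ := by
      intro x
      have : (Complex.I * a / (x + Complex.I)).re = a * (1 + x ^ 2)⁻¹ := by
        rw [Complex.div_re]
        simp [Complex.normSq_apply]
        rw [show x * x + 1 = 1 + x ^ 2 by ring]
        rfl
      simp only [hG, Complex.sub_re, this]; ring
    have hre1 : ∫ x in (-T)..T, (G x).re = (∫ x in (-T)..T, G x).re := by
      have := Complex.reCLM.intervalIntegral_comp_comm (hGc.intervalIntegrable (μ := volume) (-T) T)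
      simpa using this
    have c1 : Continuous (fun x : ℝ => a * (1 + x ^ 2)⁻¹) := by
      have : ∀ x : ℝ, 1 + x ^ 2 ≠ 0 := fun x => by positivity
      fun_prop (disch := assumption)
    have c2 : Continuous (fun x : ℝ => (G x).re) := Complex.continuous_re.comp hGc
    simp_rw [e1]
    rw [intervalIntegral.integral_add (c2.intervalIntegrable _ _) (c1.intervalIntegrable _ _), hre1,
      intervalIntegral.integral_const_mul, integral_inv_one_add_sq]
    have t1 := Real.arctan_lt_pi_div_two T
    have t2 := Real.neg_pi_div_two_lt_arctan (-T)
    have t3 := (Complex.re_le_norm (∫ x in (-T)..T, G x)).trans b0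
    have t4 : a * (Real.arctan T - Real.arctan (-T)) ≤ a * Real.pi := by gcongr; linarith
    linarith
  have key2 : ∀ T : ℝ, 0 < T → M ≤ T → volume (E ∩ Ioc (-T) T) ≤
      ENNReal.ofReal (2 * (Real.pi * a + 4 * |K| / T)) := by
    intro T hT hMT
    have hk := key T hT hMT
    rw [intervalIntegral.integral_of_le (by linarith)] at hk
    have hm : MeasurableSet (E ∩ Ioc (-T) T) := hEm.inter measurableSet_Ioc
    have hfin : volume (E ∩ Ioc (-T) T) ≠ ⊤ :=
      ((measure_mono inter_subset_right).trans_lt (by simp : volume (Ioc (-T) T) < ⊤)).ne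
    have hint : IntegrableOn (fun x : ℝ => (f x).re) (Ioc (-T) T) :=
      (hfc.integrableOn_Icc).mono_set Ioc_subset_Icc_self
    have h1 : ∫ x in E ∩ Ioc (-T) T, (1/2 : ℝ) ≤ ∫ x in E ∩ Ioc (-T) T, (f x).re := by
      apply setIntegral_mono_on (integrableOn_const hfin) (hint.mono_set inter_subset_right) hm
      intro x hx
      exact hE x hx.1
    have h2 : ∫ x in E ∩ Ioc (-T) T, (f x).re ≤ ∫ x in Ioc (-T) T, (f x).re := by
      apply setIntegral_mono_set hint
      · exact Filter.Eventually.of_forall hre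
      · exact Filter.Eventually.of_forall (fun x hx => hx.2)
    rw [setIntegral_const, smul_eq_mul] at h1
    rw [← ENNReal.ofReal_toReal hfin]
    apply ENNReal.ofReal_le_ofReal
    change volume.real _ ≤ _
    linarith
  have key3 : ∀ T : ℝ, volume (E ∩ Ioc (-T) T) ≤ ENNReal.ofReal (2 * Real.pi * a) := by
    intro T
    have hl : Filter.Tendsto (fun U : ℝ => ENNReal.ofReal (2 * (Real.pi * a + 4 * |K| / U))) Filter.atTop
        (nhds (ENNReal.ofReal (2 * Real.pi * a))) := by
      apply ENNReal.tendsto_ofReal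
      have : Filter.Tendsto (fun U : ℝ => 4 * |K| / U) Filter.atTop (nhds 0) :=
        Filter.Tendsto.const_div_atTop Filter.tendsto_id _
      have := (this.const_add (Real.pi * a)).const_mul 2
      rw [add_zero, ← mul_assoc] at this
      exact this
    apply ge_of_tendsto hl
    filter_upwards [Filter.eventually_gt_atTop 0, Filter.eventually_ge_atTop M, Filter.eventually_ge_atTop T] with U h1 h2 h3
    refine (measure_mono ?_).trans (key2 U h1 h2)
    gcongr
  have hU : E = ⋃ n : ℕ, E ∩ Ioc (-(n:ℝ)) n := by
    ext x
    simp only [mem_iUnion, mem_inter_iff, mem_Ioc]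
    constructor
    · intro hx
      obtain ⟨n, hn⟩ := exists_nat_gt |x|
      have := abs_lt.1 hn
      exact ⟨n, hx, this.1, this.2.le⟩
    · rintro ⟨n, hx, -⟩; exact hx
  rw [hU, Monotone.measure_iUnion]
  · exact iSup_le (fun n => key3 n)
  · intro m n hmn
    have : (m:ℝ) ≤ n := by exact_mod_cast hmn
    dsimp only
    gcongr

lemma lds_alg (p : ℂ) (r : ℝ) (hr : r ^ 2 = 2) (hr0 : 0 < r) (hp : 0 ≤ p.re) :
    p ^ 2 + r * p + 1 ≠ 0 ∧ 0 ≤ ((p ^ 2 + (r / 2) * p) / (p ^ 2 + r * p + 1)).re ∧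
    (1 ≤ ‖p‖ → 1 / 2 ≤ ((p ^ 2 + (r / 2) * p) / (p ^ 2 + r * p + 1)).re) := by
  obtain ⟨x, y⟩ := p
  simp only at hp
  have hDre : ((⟨x, y⟩ : ℂ) ^ 2 + r * (⟨x, y⟩ : ℂ) + 1).re = x ^ 2 - y ^ 2 + r * x + 1 := by
    simp [pow_two]
  have hDim : ((⟨x, y⟩ : ℂ) ^ 2 + r * (⟨x, y⟩ : ℂ) + 1).im = 2 * x * y + r * y := by
    simp [pow_two]; ring
  have hNre : ((⟨x, y⟩ : ℂ) ^ 2 + (r / 2) * (⟨x, y⟩ : ℂ)).re = x ^ 2 - y ^ 2 + r / 2 * x := by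
    simp [pow_two]
  have hNim : ((⟨x, y⟩ : ℂ) ^ 2 + (r / 2) * (⟨x, y⟩ : ℂ)).im = 2 * x * y + r / 2 * y := by
    simp [pow_two]; ring
  have hne : (⟨x, y⟩ : ℂ) ^ 2 + r * (⟨x, y⟩ : ℂ) + 1 ≠ 0 := by
    intro h
    have h1 := congrArg Complex.re h
    have h2 := congrArg Complex.im h
    rw [hDre] at h1
    rw [hDim] at h2
    simp only [Complex.zero_re, Complex.zero_im] at h1 h2
    have h3 : (2 * x + r) * y = 0 := by linarith
    have h4 : y = 0 := (mul_eq_zero.1 h3).resolve_left (by positivity)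
    rw [h4] at h1
    have : 0 ≤ r * x := by positivity
    nlinarith [sq_nonneg x]
  have hpos : 0 < Complex.normSq ((⟨x, y⟩ : ℂ) ^ 2 + r * (⟨x, y⟩ : ℂ) + 1) := Complex.normSq_pos.2 hne
  refine ⟨hne, ?_, ?_⟩
  · rw [Complex.div_re, ← add_div]
    apply div_nonneg _ hpos.le
    rw [hDre, hDim, hNre, hNim]
    have e : (x ^ 2 - y ^ 2 + r / 2 * x) * (x ^ 2 - y ^ 2 + r * x + 1) + (2 * x * y + r / 2 * y) * (2 * x * y + r * y)
      = (x ^ 2 + y ^ 2) ^ 2 + 3 * r / 2 * (x ^ 2 + y ^ 2) * x + 2 * x ^ 2 + r / 2 * x := by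
      linear_combination (x ^ 2 + y ^ 2) / 2 * hr
    rw [e]; positivity
  · intro h
    have h1 : 1 ≤ x ^ 2 + y ^ 2 := by
      have : 1 ≤ ‖(⟨x, y⟩ : ℂ)‖ ^ 2 := by nlinarith
      rw [← Complex.normSq_eq_norm_sq, Complex.normSq_apply] at this
      simp only at this; linarith
    rw [Complex.div_re, ← add_div, le_div_iff₀ hpos, Complex.normSq_apply, hDre, hDim, hNre, hNim]
    have e : 2 * ((x ^ 2 - y ^ 2 + r / 2 * x) * (x ^ 2 - y ^ 2 + r * x + 1) + (2 * x * y + r / 2 * y) * (2 * x * y + r * y)) - ((x ^ 2 - y ^ 2 + r * x + 1) * (x ^ 2 - y ^ 2 + r * x + 1) + (2 * x * y + r * y) * (2 * x * y + r * y))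
      = (x ^ 2 + y ^ 2 - 1) * (x ^ 2 + y ^ 2 + 1 + r * x) := by
      ring
    have : 0 ≤ (x ^ 2 + y ^ 2 - 1) * (x ^ 2 + y ^ 2 + 1 + r * x) :=
      mul_nonneg (by linarith) (by positivity)
    linarith

lemma lds_half (s : Multiset ℂ) (h : ∀ w ∈ s, w.im < 0) (β : ℝ) (hβ : 0 < β) :
    volume {x : ℝ | β ≤ ‖ldsG s x‖} ≤ ENNReal.ofReal (Real.sqrt 2 * Real.pi * s.card / β) := by
  obtain ⟨r, hr0, hr, hrs⟩ : ∃ r : ℝ, 0 < r ∧ r ^ 2 = 2 ∧ Real.sqrt 2 = r :=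
    ⟨Real.sqrt 2, by positivity, by simp, rfl⟩
  rw [hrs]
  set p : ℂ → ℂ := fun z => Complex.I * ldsG s z / β with hp
  have hβ' : (β : ℂ) ≠ 0 := by exact_mod_cast hβ.ne'
  have hpre : ∀ z : ℂ, 0 ≤ z.im → 0 ≤ (p z).re := by
    intro z hz
    have := ldsG_im s z hz h
    simp only [hp, Complex.div_ofReal_re]
    apply div_nonneg _ hβ.le
    simp; exact this
  have hne : ∀ z : ℂ, 0 ≤ z.im → ∀ w ∈ s, z ≠ w := by
    rintro z hz w hw rfl
    exact absurd (h z hw) (by linarith)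
  have hdG : ∀ z : ℂ, 0 ≤ z.im → DifferentiableAt ℂ (ldsG s) z := fun z hz => ldsG_diff s z (hne z hz)
  have hO1 := ldsG_asymp s
  have hsq : (fun z : ℂ => z⁻¹ ^ 2) =O[Bornology.cobounded ℂ] (fun z : ℂ => z⁻¹) := by
    have := (Filter.tendsto_inv₀_cobounded (α := ℂ)).isBigO_one ℂ
    simpa [pow_two] using this.mul (Asymptotics.isBigO_refl (fun z : ℂ => z⁻¹) (Bornology.cobounded ℂ))
  have hGO : (ldsG s) =O[Bornology.cobounded ℂ] (fun z : ℂ => z⁻¹) := by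
    have := (hO1.trans hsq).add ((lds_inv_O (-Complex.I)).const_mul_left (s.card : ℂ))
    refine this.congr_left (fun z => ?_)
    simp [div_eq_mul_inv]
  have hpO : p =O[Bornology.cobounded ℂ] (fun z : ℂ => z⁻¹) := by
    refine (hGO.const_mul_left (Complex.I / β)).congr_left (fun z => ?_)
    simp only [hp]; ring
  have hp0 : Filter.Tendsto p (Bornology.cobounded ℂ) (nhds 0) := hpO.trans_tendsto Filter.tendsto_inv₀_cobounded
  have hD1 : Filter.Tendsto (fun z => p z ^ 2 + r * p z + 1) (Bornology.cobounded ℂ) (nhds 1) := by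
    have := ((hp0.pow 2).add (hp0.const_mul (r : ℂ))).add_const 1
    simpa using this
  have hDne : ∀ᶠ z in Bornology.cobounded ℂ, p z ^ 2 + r * p z + 1 ≠ 0 := hD1.eventually_ne one_ne_zero
  have hDO : (fun z => (p z ^ 2 + r * p z + 1)⁻¹) =O[Bornology.cobounded ℂ] (fun _ => (1:ℂ)) :=
    (hD1.inv₀ one_ne_zero).isBigO_one ℂ
  have := lds_abstract (fun z => (p z ^ 2 + (r / 2) * p z) / (p z ^ 2 + r * p z + 1)) ?_
    (r / 2 * s.card / β) (by positivity) ?_ ?_ {x : ℝ | β ≤ ‖ldsG s x‖} ?_ ?_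
  · refine this.trans (le_of_eq ?_)
    congr 1; ring
  · intro z hz
    have h1 := hdG z hz
    have h2 : DifferentiableAt ℂ p z := by simp only [hp]; fun_prop (disch := assumption)
    have h3 := (lds_alg (p z) r hr hr0 (hpre z hz)).1
    fun_prop (disch := assumption)
  · intro x
    exact (lds_alg (p x) r hr hr0 (hpre x (by simp))).2.1
  · have k1 : (fun z => -(r / 2 : ℂ) * (p z ^ 2 * (p z * (p z ^ 2 + r * p z + 1)⁻¹))) =O[Bornology.cobounded ℂ]
      (fun z : ℂ => z⁻¹ ^ 2) := by
      apply Asymptotics.IsBigO.const_mul_left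
      have := (hpO.pow 2).mul ((hp0.isBigO_one ℂ).mul hDO)
      simpa using this
    have k2 := k1.add (hO1.const_mul_left ((r / 2 : ℂ) * Complex.I / β))
    refine Filter.EventuallyEq.trans_isBigO ?_ k2
    filter_upwards [hDne] with z hz
    have e1 : (p z ^ 2 + (r / 2) * p z) / (p z ^ 2 + r * p z + 1) =
        r / 2 * p z + -(r / 2 : ℂ) * (p z ^ 2 * (p z * (p z ^ 2 + r * p z + 1)⁻¹)) := by
      have hrc : (r : ℂ) ^ 2 = 2 := by exact_mod_cast hr
      have hinv := inv_mul_cancel₀ hz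
      rw [div_eq_iff hz]
      generalize (p z ^ 2 + r * p z + 1)⁻¹ = d at hinv ⊢
      linear_combination (r / 2 * p z ^ 3) * hinv - (p z ^ 2 / 2) * hrc
    rw [e1]
    simp only [hp]
    push_cast
    ring
  · have c : Continuous (fun x : ℝ => ldsG s x) := by
      rw [continuous_iff_continuousAt]
      intro x
      exact (hdG x (by simp)).continuousAt.comp Complex.continuous_ofReal.continuousAt
    exact measurableSet_le measurable_const c.norm.measurable
  · intro x hx
    apply (lds_alg (p x) r hr hr0 (hpre x (by simp))).2.2
    simp only [hp, norm_div, norm_mul, Complex.norm_I, one_mul, Complex.norm_real, Real.norm_eq_abs, abs_of_pos hβ]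
    rw [le_div_iff₀ hβ, one_mul]; exact hx

lemma lds_half' (s : Multiset ℂ) (h : ∀ w ∈ s, 0 < w.im) (β : ℝ) (hβ : 0 < β) :
    volume {x : ℝ | β ≤ ‖ldsG s x‖} ≤ ENNReal.ofReal (Real.sqrt 2 * Real.pi * s.card / β) := by
  have := lds_half (s.map (starRingEnd ℂ)) (by
    intro w hw
    obtain ⟨v, hv, rfl⟩ := Multiset.mem_map.1 hw
    have := h v hv
    simp; exact this) β hβ
  have e : ∀ x : ℝ, ldsG (s.map (starRingEnd ℂ)) x = starRingEnd ℂ (ldsG s x) := by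
    intro x
    simp [ldsG, map_multiset_sum, Multiset.map_map]
  simpa [e] using this

lemma lds_noreal (s : Multiset ℂ) (h : ∀ w ∈ s, w.im ≠ 0) (α : ℝ) (hα : 0 < α) :
    volume {x : ℝ | α ≤ ‖ldsG s x‖} ≤ ENNReal.ofReal (2 * Real.sqrt 2 * Real.pi * s.card / α) := by
  classical
  set s1 := s.filter (fun w => w.im < 0) with h1
  set s2 := s.filter (fun w => ¬ w.im < 0) with h2
  have hs : s1 + s2 = s := Multiset.filter_add_not _ _
  have b1 := lds_half s1 (fun w hw => (Multiset.mem_filter.1 hw).2) (α / 2) (by positivity)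
  have b2 := lds_half' s2 (fun w hw => by
    have := Multiset.mem_filter.1 hw
    exact lt_of_le_of_ne (not_lt.1 this.2) (h w this.1).symm) (α / 2) (by positivity)
  have hsub : {x : ℝ | α ≤ ‖ldsG s x‖} ⊆ {x : ℝ | α / 2 ≤ ‖ldsG s1 x‖} ∪ {x : ℝ | α / 2 ≤ ‖ldsG s2 x‖} := by
    intro x hx
    simp only [mem_ofPred_eq, mem_union] at *
    by_contra! hc
    have e : ldsG s x = ldsG s1 x + ldsG s2 x := by
      rw [← hs]; simp only [ldsG, Multiset.map_add, Multiset.sum_add]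
    rw [e] at hx
    linarith [norm_add_le (ldsG s1 x) (ldsG s2 x)]
  refine (measure_mono hsub).trans ((measure_union_le _ _).trans ((add_le_add b1 b2).trans ?_))
  rw [← ENNReal.ofReal_add (by positivity) (by positivity)]
  apply ENNReal.ofReal_le_ofReal
  have : (s.card : ℝ) = s1.card + s2.card := by rw [← hs]; simp
  rw [this]
  apply le_of_eq; field_simp

lemma lds_gen (s : Multiset ℂ) (α β : ℝ) (hβ : 0 < β) (hαβ : β < α) :
    volume {x : ℝ | (∀ w ∈ s, (x : ℂ) ≠ w) ∧ α ≤ ‖ldsG s x‖} ≤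
      ENNReal.ofReal (2 * Real.sqrt 2 * Real.pi * s.card / β) := by
  set ε : ℕ → ℝ := fun l => 1 / ((l : ℝ) + 1) with hε
  have hε0 : Filter.Tendsto ε Filter.atTop (nhds 0) := tendsto_one_div_add_atTop_nhds_zero_nat
  have hεpos : ∀ l, 0 < ε l := fun l => Nat.one_div_pos_of_nat
  have hshift : ∀ (e : ℝ) (x : ℝ), ldsG (s.map (fun w => w - e * Complex.I)) x = ldsG s (x + e * Complex.I) := by
    intro e x
    simp only [ldsG, Multiset.map_map, Function.comp_def]
    congr 2
    ext w; congr 1; ring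
  have hev : ∀ᶠ l in Filter.atTop, ∀ w ∈ s, w.im ≠ ε l := by
    have : ∀ w ∈ s.toFinset, ∀ᶠ l in Filter.atTop, w.im ≠ ε l := by
      intro w _
      rcases le_or_gt w.im 0 with h0 | h0
      · exact Filter.Eventually.of_forall (fun l => (h0.trans_lt (hεpos l)).ne)
      · filter_upwards [hε0.eventually_lt_const h0] with l hl
        exact hl.ne'
    have := (Filter.eventually_all_finset s.toFinset).2 this
    simpa using this
  obtain ⟨L, hL⟩ := Filter.eventually_atTop.1 hev
  set B : ℕ → Set ℝ := fun l => {x : ℝ | β ≤ ‖ldsG s (x + ε l * Complex.I)‖} with hB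
  have hBb : ∀ l, L ≤ l → volume (B l) ≤ ENNReal.ofReal (2 * Real.sqrt 2 * Real.pi * s.card / β) := by
    intro l hl
    have := lds_noreal (s.map (fun w => w - ε l * Complex.I)) (by
      intro w hw
      obtain ⟨v, hv, rfl⟩ := Multiset.mem_map.1 hw
      have := hL l hl v hv
      simpa [sub_eq_zero] using this) β hβ
    simpa only [hshift, Multiset.card_map] using this
  have hsub : {x : ℝ | (∀ w ∈ s, (x : ℂ) ≠ w) ∧ α ≤ ‖ldsG s x‖} ⊆ ⋃ m : ℕ, ⋂ l ≥ m, B l := by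
    rintro x ⟨hx, hx2⟩
    have c := (ldsG_diff s x hx).continuousAt.norm
    have t : Filter.Tendsto (fun l => (x : ℂ) + ε l * Complex.I) Filter.atTop (nhds (x : ℂ)) := by
      have := (((Complex.continuous_ofReal.tendsto 0).comp hε0).mul_const Complex.I).const_add (x : ℂ)
      simpa using this
    have := (c.tendsto.comp t).eventually_const_lt (hαβ.trans_le hx2)
    obtain ⟨m, hm⟩ := Filter.eventually_atTop.1 this
    simp only [mem_iUnion, mem_iInter]
    exact ⟨m, fun l hl => (hm l hl).le⟩
  refine (measure_mono hsub).trans ?_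
  rw [Monotone.measure_iUnion]
  · refine iSup_le (fun m => ?_)
    refine (measure_mono ?_).trans (hBb (max m L) (le_max_right _ _))
    exact biInter_subset_of_mem (le_max_left m L)
  · intro m n hmn
    exact biInter_subset_biInter_left (fun l (hl : n ≤ l) => hmn.trans hl)

theorem log_deriv_large_set (R : Polynomial ℂ) (k : ℕ) (hR : R ≠ 0) (hdeg : R.natDegree ≤ k)
    (α : ℝ) (hα : 0 < α) :
    volume {x : ℝ | R.eval (x : ℂ) ≠ 0 ∧
        α ≤ ‖(Polynomial.derivative R).eval (x : ℂ) / R.eval (x : ℂ)‖} ≤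
      ENNReal.ofReal (8 * Real.sqrt 2 * (k : ℝ) / α) := by
  have hpi := Real.pi_pos
  have h4 := Real.pi_lt_four
  have := lds_gen R.roots α (α * Real.pi / 4) (by positivity) (by nlinarith)
  refine (measure_mono ?_).trans (this.trans (ENNReal.ofReal_le_ofReal ?_))
  · rintro x ⟨h1, h2⟩
    refine ⟨?_, ?_⟩
    · rintro w hw hxw
      rw [← hxw] at hw
      exact h1 (Polynomial.isRoot_of_mem_roots hw)
    · rw [(IsAlgClosed.splits R).eval_derivative_div_eval_of_ne_zero h1] at h2
      exact h2
  · have hc : (R.roots.card : ℝ) ≤ k := by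
      exact_mod_cast (Polynomial.card_roots' R).trans hdeg
    have e : 2 * Real.sqrt 2 * Real.pi * R.roots.card / (α * Real.pi / 4) = 8 * Real.sqrt 2 * R.roots.card / α := by
      field_simp; ring
    rw [e]
    gcongr
end

section
/- There exist absolute constants c₁, c₂ > 0 such that for all integers 0 ≤ k ≤ n, c₁·(n/(k+1))^{1/2} ≤ inf_P ‖P'‖_{[-1,1]} / ‖P‖_{[-1,1]} ≤ c₂·(n/(k+1))^{1/2}, where the infimum is over all nonzero P ∈ 𝓕_{n,k}^c having at least one zero in [-1,1]. -/
open Polynomial Set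
open scoped Classical

lemma nb_sum_le (M N : ℕ) (u : ℝ) (h0 : 0 ≤ u) (h1 : u ≤ 1) :
    ∑ i ∈ Finset.range N, ((M + i).choose i : ℝ) * u ^ i * (1 - u) ^ (M + 1) ≤ 1 := by
  rcases eq_or_lt_of_le h1 with rfl | h1
  · simp
  have h := hasSum_choose_mul_geometric_of_norm_lt_one (𝕜 := ℝ) M (r := u)
    (by rw [Real.norm_eq_abs, abs_of_nonneg h0]; exact h1)
  have h2 := sum_le_hasSum (Finset.range N) (fun i _ => by positivity) h
  have h3 : 0 < (1 - u) ^ (M + 1) := pow_pos (by linarith) _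
  rw [← Finset.sum_mul]
  calc _ ≤ 1 / (1 - u) ^ (M + 1) * (1 - u) ^ (M + 1) := by
        gcongr
        refine le_trans (le_of_eq (Finset.sum_congr rfl fun i _ => ?_)) h2
        rw [add_comm M i, Nat.choose_symm_add]
    _ = 1 := by field_simp

noncomputable def HH (M K : ℕ) : ℝ[X] :=
  ∑ j ∈ Finset.range (K + 1), C ((M + 1 + j).choose j : ℝ) * X ^ j

noncomputable def FF (M K : ℕ) : ℝ[X] := (1 - X) ^ (M + 2) * HH M K

lemma FF_deriv (M K : ℕ) : derivative (FF M K) =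
    - (C ((M + 2 : ℝ) * ((M + 2 + K).choose K : ℝ)) * X ^ K * (1 - X) ^ (M + 1)) := by
  induction K with
  | zero =>
    simp [FF, HH, derivative_pow]
  | succ K ih =>
    have e : FF M (K+1) = FF M K + (1 - X) ^ (M + 2) * (C ((M + 1 + (K+1)).choose (K+1) : ℝ) * X ^ (K+1)) := by
      simp only [FF, HH]
      rw [Finset.sum_range_succ _ (K+1)]; ring
    rw [e, derivative_add, ih]
    have c1 : (((M + 1 + (K+1)).choose (K+1) : ℕ) : ℝ) * (K + 1) = (M + 2) * ((M + 2 + K).choose K : ℝ) := by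
      have := Nat.choose_succ_right_eq (M + 2 + K) K
      have h2 : M + 2 + K - K = M + 2 := by omega
      rw [h2] at this
      have h3 : M + 1 + (K + 1) = M + 2 + K := by ring
      rw [h3]
      have h4 : (((M + 2 + K).choose (K+1) * (K+1) : ℕ) : ℝ) = (((M + 2 + K).choose K * (M+2) : ℕ) : ℝ) := by rw [this]
      push_cast at h4
      linarith
    have c2 : (((M + 1 + (K+1)).choose (K+1) : ℕ) : ℝ) * (M + K + 3) = (M + 2) * ((M + 2 + (K+1)).choose (K+1) : ℝ) := by
      have := Nat.choose_mul_succ_eq (M + 2 + K) (K+1)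
      have h2 : M + 2 + K + 1 - (K+1) = M + 2 := by omega
      rw [h2] at this
      have h3 : M + 1 + (K + 1) = M + 2 + K := by ring
      rw [h3]
      have h4 : (((M + 2 + K).choose (K+1) * (M + 2 + K + 1) : ℕ) : ℝ) = (((M + 2 + K + 1).choose (K+1) * (M+2) : ℕ) : ℝ) := by rw [this]
      push_cast at h4
      rw [← add_assoc (M+2) K 1]
      linarith
    rw [← c1, ← c2]
    simp only [derivative_mul, derivative_pow, derivative_sub, derivative_one, derivative_X, derivative_C]
    simp only [Nat.cast_add, Nat.cast_one, Nat.cast_ofNat, C_mul, C_add, map_one, map_natCast, map_ofNat, Nat.add_sub_cancel]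
    have : M + 2 - 1 = M + 1 := rfl
    rw [this]
    ring

noncomputable def GG (M K : ℕ) : ℝ[X] :=
  C ((K + 1 : ℝ)⁻¹) * ∑ i ∈ Finset.range (K + 1), FF M i

lemma FF_eval (M K : ℕ) (u : ℝ) : (FF M K).eval u =
    ∑ i ∈ Finset.range (K+1), ((M + 1 + i).choose i : ℝ) * u ^ i * (1 - u) ^ (M + 1 + 1) := by
  simp only [FF, HH, eval_mul, eval_pow, eval_sub, eval_one, eval_X, eval_finsetSum, eval_C]
  rw [Finset.mul_sum]
  exact Finset.sum_congr rfl fun i _ => by ring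

lemma GG_bound (M K : ℕ) (u : ℝ) (h0 : 0 ≤ u) (h1 : u ≤ 1) :
    0 ≤ (GG M K).eval u ∧ (GG M K).eval u ≤ 1 := by
  have hu : 0 ≤ 1 - u := by linarith
  have hK : (0:ℝ) < K + 1 := by positivity
  simp only [GG, eval_mul, eval_C, eval_finsetSum]
  constructor
  · refine mul_nonneg (by positivity) (Finset.sum_nonneg fun i _ => ?_)
    rw [FF_eval]
    exact Finset.sum_nonneg fun i _ => by positivity
  · rw [inv_mul_le_iff₀ hK]
    refine (Finset.sum_le_card_nsmul _ _ 1 fun i _ => ?_).trans (by simp)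
    rw [FF_eval]; exact nb_sum_le _ _ _ h0 h1

lemma GG_zero (M K : ℕ) : (GG M K).eval 0 = 1 := by
  have : ∀ i, (FF M i).eval 0 = 1 := by
    intro i
    rw [FF_eval, Finset.sum_range_succ']
    simp
  simp only [GG, eval_mul, eval_C, eval_finsetSum, this]
  simp
  field_simp

lemma coef_le (M i : ℕ) (hi : i ≤ M + 2) :
    (M + 2 : ℝ) * ((M + 2 + i).choose i : ℝ) ≤ 12 * (M + 1) * ((M + i).choose i : ℝ) := by
  have a1 : ((M + i).choose i : ℝ) * (M + i + 1) = ((M + i + 1).choose i : ℝ) * (M + 1) := by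
    have := Nat.choose_mul_succ_eq (M + i) i
    rw [show M + i + 1 - i = M + 1 by omega] at this
    exact_mod_cast this
  have a2 : ((M + i + 1).choose i : ℝ) * (M + i + 2) = ((M + 2 + i).choose i : ℝ) * (M + 2) := by
    have := Nat.choose_mul_succ_eq (M + i + 1) i
    rw [show M + i + 1 + 1 - i = M + 2 by omega, show M + i + 1 + 1 = M + 2 + i by ring] at this
    have h4 : (((M + i + 1).choose i * (M + 2 + i) : ℕ) : ℝ) = _ := congrArg _ this
    push_cast at h4
    linarith
  have hi' : (i:ℝ) ≤ M + 2 := by exact_mod_cast hi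
  have hM : (0:ℝ) ≤ M := by positivity
  have h5 : (M + 2 : ℝ) * ((M + 2 + i).choose i : ℝ) * (M + 1) =
      ((M + i).choose i : ℝ) * ((M + i + 1) * (M + i + 2)) := by
    linear_combination (-(M + 1) : ℝ) * a2 - (M + i + 2 : ℝ) * a1
  refine le_of_mul_le_mul_right ?_ (show (0:ℝ) < M + 1 by positivity)
  rw [h5]
  calc _ ≤ ((M + i).choose i : ℝ) * (12 * (M+1) * (M+1)) := by
        refine mul_le_mul_of_nonneg_left ?_ (by positivity)
        calc ((M:ℝ) + i + 1) * (M + i + 2) ≤ (M + (M+2) + 1) * (M + (M+2) + 2) := by gcongr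
          _ ≤ _ := by nlinarith
    _ = _ := by ring

lemma GG_deriv_bound (M K : ℕ) (hK : K ≤ M + 2) (x : ℝ) (hx : x ∈ Icc (-1:ℝ) 1) :
    |(derivative ((GG M K).comp (X ^ 2))).eval x| ≤ 24 * Real.sqrt ((M + 1) / (K + 1)) := by
  have hu0 : 0 ≤ x ^ 2 := sq_nonneg x
  have hu1 : x ^ 2 ≤ 1 := by nlinarith [hx.1, hx.2]
  have hu : 0 ≤ 1 - x ^ 2 := by linarith
  set q : ℕ → ℝ := fun i => ((M + i).choose i : ℝ) * (x^2) ^ i * (1 - x^2) ^ (M + 1) with hq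
  have q0 : ∀ i, 0 ≤ q i := fun i => by simp only [hq]; positivity
  set S := ∑ i ∈ Finset.range (K+1), q i with hS
  have S0 : 0 ≤ S := Finset.sum_nonneg fun i _ => q0 i
  have S1 : S ≤ 1 := nb_sum_le M (K+1) (x^2) hu0 hu1
  have S2 : x^2 * S ≤ (K + 1) / (M + 1) := by
    have : ∀ i ∈ Finset.range (K+1), x^2 * q i ≤ (K+1)/(M+1) * q (i+1) := by
      intro i hi
      have hi : i + 1 ≤ K + 1 := by simpa using hi
      have hi : (i:ℝ) + 1 ≤ K + 1 := by exact_mod_cast hi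
      have c := Nat.add_one_mul_choose_eq (M + i) i
      have c' : ((M:ℝ) + i + 1) * ((M + i).choose i : ℝ) = ((M + i + 1).choose (i+1) : ℝ) * (i + 1) := by
        exact_mod_cast c
      have h6 : ((M + i).choose i : ℝ) ≤ (K+1)/(M+1) * ((M + (i + 1)).choose (i+1) : ℝ) := by
        rw [div_mul_eq_mul_div, le_div_iff₀ (by positivity), ← add_assoc]
        have : (0:ℝ) ≤ ((M + i + 1).choose (i+1) : ℝ) := by positivity
        have : (0:ℝ) ≤ ((M + i).choose i : ℝ) := by positivity
        have : (0:ℝ) ≤ i := by positivity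
        nlinarith
      simp only [hq]
      calc _ = ((M + i).choose i : ℝ) * ((x^2)^(i+1) * (1 - x^2)^(M+1)) := by ring
        _ ≤ ((K+1)/(M+1) * ((M + (i + 1)).choose (i+1) : ℝ)) * ((x^2)^(i+1) * (1 - x^2)^(M+1)) := by gcongr
        _ = _ := by ring
    have T : ∑ i ∈ Finset.range (K+1), q (i+1) ≤ 1 := by
      have := nb_sum_le M (K+1+1) (x^2) hu0 hu1
      rw [Finset.sum_range_succ'] at this
      have := q0 0
      simp only [hq] at *
      linarith
    rw [hS, Finset.mul_sum]
    calc _ ≤ _ := Finset.sum_le_sum this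
      _ = (K+1)/(M+1) * ∑ i ∈ Finset.range (K+1), q (i+1) := by rw [Finset.mul_sum]
      _ ≤ (K+1)/(M+1) * 1 := by gcongr
      _ = _ := by ring
  have S3 : |x| * S ≤ Real.sqrt ((K+1)/(M+1)) := by
    apply Real.le_sqrt_of_sq_le
    rw [mul_pow, sq_abs]
    nlinarith [mul_nonneg hu0 S0]
  have D : |(derivative (GG M K)).eval (x^2)| ≤ (K+1:ℝ)⁻¹ * (12 * (M+1) * S) := by
    simp only [GG, derivative_mul, derivative_C, zero_mul, zero_add, derivative_sum, FF_deriv, eval_mul, eval_C,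
      eval_finsetSum, eval_neg, eval_pow, eval_X, eval_sub, eval_one]
    rw [abs_mul, abs_of_nonneg (show (0:ℝ) ≤ (K+1:ℝ)⁻¹ by positivity)]
    gcongr
    refine (Finset.abs_sum_le_sum_abs _ _).trans ?_
    rw [hS, Finset.mul_sum]
    refine Finset.sum_le_sum fun i hi => ?_
    have hi : i ≤ M + 2 := by have := Finset.mem_range.1 hi; omega
    rw [abs_neg, abs_of_nonneg (by positivity)]
    have := coef_le M i hi
    simp only [hq]
    calc _ = ((M + 2 : ℝ) * ((M + 2 + i).choose i : ℝ)) * ((x^2)^i * (1 - x^2)^(M+1)) := by ring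
      _ ≤ (12 * (M + 1) * ((M + i).choose i : ℝ)) * ((x^2)^i * (1 - x^2)^(M+1)) := by gcongr
      _ = _ := by ring
  rw [derivative_comp]
  simp only [derivative_X_pow, eval_mul, eval_comp, eval_pow, eval_X, eval_C]
  rw [abs_mul]
  have e1 : |((2:ℕ):ℝ) * x ^ (2 - 1)| = 2 * |x| := by simp [abs_mul]
  rw [e1]
  have key : Real.sqrt ((K+1)/(M+1)) * ((M+1)/(K+1)) = Real.sqrt ((M+1)/(K+1) : ℝ) := by
    have a : (0:ℝ) < (M+1)/(K+1) := by positivity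
    rw [← inv_div (M+1:ℝ), Real.sqrt_inv]
    have := Real.mul_self_sqrt a.le
    have h := Real.sqrt_pos.2 a
    field_simp
    nlinarith [this, show ((M:ℝ)+1) = (M+1)/(K+1)*(K+1) by field_simp]
  calc _ ≤ 2 * |x| * ((K+1:ℝ)⁻¹ * (12 * (M+1) * S)) := by gcongr
    _ = 24 * ((|x| * S) * ((M+1)/(K+1))) := by field_simp; ring
    _ ≤ 24 * (Real.sqrt ((K+1)/(M+1)) * ((M+1)/(K+1))) := by gcongr
    _ = _ := by rw [key]

lemma natDegree_HH (M K : ℕ) : (HH M K).natDegree ≤ K := by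
  unfold HH
  refine natDegree_sum_le_of_forall_le _ _ fun i hi => ?_
  refine (natDegree_C_mul_X_pow_le _ _).trans ?_
  have := Finset.mem_range.1 hi; omega

lemma GG_fact (M K : ℕ) : ∃ H : ℝ[X], H.natDegree ≤ K ∧ GG M K = (1 - X) ^ (M + 2) * H := by
  refine ⟨C ((K + 1 : ℝ)⁻¹) * ∑ i ∈ Finset.range (K + 1), HH M i, ?_, ?_⟩
  · refine (natDegree_C_mul_le _ _).trans (natDegree_sum_le_of_forall_le _ _ fun i hi => ?_)
    have := Finset.mem_range.1 hi
    exact (natDegree_HH M i).trans (by omega)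
  · simp only [GG, FF, ← Finset.mul_sum]; ring

lemma eval_map_real (Q : ℝ[X]) (x : ℝ) : (Q.map (algebraMap ℝ ℂ)).eval (x:ℂ) = ((Q.eval x : ℝ) : ℂ) := by
  have := Polynomial.eval_map_algebraMap (B := ℂ) Q (x:ℂ)
  rw [this]
  exact (Polynomial.aeval_algebraMap_apply ℂ x Q)

/-- Main upper example. -/
lemma upper_main (M K e : ℕ) (hK : K ≤ M + 2) (he : e ≤ 1) :
    ∃ P : ℂ[X], P ≠ 0 ∧ P.natDegree ≤ 2 * (M + 2) + e + 2 * K ∧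
      2 * (M + 2) + e ≤ P.roots.countP (fun z => ‖z‖ ≤ 1 ∧ 0 ≤ z.im) ∧
      (∃ a ∈ Icc (-1:ℝ) 1, P.eval (a : ℂ) = 0) ∧
      ‖P.eval 0‖ = 1 ∧
      ∀ x ∈ Icc (-1:ℝ) 1, ‖(derivative P).eval (x:ℂ)‖ ≤ 1 + 48 * Real.sqrt ((M + 1) / (K + 1)) := by
  obtain ⟨H, hHd, hH⟩ := GG_fact M K
  set Q : ℝ[X] := (1 - X) ^ e * (GG M K).comp (X ^ 2) with hQ
  set P : ℂ[X] := Q.map (algebraMap ℝ ℂ) with hP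
  have hQ0 : Q.eval 0 = 1 := by
    simp [hQ, eval_comp, GG_zero]
  have hP0 : P.eval 0 = 1 := by
    have := eval_map_real Q 0
    rw [hQ0, Complex.ofReal_zero, Complex.ofReal_one] at this
    exact this
  have hPne : P ≠ 0 := by intro h; rw [h] at hP0; simp at hP0
  have hQf : Q = ((X - C 1) ^ (M + 2 + e) * (X - C (-1)) ^ (M + 2)) * (C ((-1) ^ (M + 2 + e)) * H.comp (X ^ 2)) := by
    rw [hQ, hH]
    simp only [mul_comp, pow_comp, sub_comp, one_comp, X_comp, map_one, map_neg, C_pow]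
    have : (1 - X ^ 2 : ℝ[X]) = (1 - X) * (X - -1) := by ring
    rw [this]
    have : (1 - X : ℝ[X]) = (-1) * (X - 1) := by ring
    rw [this]
    simp only [mul_pow]
    ring
  have hPf : P = ((X - C 1) ^ (M + 2 + e) * (X - C (-1)) ^ (M + 2)) *
      ((C ((-1) ^ (M + 2 + e)) * H.comp (X ^ 2)).map (algebraMap ℝ ℂ)) := by
    rw [hP, hQf, Polynomial.map_mul]
    congr 1
    simp
  have hAne : ((X - C 1) ^ (M + 2 + e) * (X - C (-1)) ^ (M + 2) : ℂ[X]) ≠ 0 :=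
    mul_ne_zero (pow_ne_zero _ (X_sub_C_ne_zero _)) (pow_ne_zero _ (X_sub_C_ne_zero _))
  refine ⟨P, hPne, ?_, ?_, ⟨1, by simp, ?_⟩, by rw [hP0]; simp, ?_⟩
  · refine natDegree_map_le.trans ?_
    rw [hQf]
    refine natDegree_mul_le.trans ?_
    have d1 : ((X - C 1) ^ (M + 2 + e) * (X - C (-1)) ^ (M + 2) : ℝ[X]).natDegree ≤ (M + 2 + e) + (M + 2) := by
      refine natDegree_mul_le.trans ?_
      rw [natDegree_pow, natDegree_pow, natDegree_X_sub_C, natDegree_X_sub_C]; omega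
    have d2 : (C ((-1) ^ (M + 2 + e)) * H.comp (X ^ 2) : ℝ[X]).natDegree ≤ K * 2 := by
      refine (natDegree_C_mul_le _ _).trans (natDegree_comp_le.trans ?_)
      rw [natDegree_X_pow]; gcongr
    omega
  · have hle : ((X - C 1) ^ (M + 2 + e) * (X - C (-1)) ^ (M + 2) : ℂ[X]).roots ≤ P.roots :=
      roots.le_of_dvd hPne ⟨_, hPf⟩
    refine le_trans ?_ (Multiset.countP_le_of_le _ hle)
    rw [roots_mul hAne, roots_pow, roots_pow, roots_X_sub_C, roots_X_sub_C, Multiset.countP_add,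
      Multiset.countP_nsmul, Multiset.countP_nsmul]
    have c1 : Multiset.countP (fun z : ℂ => ‖z‖ ≤ 1 ∧ 0 ≤ z.im) {1} = 1 := by
      rw [Multiset.countP_eq_card.2] <;> simp
    have c2 : Multiset.countP (fun z : ℂ => ‖z‖ ≤ 1 ∧ 0 ≤ z.im) {-1} = 1 := by
      rw [Multiset.countP_eq_card.2] <;> simp
    rw [c1, c2]; omega
  · rw [hPf]; simp
  · intro x hx
    rw [hP, derivative_map, eval_map_real, Complex.norm_real, Real.norm_eq_abs]
    have hb := GG_deriv_bound M K hK x hx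
    have hg := GG_bound M K (x^2) (sq_nonneg x) (by nlinarith [hx.1, hx.2])
    have hs := Real.sqrt_nonneg (((M:ℝ) + 1) / (K + 1))
    rcases Nat.le_one_iff_eq_zero_or_eq_one.1 he with rfl | rfl
    · rw [hQ, pow_zero, one_mul]
      linarith
    · rw [hQ, pow_one, derivative_mul]
      simp only [derivative_sub, derivative_one, derivative_X, eval_add, eval_mul, eval_sub, eval_one, eval_X, eval_zero, eval_comp (p := GG M K), eval_pow]
      set d := (derivative ((GG M K).comp (X ^ 2))).eval x
      refine (abs_add_le _ _).trans ?_
      have b1 : |(0 - 1) * (GG M K).eval (x^2)| ≤ 1 := by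
        rw [abs_le]; constructor <;> linarith [hg.1, hg.2]
      have b2 : |(1 - x) * d| ≤ 2 * (24 * Real.sqrt ((M + 1) / (K + 1))) := by
        rw [abs_mul]
        gcongr
        rw [abs_le]; constructor <;> linarith [hx.1, hx.2]
      exact (add_le_add b1 b2).trans (by linarith)

lemma upper (n k : ℕ) (hn : 1 ≤ n) (hk : k ≤ n) :
    ∃ P : ℂ[X], P ≠ 0 ∧ P.natDegree ≤ n ∧
      n - k ≤ P.roots.countP (fun z => ‖z‖ ≤ 1 ∧ 0 ≤ z.im) ∧
      (∃ a ∈ Icc (-1:ℝ) 1, P.eval (a : ℂ) = 0) ∧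
      (∃ y ∈ Icc (-1:ℝ) 1, ‖P.eval (y:ℂ)‖ = 1) ∧
      ∀ x ∈ Icc (-1:ℝ) 1, ‖(derivative P).eval (x:ℂ)‖ ≤ 98 * Real.sqrt ((n:ℝ) / ((k:ℝ) + 1)) := by
  have hn' : (1:ℝ) ≤ n := by exact_mod_cast hn
  have hk' : (k:ℝ) ≤ n := by exact_mod_cast hk
  have hhalf : (1:ℝ)/4 ≤ n / (k + 1) := by
    rw [div_le_div_iff₀ (by norm_num) (by positivity)]; linarith
  have hsq : (1:ℝ)/2 ≤ Real.sqrt (n / (k + 1)) := by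
    apply Real.le_sqrt_of_sq_le; norm_num at *; linarith
  by_cases hs : n - k ≤ 3
  · set d := max (n - k) 1 with hd
    have hd1 : 1 ≤ d := le_max_right _ _
    have hd3 : d ≤ 3 := max_le hs (by norm_num)
    refine ⟨X ^ d, pow_ne_zero _ X_ne_zero, ?_, ?_, ⟨0, by simp, ?_⟩, ⟨1, by simp, by simp⟩, ?_⟩
    · rw [natDegree_X_pow]; exact max_le (Nat.sub_le _ _) hn
    · rw [roots_pow, roots_X, Multiset.countP_nsmul]
      have c1 : Multiset.countP (fun z : ℂ => ‖z‖ ≤ 1 ∧ 0 ≤ z.im) {0} = 1 := by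
        rw [Multiset.countP_eq_card.2] <;> simp
      rw [c1, mul_one]; exact le_max_left _ _
    · simp; omega
    · intro x hx
      have hx1 : |x| ≤ 1 := abs_le.2 hx
      have hd3' : (d:ℝ) ≤ 3 := by exact_mod_cast hd3
      simp only [derivative_X_pow, eval_mul, eval_C, eval_pow, eval_X, norm_mul, norm_pow, Complex.norm_real, Real.norm_eq_abs, Complex.norm_natCast]
      calc (d:ℝ) * |x|^(d-1) ≤ 3 * 1 := by
            gcongr
            exact pow_le_one₀ (abs_nonneg x) hx1
        _ ≤ _ := by linarith
  · obtain ⟨M, e, he, hMe⟩ : ∃ M e, e ≤ 1 ∧ n - k = 2 * (M + 2) + e :=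
      ⟨(n - k)/2 - 2, (n - k) % 2, by omega, by omega⟩
    set K := min (k/2) (M+2) with hKdef
    obtain ⟨P, p1, p2, p3, p4, p5, p6⟩ := upper_main M K e (min_le_right _ _) he
    have hKk : K ≤ k/2 := min_le_left _ _
    refine ⟨P, p1, by omega, by omega, p4, ⟨0, by simp, by simpa using p5⟩, fun x hx => (p6 x hx).trans ?_⟩
    have hq : ((M:ℝ) + 1) / (K + 1) ≤ 2 * (n / (k + 1)) := by
      rw [← mul_div_assoc, div_le_div_iff₀ (by positivity) (by positivity)]
      rcases min_choice (k/2) (M+2) with h | h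
      · have a1 : k + 1 ≤ 2 * (K + 1) := by omega
        have a2 : M + 1 ≤ n := by omega
        have : (M + 1) * (k + 1) ≤ n * (2 * (K + 1)) := Nat.mul_le_mul a2 a1
        have : (((M + 1) * (k + 1) : ℕ):ℝ) ≤ ((n * (2 * (K + 1)) : ℕ) : ℝ) := by exact_mod_cast this
        push_cast at this; linarith
      · have a1 : M + 1 ≤ K + 1 := by omega
        have a2 : k + 1 ≤ 2 * n := by omega
        have : (M + 1) * (k + 1) ≤ (K + 1) * (2 * n) := Nat.mul_le_mul a1 a2
        have : (((M + 1) * (k + 1) : ℕ):ℝ) ≤ (((K + 1) * (2 * n) : ℕ) : ℝ) := by exact_mod_cast this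
        push_cast at this; linarith
    have hq2 : Real.sqrt (((M:ℝ) + 1) / (K + 1)) ≤ 2 * Real.sqrt (n / (k + 1)) := by
      rw [Real.sqrt_le_left (by positivity), mul_pow, Real.sq_sqrt (by positivity)]
      linarith
    linarith

/-- The value of the functional at a Joukowski parameter. -/
noncomputable def SS (ζ : ℂ) : ℂ := 3/2 * ζ^2 + Complex.I * (27/2 * ζ - 9/2 * ζ^3)

noncomputable def TT (w : ℂ) : ℂ := 3/2 * w + Complex.I * (27/2 - 9/2 * w^2)

lemma SS_norm (ζ : ℂ) (h : ‖ζ‖ ≤ 1) : ‖SS ζ‖ ≤ 39/2 := by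
  have h0 := norm_nonneg ζ
  have h2 : ‖ζ‖^2 ≤ 1 := pow_le_one₀ h0 h
  have h3 : ‖ζ‖^3 ≤ 1 := pow_le_one₀ h0 h
  unfold SS
  calc _ ≤ ‖3/2 * ζ^2‖ + ‖Complex.I * (27/2 * ζ - 9/2 * ζ^3)‖ := norm_add_le _ _
    _ ≤ ‖3/2 * ζ^2‖ + (‖27/2 * ζ‖ + ‖9/2 * ζ^3‖) := by
        rw [norm_mul Complex.I, Complex.norm_I, one_mul]; gcongr; exact norm_sub_le _ _
    _ = 3/2 * ‖ζ‖^2 + (27/2 * ‖ζ‖ + 9/2 * ‖ζ‖^3) := by simp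
    _ ≤ _ := by linarith

lemma TT_norm (w : ℂ) (h : ‖w‖ = 1) : ‖TT w‖ ≤ 39/2 := by
  unfold TT
  calc _ ≤ ‖3/2 * w‖ + ‖Complex.I * (27/2 - 9/2 * w^2)‖ := norm_add_le _ _
    _ ≤ ‖3/2 * w‖ + (‖(27/2:ℂ)‖ + ‖9/2 * w^2‖) := by
        rw [norm_mul Complex.I, Complex.norm_I, one_mul]; gcongr; exact norm_sub_le _ _
    _ = 3/2 * ‖w‖ + (27/2 + 9/2 * ‖w‖^2) := by simp
    _ ≤ _ := by rw [h]; norm_num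

lemma SS_re_aux (r a s : ℝ) (hr : 0 < r) (hr1 : r ≤ 1) (hs : 0 ≤ s) (h : a^2 + s^2 = 1) :
    3/4 * r^2 ≤ 3/2 * (r^2 * (a^2 - s^2)) + 27/2 * (r * s) - 9/2 * (r^3 * (3 * a^2 * s - s^3)) := by
  have ha : a^2 = 1 - s^2 := by linarith
  have hs1 : s ≤ 1 := by nlinarith [sq_nonneg a]
  rw [ha]
  have key : 0 ≤ 3/4 * r - 3 * r * s^2 + 27/2 * s * (1 - r^2) + 18 * r^2 * s^3 := by
    have hA : 0 ≤ s * (1 - r^2) := mul_nonneg hs (by nlinarith)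
    rcases le_total s (1/2) with h1 | h1
    · have : 0 ≤ 18 * r^2 * s^3 := by positivity
      have : r * s^2 ≤ r * (1/4) := by gcongr; nlinarith
      nlinarith
    · have e1 : 27/4 * (1 - r^2) ≤ 27/2 * s * (1 - r^2) := by
        nlinarith [mul_nonneg (sub_nonneg.2 h1) (show 0 ≤ 1 - r^2 by nlinarith)]
      have e2 : 9 * r^2 * s^2 ≤ 18 * r^2 * s^3 := by
        nlinarith [mul_nonneg (sub_nonneg.2 h1) (show 0 ≤ r^2 * s^2 by positivity)]
      have e3 : r * s^2 ≤ r := by nlinarith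
      nlinarith [mul_nonneg hr.le (sub_nonneg.2 hr1), mul_nonneg (mul_nonneg hr.le (sub_nonneg.2 hr1)) (sq_nonneg s), mul_nonneg hr.le (show 0 ≤ s^2 - 1/4 by nlinarith)]
  nlinarith [mul_nonneg hr.le key]

lemma SS_re (ζ : ℂ) (h0 : ζ ≠ 0) (h1 : ‖ζ‖ ≤ 1) (hi : ζ.im ≤ 0) :
    3/4 * ‖ζ‖^2 ≤ (SS ζ).re := by
  set r := ‖ζ‖ with hr
  have rp : 0 < r := norm_pos_iff.2 h0
  have e : r^2 = ζ.re^2 + ζ.im^2 := by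
    rw [hr, ← Complex.normSq_eq_norm_sq, Complex.normSq_apply]; ring
  have := SS_re_aux r (ζ.re / r) (-ζ.im / r) rp h1 (div_nonneg (by linarith) rp.le)
    (by field_simp; linarith)
  refine this.trans (le_of_eq ?_)
  have : (SS ζ).re = 3/2 * (ζ.re^2 - ζ.im^2) - 27/2 * ζ.im + 9/2 * (3 * ζ.re^2 * ζ.im - ζ.im^3) := by
    unfold SS
    have : ζ = ⟨ζ.re, ζ.im⟩ := rfl
    simp [pow_succ]
    ring
  rw [this]
  field_simp
  ring

lemma jouk (z : ℂ) (hz : ∀ x ∈ Icc (-1:ℝ) 1, z ≠ (x:ℂ)) :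
    ∃ ζ : ℂ, ζ ≠ 0 ∧ ‖ζ‖ < 1 ∧ 2 * z = ζ + ζ⁻¹ := by
  obtain ⟨s, hs⟩ := IsAlgClosed.exists_pow_nat_eq (z^2 - 1) (n := 2) (by norm_num)
  have hp : (z + s) * (z - s) = 1 := by linear_combination -hs
  have h0 : z + s ≠ 0 := left_ne_zero_of_mul_eq_one hp
  have hinv : (z + s)⁻¹ = z - s := (eq_inv_of_mul_eq_one_right hp).symm
  have hne : ‖z + s‖ ≠ 1 := by
    intro h1
    have hc : (starRingEnd ℂ) (z + s) = z - s := by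
      rw [← hinv, Complex.inv_def, Complex.normSq_eq_norm_sq, h1]; simp
    have : z = (((z+s).re : ℝ) : ℂ) := by
      rw [Complex.re_eq_add_conj, hc]; ring
    have h2 := Complex.abs_re_le_norm (z+s)
    rw [h1] at h2
    exact hz _ (abs_le.1 h2) this
  rcases lt_or_gt_of_ne hne with h | h
  · exact ⟨z + s, h0, h, by rw [hinv]; ring⟩
  · refine ⟨(z+s)⁻¹, inv_ne_zero h0, ?_, ?_⟩
    · rw [norm_inv]; exact inv_lt_one_of_one_lt₀ h
    · rw [inv_inv, hinv]; ring

/-- the integrand attached to a zero -/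
noncomputable def kern (z w : ℂ) : ℂ := TT w * ((w^2 - 1) / (w^2 - 2 * z * w + 1))

lemma kern_fact (z ζ w : ℂ) (h0 : ζ ≠ 0) (hz : 2 * z = ζ + ζ⁻¹) :
    w^2 - 2 * z * w + 1 = (w - ζ) * (w - ζ⁻¹) := by
  rw [hz]; field_simp; ring

lemma kern_int (z ζ : ℂ) (h0 : ζ ≠ 0) (h1 : ‖ζ‖ < 1) (hz : 2 * z = ζ + ζ⁻¹) :
    CircleIntegrable (kern z) 0 1 ∧
    (∮ w in C(0, 1), kern z w) = (2 * Real.pi * Complex.I) * SS ζ := by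
  have hinv : 1 < ‖ζ⁻¹‖ := by
    rw [norm_inv]; exact (one_lt_inv₀ (norm_pos_iff.2 h0)).2 h1
  have ne2 : ∀ w ∈ Metric.closedBall (0:ℂ) 1, w - ζ⁻¹ ≠ 0 := by
    intro w hw h
    have : ‖w‖ ≤ 1 := by simpa using hw
    rw [sub_eq_zero.1 h] at this; linarith
  have ne1 : ∀ w ∈ Metric.sphere (0:ℂ) 1, w - ζ ≠ 0 := by
    intro w hw h
    have : ‖w‖ = 1 := by simpa using hw
    rw [sub_eq_zero.1 h] at this; linarith
  constructor
  · apply ContinuousOn.circleIntegrable (by norm_num)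
    unfold kern TT
    refine ContinuousOn.mul (by fun_prop) (ContinuousOn.div (by fun_prop) (by fun_prop) ?_)
    intro w hw
    rw [kern_fact z ζ w h0 hz]
    exact mul_ne_zero (ne1 w hw) (ne2 w (Metric.sphere_subset_closedBall hw))
  · have hd : DifferentiableOn ℂ (fun w => TT w * ((w^2 - 1) / (w - ζ⁻¹))) (Metric.closedBall 0 1) := by
      unfold TT
      refine DifferentiableOn.mul (by fun_prop) (DifferentiableOn.div (by fun_prop) (by fun_prop) ne2)
    have := DifferentiableOn.circleIntegral_sub_inv_smul hd (w := ζ) (by simpa using h1)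
    have e : (∮ w in C(0, 1), kern z w) = ∮ w in C(0, 1), (w - ζ)⁻¹ • (TT w * ((w^2 - 1) / (w - ζ⁻¹))) := by
      congr 1
      ext w
      unfold kern
      rw [kern_fact z ζ w h0 hz, smul_eq_mul, div_eq_mul_inv, div_eq_mul_inv, mul_inv]
      ring
    rw [e, this, smul_eq_mul]
    congr 1
    have h3 : ζ - ζ⁻¹ ≠ 0 := ne2 ζ (by simpa using h1.le)
    have h4 : (ζ^2 - 1) / (ζ - ζ⁻¹) = ζ := by
      rw [div_eq_iff h3]; field_simp
    rw [h4]; unfold TT SS; ring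

lemma multi_int (s : Multiset ℂ) (ζ : ℂ → ℂ)
    (h : ∀ z ∈ s, ζ z ≠ 0 ∧ ‖ζ z‖ < 1 ∧ 2 * z = ζ z + (ζ z)⁻¹) :
    CircleIntegrable (fun w => (s.map fun z => kern z w).sum) 0 1 ∧
    (∮ w in C(0, 1), (s.map fun z => kern z w).sum) =
      (2 * Real.pi * Complex.I) * (s.map fun z => SS (ζ z)).sum := by
  induction s using Multiset.induction_on with
  | empty => simp [circleIntegrable_const, circleIntegral]
  | cons a s ih =>
    obtain ⟨i1, i2⟩ := ih fun z hz => h z (Multiset.mem_cons_of_mem hz)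
    obtain ⟨a0, a1, a2⟩ := h a (Multiset.mem_cons_self a s)
    obtain ⟨j1, j2⟩ := kern_int a (ζ a) a0 a1 a2
    simp only [Multiset.map_cons, Multiset.sum_cons]
    refine ⟨j1.add i1, ?_⟩
    rw [circleIntegral.integral_add j1 i1, i2, j2]; ring

lemma kern_eq (z : ℂ) (w : ℂ) (h : ‖w‖ = 1) :
    kern z w = TT w * ((w - w⁻¹) / 2) * (1 / ((w.re : ℂ) - z)) := by
  have w0 : w ≠ 0 := by rintro rfl; simp at h
  have hc : (starRingEnd ℂ) w = w⁻¹ := by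
    rw [Complex.inv_def, Complex.normSq_eq_norm_sq, h]; simp
  have : (w.re : ℂ) = (w + w⁻¹) / 2 := by rw [Complex.re_eq_add_conj, hc]
  have e1 : w^2 - 1 = (w - w⁻¹)/2 * (2 * w) := by field_simp
  have e2 : w^2 - 2 * z * w + 1 = ((w.re : ℂ) - z) * (2 * w) := by rw [this]; field_simp; ring
  unfold kern
  rw [e1, e2, mul_div_mul_right _ _ (by simpa using w0)]
  ring

/-- Normalised core estimate. -/
lemma core (s : Multiset ℂ) (R : ℝ) (hR : 1 ≤ R) (n k : ℕ) (hcard : Multiset.card s ≤ n)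
    (hgood : n - k ≤ s.countP (fun z => ‖z‖ ≤ 2 * R ∧ 0 ≤ z.im)) (hk : k ≤ n)
    (hz : ∀ z ∈ s, ∀ x ∈ Icc (-1:ℝ) 1, z ≠ (x:ℂ))
    (hb : ∀ x ∈ Icc (-1:ℝ) 1, ‖(s.map fun z => 1 / ((x:ℂ) - z)).sum‖ ≤ 1) :
    3/4 * ((n:ℝ) - k) * (1 / (5 * R))^2 ≤ 39/2 * (k + 1) := by
  have hz' : ∀ z : ℂ, ∃ ζ : ℂ, z ∈ s → (ζ ≠ 0 ∧ ‖ζ‖ < 1 ∧ 2 * z = ζ + ζ⁻¹) := by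
    intro z
    by_cases h : z ∈ s
    · obtain ⟨ζ, hh⟩ := jouk z (hz z h)
      exact ⟨ζ, fun _ => hh⟩
    · exact ⟨0, fun h' => absurd h' h⟩
  choose ζ hζ using hz'
  obtain ⟨-, hcirc⟩ := multi_int s ζ hζ
  have hle : ‖∮ w in C(0, 1), (s.map fun z => kern z w).sum‖ ≤ 2 * Real.pi * 1 * (39/2) := by
    refine circleIntegral.norm_integral_le_of_norm_le_const (by norm_num) fun w hw => ?_
    have hw : ‖w‖ = 1 := by simpa using hw
    have : (s.map fun z => kern z w).sum =
        TT w * ((w - w⁻¹)/2) * (s.map fun z => 1 / ((w.re:ℂ) - z)).sum := by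
      rw [← Multiset.sum_map_mul_left]
      congr 1
      exact Multiset.map_congr rfl fun z _ => kern_eq z w hw
    rw [this, norm_mul, norm_mul]
    have b1 := TT_norm w hw
    have b2 : ‖(w - w⁻¹)/2‖ ≤ 1 := by
      rw [norm_div]
      have := norm_sub_le w w⁻¹
      rw [norm_inv, hw] at this
      simp; norm_num at this; linarith
    have b3 := hb w.re (abs_le.1 (hw ▸ Complex.abs_re_le_norm w))
    calc ‖TT w‖ * ‖(w - w⁻¹) / 2‖ * ‖(Multiset.map (fun z => 1 / ((w.re:ℂ) - z)) s).sum‖ ≤ 39/2 * 1 * 1 := by gcongr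
      _ = 39/2 := by norm_num
  have hpi := Real.pi_pos
  have hS : ‖(s.map fun z => SS (ζ z)).sum‖ ≤ 39/2 := by
    rw [hcirc, norm_mul] at hle
    have : ‖(2 * Real.pi * Complex.I : ℂ)‖ = 2 * Real.pi := by
      simp [abs_of_pos hpi]
    rw [this, mul_one] at hle
    exact le_of_mul_le_mul_left hle (by positivity)
  set c := 3/4 * (1 / (5 * R))^2 with hc
  have hlow : ∀ t : Multiset ℂ, t ≤ s →
      c * (t.countP (fun z => ‖z‖ ≤ 2 * R ∧ 0 ≤ z.im)) -
        39/2 * (Multiset.card t - t.countP (fun z => ‖z‖ ≤ 2 * R ∧ 0 ≤ z.im) : ℝ)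
      ≤ ((t.map fun z => SS (ζ z)).sum).re := by
    intro t
    induction t using Multiset.induction_on with
    | empty => simp
    | cons a t ih =>
      intro ht
      have ih := ih ((Multiset.le_cons_self t a).trans ht)
      have ha : a ∈ s := Multiset.mem_of_le ht (Multiset.mem_cons_self a t)
      obtain ⟨a0, a1, a2⟩ := hζ a ha
      simp only [Multiset.map_cons, Multiset.sum_cons, Complex.add_re, Multiset.card_cons]
      by_cases hg : ‖a‖ ≤ 2 * R ∧ 0 ≤ a.im
      · rw [Multiset.countP_cons_of_pos (p := fun z : ℂ => ‖z‖ ≤ 2 * R ∧ 0 ≤ z.im) _ hg]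
        have him : (ζ a).im ≤ 0 := by
          have e := congrArg Complex.im a2
          have e3 : (ζ a)⁻¹.im = - (ζ a).im / ‖ζ a‖^2 := by
            rw [Complex.inv_im, Complex.normSq_eq_norm_sq]
          rw [Complex.add_im, e3] at e
          have e4 : (2 * a).im = 2 * a.im := by simp
          rw [e4] at e
          by_contra hcon
          push Not at hcon
          have p : 0 < ‖ζ a‖ := norm_pos_iff.2 a0
          have : (ζ a).im < (ζ a).im / ‖ζ a‖^2 := by
            rw [lt_div_iff₀ (by positivity)]
            have : ‖ζ a‖^2 < 1 := by nlinarith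
            nlinarith
          rw [neg_div] at e
          linarith [hg.2]
        have hre := SS_re (ζ a) a0 a1.le him
        have hlowr : 1 / (5 * R) ≤ ‖ζ a‖ := by
          have p : 0 < ‖ζ a‖ := norm_pos_iff.2 a0
          have e : (ζ a)⁻¹ = 2 * a - ζ a := by rw [a2]; ring
          have e1 : ‖ζ a‖⁻¹ ≤ 2 * ‖a‖ + ‖ζ a‖ := by
            rw [← norm_inv, e]
            refine (norm_sub_le _ _).trans (by simp)
          have e2 : ‖ζ a‖⁻¹ ≤ 5 * R := by linarith [hg.1]
          rw [one_div]
          exact inv_le_of_inv_le₀ p e2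
        have : c ≤ (SS (ζ a)).re := by
          refine le_trans ?_ hre
          rw [hc]; gcongr
        push_cast
        linarith
      · rw [Multiset.countP_cons_of_neg (p := fun z : ℂ => ‖z‖ ≤ 2 * R ∧ 0 ≤ z.im) _ hg]
        have h5 := SS_norm (ζ a) a1.le
        have h6 := abs_le.1 (Complex.abs_re_le_norm (SS (ζ a)))
        push_cast
        linarith [h6.1]
  have h7 := hlow s le_rfl
  have h8 := (abs_le.1 (Complex.abs_re_le_norm (s.map fun z => SS (ζ z)).sum)).2
  set g := s.countP (fun z => ‖z‖ ≤ 2 * R ∧ 0 ≤ z.im)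
  have h9 : (n:ℝ) - k ≤ g := by
    rw [← Nat.cast_sub hk]; exact_mod_cast hgood
  have h10 : (Multiset.card s : ℝ) ≤ n := by exact_mod_cast hcard
  have c0 : 0 ≤ c := by positivity
  have h11 : c * ((n:ℝ) - k) ≤ c * g := by gcongr
  have : 3/4 * ((n:ℝ) - k) * (1 / (5 * R))^2 = c * ((n:ℝ) - k) := by rw [hc]; ring
  rw [this]
  linarith

lemma bdd_sup (Q : ℂ[X]) : BddAbove (range fun x : Icc (-1:ℝ) 1 => ‖Q.eval ((x:ℝ):ℂ)‖) := by
  have : Continuous fun x : Icc (-1:ℝ) 1 => ‖Q.eval ((x:ℝ):ℂ)‖ := by fun_prop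
  exact (isCompact_range this).bddAbove

lemma lower (n k : ℕ) (hk : k ≤ n) (P : ℂ[X]) (hP0 : P ≠ 0) (hdeg : P.natDegree ≤ n)
    (hcount : n - k ≤ P.roots.countP (fun z => ‖z‖ ≤ 1 ∧ 0 ≤ z.im))
    (a : ℝ) (ha : a ∈ Icc (-1:ℝ) 1) (hPa : P.eval (a:ℂ) = 0) :
    1/102 * Real.sqrt ((n:ℝ) / ((k:ℝ) + 1)) ≤
      (⨆ x : Icc (-1:ℝ) 1, ‖(Polynomial.derivative P).eval ((x : ℝ) : ℂ)‖) /
              (⨆ x : Icc (-1:ℝ) 1, ‖P.eval ((x : ℝ) : ℂ)‖) := by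
  set M := ⨆ x : Icc (-1:ℝ) 1, ‖(Polynomial.derivative P).eval ((x : ℝ) : ℂ)‖ with hM
  set N := ⨆ x : Icc (-1:ℝ) 1, ‖P.eval ((x : ℝ) : ℂ)‖ with hN
  have hM' : ∀ x ∈ Icc (-1:ℝ) 1, ‖(Polynomial.derivative P).eval (x:ℂ)‖ ≤ M := fun x hx =>
    le_ciSup (bdd_sup (derivative P)) ⟨x, hx⟩
  have hN' : ∀ x ∈ Icc (-1:ℝ) 1, ‖P.eval (x:ℂ)‖ ≤ N := fun x hx =>
    le_ciSup (bdd_sup P) ⟨x, hx⟩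
  obtain ⟨x₀, hx₀, hmax⟩ := isCompact_Icc.exists_isMaxOn (s := Icc (-1:ℝ) 1) ⟨0, by simp⟩
    (f := fun x : ℝ => ‖P.eval (x:ℂ)‖) (by fun_prop)
  have hx₀N : ‖P.eval (x₀:ℂ)‖ = N := by
    refine le_antisymm (hN' x₀ hx₀) ?_
    have : Nonempty (Icc (-1:ℝ) 1) := ⟨⟨0, by simp⟩⟩
    exact ciSup_le fun x => hmax x.2
  have hlip : ∀ x ∈ Icc (-1:ℝ) 1, ∀ y ∈ Icc (-1:ℝ) 1,
      ‖P.eval (y:ℂ) - P.eval (x:ℂ)‖ ≤ M * |y - x| := by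
    intro x hx y hy
    exact (convex_Icc (-1:ℝ) 1).norm_image_sub_le_of_norm_hasDerivWithin_le
      (f := fun x : ℝ => P.eval (x:ℂ)) (f' := fun x : ℝ => (derivative P).eval (x:ℂ))
      (fun x _ => (P.hasDerivAt (x:ℂ)).comp_ofReal.hasDerivWithinAt) hM' hx hy
  have Npos : 0 < N := by
    rcases (norm_nonneg (P.eval (x₀:ℂ))).lt_or_eq with h | h
    · rwa [hx₀N] at h
    · exfalso
      rw [hx₀N] at h
      apply hP0
      apply P.eq_zero_of_infinite_isRoot
      refine Set.Infinite.mono ?_ ((Icc_infinite (show (-1:ℝ) < 1 by norm_num)).image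
        (Complex.ofReal_injective.injOn))
      rintro _ ⟨x, hx, rfl⟩
      exact norm_le_zero_iff.1 (h ▸ hN' x hx)
  have hNM : N ≤ M * |x₀ - a| := by
    have := hlip a ha x₀ hx₀
    rwa [hPa, sub_zero, hx₀N] at this
  have hM0 : 0 ≤ M := (norm_nonneg _).trans (hM' a ha)
  have Mpos : 0 < M := by
    rcases hM0.lt_or_eq with h | h
    · exact h
    · rw [← h, zero_mul] at hNM; linarith
  set h := N / (2 * M) with hh
  have hpos : 0 < h := by positivity
  have hMh : M * h = N / 2 := by rw [hh]; field_simp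
  have h2 : 2 * h ≤ |x₀ - a| := by
    refine le_of_mul_le_mul_left ?_ Mpos
    linarith
  have h1 : h ≤ 1 := by
    have : |x₀ - a| ≤ 2 := abs_le.2 ⟨by linarith [hx₀.1, ha.2], by linarith [hx₀.2, ha.1]⟩
    linarith
  obtain ⟨xc, hxc⟩ : ∃ xc : ℝ, ∀ t ∈ Icc (-1:ℝ) 1,
      xc + h/2 * t ∈ Icc (-1:ℝ) 1 ∧ |xc + h/2 * t - x₀| ≤ h := by
    rcases le_total a x₀ with hle | hle
    · rw [abs_of_nonneg (by linarith)] at h2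
      refine ⟨x₀ - h/2, fun t ht => ⟨⟨?_, ?_⟩, abs_le.2 ⟨?_, ?_⟩⟩⟩ <;>
      nlinarith [ht.1, ht.2, ha.1, ha.2, hx₀.1, hx₀.2]
    · rw [abs_of_nonpos (by linarith)] at h2
      refine ⟨x₀ + h/2, fun t ht => ⟨⟨?_, ?_⟩, abs_le.2 ⟨?_, ?_⟩⟩⟩ <;>
      nlinarith [ht.1, ht.2, ha.1, ha.2, hx₀.1, hx₀.2]
  set ρ := h/2 with hρ
  have ρpos : 0 < ρ := by positivity
  have hρc : (ρ:ℂ) ≠ 0 := by exact_mod_cast ρpos.ne'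
  have hxc1 : |xc| ≤ 1 := by
    have := (hxc 0 (by simp)).1
    simpa [abs_le] using this
  have hPlow : ∀ t ∈ Icc (-1:ℝ) 1, N / 2 ≤ ‖P.eval ((xc + ρ * t : ℝ):ℂ)‖ := by
    intro t ht
    obtain ⟨q1, q2⟩ := hxc t ht
    have q3 := hlip x₀ hx₀ _ q1
    have q4 : M * |xc + ρ * t - x₀| ≤ N/2 := by rw [← hMh]; gcongr
    have q5 := norm_sub_norm_le (P.eval (x₀:ℂ)) (P.eval ((xc + ρ * t : ℝ):ℂ))
    rw [norm_sub_rev, hx₀N] at q5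
    linarith
  have hcore := core (P.roots.map fun z => (z - xc) / ρ) (1/ρ)
    (by rw [le_div_iff₀ ρpos]; linarith) n k
    (by rw [Multiset.card_map]; exact (card_roots' P).trans hdeg)
    (by
      refine hcount.trans ?_
      rw [Multiset.countP_map, Multiset.countP_eq_card_filter]
      refine Multiset.card_le_card (Multiset.monotone_filter_right _ ?_)
      rintro z ⟨z1, z2⟩
      constructor
      · rw [norm_div, Complex.norm_real, Real.norm_of_nonneg ρpos.le, mul_one_div]
        gcongr
        refine (norm_sub_le _ _).trans ?_
        rw [Complex.norm_real, Real.norm_eq_abs]; linarith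
      · rw [Complex.div_ofReal_im]
        apply div_nonneg _ ρpos.le
        simpa using z2)
    hk
    (by
      intro z hz t ht hzt
      obtain ⟨y, hy, rfl⟩ := Multiset.mem_map.1 hz
      have hy0 : P.eval y = 0 := (mem_roots'.1 hy).2
      have hyx : y = ((xc + ρ * t : ℝ):ℂ) := by
        rw [div_eq_iff hρc] at hzt
        push_cast; linear_combination hzt
      have := hPlow t ht
      rw [← hyx, hy0, norm_zero] at this
      linarith)
    (by
      intro t ht
      have low := hPlow t ht
      have ne : P.eval ((xc + ρ * t : ℝ):ℂ) ≠ 0 := by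
        intro h0; rw [h0, norm_zero] at low; linarith
      have e := (IsAlgClosed.splits P).eval_derivative_div_eval_of_ne_zero ne
      have e2 : ((P.roots.map fun z : ℂ => (z - xc) / ρ).map fun z => 1 / ((t:ℂ) - z)).sum =
          ρ * ((derivative P).eval ((xc + ρ * t : ℝ):ℂ) / P.eval ((xc + ρ * t : ℝ):ℂ)) := by
        rw [e, ← Multiset.sum_map_mul_left, Multiset.map_map]
        congr 1
        refine Multiset.map_congr rfl fun z _ => ?_
        simp only [Function.comp]
        have : (t:ℂ) - (z - xc)/ρ = (((xc + ρ * t : ℝ):ℂ) - z) / ρ := by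
          push_cast; field_simp; ring
        rw [this, one_div_div, mul_one_div]
      rw [e2, norm_mul, norm_div, Complex.norm_real, Real.norm_of_nonneg ρpos.le]
      have up := hM' _ (hxc t ht).1
      calc ρ * (‖(derivative P).eval ((xc + ρ * t : ℝ):ℂ)‖ / ‖P.eval ((xc + ρ * t : ℝ):ℂ)‖)
          ≤ ρ * (M / (N/2)) := by gcongr
        _ = 1/2 := by rw [hρ, hh]; field_simp
        _ ≤ 1 := by norm_num)
  have hfin : (n:ℝ) * h^2 ≤ 2601 * (k + 1) := by
    have e : 1 / (5 * (1/ρ)) = h / 10 := by rw [hρ]; field_simp; norm_num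
    rw [e] at hcore
    have : (k:ℝ) * h^2 ≤ k * 1 := by gcongr; nlinarith
    nlinarith
  have hr : M / N = 1 / (2 * h) := by rw [hh]; field_simp
  rw [hr]
  have hs : Real.sqrt ((n:ℝ) / ((k:ℝ) + 1)) ≤ 51 / h := by
    rw [Real.sqrt_le_left (by positivity), div_pow, div_le_div_iff₀ (by positivity) (by positivity)]
    linarith
  calc _ ≤ 1/102 * (51 / h) := by gcongr
    _ = _ := by field_simp; norm_num

theorem main_theorem :
    ∃ c₁ c₂ : ℝ, 0 < c₁ ∧ 0 < c₂ ∧ ∀ n k : ℕ, k ≤ n →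
      c₁ * Real.sqrt ((n : ℝ) / ((k : ℝ) + 1)) ≤
        sInf {r : ℝ | ∃ P : Polynomial ℂ, P ≠ 0 ∧ P.natDegree ≤ n ∧
          n - k ≤ (P.roots.countP (fun z => ‖z‖ ≤ 1 ∧ 0 ≤ z.im)) ∧
          (∃ a ∈ Icc (-1:ℝ) 1, P.eval (a : ℂ) = 0) ∧
          r = (⨆ x : Icc (-1:ℝ) 1, ‖(Polynomial.derivative P).eval ((x : ℝ) : ℂ)‖) /
              (⨆ x : Icc (-1:ℝ) 1, ‖P.eval ((x : ℝ) : ℂ)‖)} ∧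
      sInf {r : ℝ | ∃ P : Polynomial ℂ, P ≠ 0 ∧ P.natDegree ≤ n ∧
          n - k ≤ (P.roots.countP (fun z => ‖z‖ ≤ 1 ∧ 0 ≤ z.im)) ∧
          (∃ a ∈ Icc (-1:ℝ) 1, P.eval (a : ℂ) = 0) ∧
          r = (⨆ x : Icc (-1:ℝ) 1, ‖(Polynomial.derivative P).eval ((x : ℝ) : ℂ)‖) /
              (⨆ x : Icc (-1:ℝ) 1, ‖P.eval ((x : ℝ) : ℂ)‖)} ≤
        c₂ * Real.sqrt ((n : ℝ) / ((k : ℝ) + 1)) := by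
  refine ⟨1/102, 98, by norm_num, by norm_num, fun n k hk => ?_⟩
  have hne : Nonempty (Icc (-1:ℝ) 1) := ⟨⟨0, by simp⟩⟩
  rcases Nat.eq_zero_or_pos n with rfl | hn
  · have hempty : {r : ℝ | ∃ P : Polynomial ℂ, P ≠ 0 ∧ P.natDegree ≤ 0 ∧
          0 - k ≤ (P.roots.countP (fun z => ‖z‖ ≤ 1 ∧ 0 ≤ z.im)) ∧
          (∃ a ∈ Icc (-1:ℝ) 1, P.eval (a : ℂ) = 0) ∧
          r = (⨆ x : Icc (-1:ℝ) 1, ‖(Polynomial.derivative P).eval ((x : ℝ) : ℂ)‖) /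
              (⨆ x : Icc (-1:ℝ) 1, ‖P.eval ((x : ℝ) : ℂ)‖)} = ∅ := by
      ext r
      simp only [mem_ofPred_eq, mem_empty_iff_false, iff_false]
      rintro ⟨P, h0, hd, -, ⟨a, -, ha⟩, -⟩
      rw [eq_C_of_natDegree_le_zero hd] at ha h0
      rw [eval_C] at ha
      rw [ha] at h0
      simp at h0
    rw [hempty]
    simp
  · obtain ⟨P, p1, p2, p3, p4, ⟨y, hy, p5⟩, p6⟩ := upper n k hn hk
    constructor
    · refine le_csInf ⟨_, P, p1, p2, p3, p4, rfl⟩ ?_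
      rintro r ⟨Q, q1, q2, q3, ⟨a, ha, q4⟩, rfl⟩
      exact lower n k hk Q q1 q2 q3 a ha q4
    · refine le_trans (csInf_le (a := (⨆ x : Icc (-1:ℝ) 1, ‖(Polynomial.derivative P).eval ((x : ℝ) : ℂ)‖) /
              (⨆ x : Icc (-1:ℝ) 1, ‖P.eval ((x : ℝ) : ℂ)‖)) ⟨0, ?_⟩ ⟨P, p1, p2, p3, p4, rfl⟩) ?_
      · rintro r ⟨Q, -, -, -, -, rfl⟩
        exact div_nonneg (Real.iSup_nonneg fun x => norm_nonneg _) (Real.iSup_nonneg fun x => norm_nonneg _)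
      · have h1 : 1 ≤ ⨆ x : Icc (-1:ℝ) 1, ‖P.eval ((x : ℝ) : ℂ)‖ := by
          exact p5.symm.le.trans (le_ciSup (bdd_sup P) ⟨y, hy⟩)
        have h2 : (⨆ x : Icc (-1:ℝ) 1, ‖(Polynomial.derivative P).eval ((x : ℝ) : ℂ)‖) ≤
            98 * Real.sqrt ((n : ℝ) / ((k : ℝ) + 1)) := ciSup_le fun x => p6 x x.2
        refine (div_le_self (Real.iSup_nonneg fun x => norm_nonneg _) h1).trans h2
end

section
/- Let 1 ≤ k ≤ n/163000. Then ‖P'‖_{[-1,1]} ≥ (1/202)·((n-k)/(8k))^{1/2}·‖P‖_{[-1,1]} for every P ∈ 𝓕_{n,k}^c. -/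
open Polynomial Set
open scoped Classical

/-- The Joukowski map. -/
noncomputable def jouk_s12 (ζ : ℂ) : ℂ := (ζ + ζ⁻¹) / 2

/-- The weight used for averaging the logarithmic derivative. -/
noncomputable def wt (ζ : ℂ) : ℂ := -((ζ ^ 2 - 1) * (Complex.I * ζ - 2)) / (2 * ζ)

lemma jouk_of_norm_one {ζ : ℂ} (h : ‖ζ‖ = 1) : jouk_s12 ζ = (ζ.re : ℂ) := by
  have : ζ⁻¹ = (starRingEnd ℂ) ζ := Complex.inv_eq_conj h
  rw [jouk_s12, this, Complex.add_conj]
  simp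

lemma exists_jouk (w : ℂ) (hw : ∀ t ∈ Icc (-1:ℝ) 1, w ≠ (t : ℂ)) :
    ∃ u : ℂ, u ≠ 0 ∧ ‖u‖ < 1 ∧ w = jouk_s12 u := by
  obtain ⟨s, hs⟩ := IsAlgClosed.exists_pow_nat_eq (w ^ 2 - 1) (n := 2) (by norm_num)
  have h1 : (w + s) * (w - s) = 1 := by linear_combination -hs
  have key : ∀ a b : ℂ, a * b = 1 → a + b = 2 * w → ‖a‖ ≤ 1 →
      ∃ u : ℂ, u ≠ 0 ∧ ‖u‖ < 1 ∧ w = jouk_s12 u := by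
    intro a b hab hs ha
    have ha0 : a ≠ 0 := left_ne_zero_of_mul_eq_one hab
    have hb : b = a⁻¹ := eq_inv_of_mul_eq_one_right hab
    have hwa : w = jouk_s12 a := by
      rw [jouk_s12, ← hb, hs]; ring
    refine ⟨a, ha0, lt_of_le_of_ne ha ?_, hwa⟩
    intro h
    have hre := Complex.abs_re_le_norm a
    rw [h] at hre
    exact hw a.re (abs_le.mp hre) (by rw [hwa, jouk_of_norm_one h])
  rcases le_total ‖w + s‖ 1 with h | h
  · exact key _ _ h1 (by ring) h
  · refine key (w - s) (w + s) (by rw [mul_comm]; exact h1) (by ring) ?_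
    have h2 : ‖w + s‖ * ‖w - s‖ = 1 := by rw [← norm_mul, h1, norm_one]
    nlinarith [norm_nonneg (w - s)]

lemma kernel_eq {u ζ : ℂ} (hu : u ≠ 0) (hu1 : ‖u‖ < 1) (hζ : ‖ζ‖ = 1) :
    wt ζ * (1 / (jouk_s12 ζ - jouk_s12 u)) =
      (ζ - u)⁻¹ • (u * (ζ ^ 2 - 1) * (Complex.I * ζ - 2) / (1 - u * ζ)) := by
  have hζ0 : ζ ≠ 0 := by rintro rfl; simp at hζ
  have h1 : ζ - u ≠ 0 := by
    intro h; rw [sub_eq_zero] at h; subst h; linarith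
  have h2 : 1 - u * ζ ≠ 0 := by
    intro h
    have : u * ζ = 1 := by linear_combination -h
    have := congrArg norm this
    rw [norm_mul, hζ, norm_one] at this; linarith
  have h3 : jouk_s12 ζ - jouk_s12 u = -((ζ - u) * (1 - u * ζ)) / (2 * ζ * u) := by
    unfold jouk_s12; field_simp; ring
  rw [h3, wt, smul_eq_mul]
  field_simp

lemma kernel_integral {u : ℂ} (hu : u ≠ 0) (hu1 : ‖u‖ < 1) :
    CircleIntegrable (fun ζ => wt ζ * (1 / (jouk_s12 ζ - jouk_s12 u))) 0 1 ∧
    (∮ ζ in C(0, 1), wt ζ * (1 / (jouk_s12 ζ - jouk_s12 u))) =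
      2 * (Real.pi : ℂ) * (u ^ 2 + 2 * Complex.I * u) := by
  have hne : ∀ ζ ∈ Metric.closedBall (0:ℂ) 1, 1 - u * ζ ≠ 0 := by
    intro ζ hζ h
    have hζ' : ‖ζ‖ ≤ 1 := by simpa using hζ
    have : u * ζ = 1 := by linear_combination -h
    have := congrArg norm this
    rw [norm_mul, norm_one] at this
    nlinarith [norm_nonneg u, norm_nonneg ζ]
  have hd : DifferentiableOn ℂ
      (fun ζ => u * (ζ ^ 2 - 1) * (Complex.I * ζ - 2) / (1 - u * ζ)) (Metric.closedBall 0 1) := by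
    apply DifferentiableOn.div
    · fun_prop
    · fun_prop
    · exact hne
  have heq : EqOn (fun ζ => wt ζ * (1 / (jouk_s12 ζ - jouk_s12 u)))
      (fun ζ => (ζ - u)⁻¹ • (u * (ζ ^ 2 - 1) * (Complex.I * ζ - 2) / (1 - u * ζ)))
      (Metric.sphere 0 1) := by
    intro ζ hζ
    exact kernel_eq hu hu1 (by simpa using hζ)
  constructor
  · apply ContinuousOn.circleIntegrable zero_le_one
    refine ContinuousOn.congr ?_ heq
    refine ContinuousOn.fun_smul ?_ ?_
    · apply ContinuousOn.inv₀ (by fun_prop)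
      intro ζ hζ h
      have hζ' : ‖ζ‖ = 1 := by simpa using hζ
      rw [sub_eq_zero] at h; subst h; linarith
    · exact hd.continuousOn.mono Metric.sphere_subset_closedBall
  · rw [circleIntegral.integral_congr zero_le_one heq,
      hd.circleIntegral_sub_inv_smul (by simpa using hu1)]
    have : 1 - u * u ≠ 0 := hne u (by simpa using hu1.le)
    rw [smul_eq_mul]
    have hI := Complex.I_sq
    have h2 : u * (u ^ 2 - 1) * (Complex.I * u - 2) / (1 - u * u) = - u * (Complex.I * u - 2) := by
      rw [div_eq_iff this]; ring
    rw [h2]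
    linear_combination (-2 * (Real.pi : ℂ) * u ^ 2) * hI

lemma root_bound (w : ℂ) (hw : ∀ t ∈ Icc (-1:ℝ) 1, w ≠ (t : ℂ)) :
    CircleIntegrable (fun ζ => wt ζ * (1 / (jouk_s12 ζ - w))) 0 1 ∧
    -(6 * Real.pi) ≤ (∮ ζ in C(0, 1), wt ζ * (1 / (jouk_s12 ζ - w))).re ∧
    (0 ≤ w.im → ∀ ρ : ℝ, 0 < ρ → ρ * (2 * ‖w‖ + 1) ≤ 1 →
      2 * Real.pi * ρ ^ 2 ≤ (∮ ζ in C(0, 1), wt ζ * (1 / (jouk_s12 ζ - w))).re) := by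
  obtain ⟨u, hu, hu1, rfl⟩ := exists_jouk w hw
  obtain ⟨h1, h2⟩ := kernel_integral hu hu1
  refine ⟨h1, ?_⟩
  rw [h2]
  have hre : (2 * (Real.pi : ℂ) * (u ^ 2 + 2 * Complex.I * u)).re =
      2 * Real.pi * (u.re ^ 2 - u.im ^ 2 - 2 * u.im) := by
    simp [pow_two]
    ring
  have hn : u.re ^ 2 + u.im ^ 2 = ‖u‖ ^ 2 := by
    rw [Complex.sq_norm, Complex.normSq_apply]; ring
  have him := abs_le.mp (Complex.abs_im_le_norm u)
  have hpos : 0 < ‖u‖ := norm_pos_iff.mpr hu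
  rw [hre]
  constructor
  · have h3 : -3 ≤ u.re ^ 2 - u.im ^ 2 - 2 * u.im := by
      nlinarith [sq_nonneg u.re]
    have := mul_le_mul_of_nonneg_left h3 (by positivity : 0 ≤ 2 * Real.pi)
    linarith
  · intro hi ρ hρ hρw
    have huim : u.im ≤ 0 := by
      have : (jouk_s12 u).im = (u.im - u.im / ‖u‖ ^ 2) / 2 := by
        rw [jouk_s12]
        simp [Complex.inv_im, Complex.normSq_eq_norm_sq]
        ring
      rw [this] at hi
      by_contra hc
      push Not at hc
      have : u.im < u.im / ‖u‖ ^ 2 := by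
        rw [lt_div_iff₀ (by positivity)]
        have : ‖u‖ ^ 2 < 1 := by nlinarith
        nlinarith
      linarith
    have hρu : ρ ≤ ‖u‖ := by
      have h3 : ‖u‖⁻¹ ≤ 2 * ‖jouk_s12 u‖ + ‖u‖ := by
        have : u⁻¹ = 2 * jouk_s12 u - u := by rw [jouk_s12]; ring
        rw [← norm_inv, this]
        refine (norm_sub_le _ _).trans ?_
        simp
      have h4 : 1 ≤ (2 * ‖jouk_s12 u‖ + 1) * ‖u‖ := by
        have := mul_le_mul_of_nonneg_right h3 hpos.le
        rw [inv_mul_cancel₀ hpos.ne'] at this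
        nlinarith
      have h5 : 0 < 2 * ‖jouk_s12 u‖ + 1 := by positivity
      by_contra hc
      push Not at hc
      nlinarith
    have : ρ ^ 2 ≤ u.re ^ 2 - u.im ^ 2 - 2 * u.im := by nlinarith
    have := mul_le_mul_of_nonneg_left this (by positivity : 0 ≤ 2 * Real.pi)
    linarith

lemma sum_bound (p : ℂ → Prop) (g : ℂ → ℂ) (ρ : ℝ) (hρ : 0 < ρ) (s : Multiset ℂ)
    (hs : ∀ z ∈ s, ∀ t ∈ Icc (-1:ℝ) 1, g z ≠ (t : ℂ))
    (hp : ∀ z, p z → 0 ≤ (g z).im ∧ ρ * (2 * ‖g z‖ + 1) ≤ 1) :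
    CircleIntegrable (fun ζ => wt ζ * (s.map fun z => 1 / (jouk_s12 ζ - g z)).sum) 0 1 ∧
    (s.countP p : ℝ) * (2 * Real.pi * ρ ^ 2) -
      (s.countP (fun z => ¬ p z) : ℝ) * (6 * Real.pi) ≤
      (∮ ζ in C(0, 1), wt ζ * (s.map fun z => 1 / (jouk_s12 ζ - g z)).sum).re := by
  induction s using Multiset.induction_on with
  | empty => simp [circleIntegral]
  | cons a s ih =>
    obtain ⟨i1, i2⟩ := ih (fun z hz => hs z (Multiset.mem_cons_of_mem hz))
    obtain ⟨j1, j2, j3⟩ := root_bound (g a) (hs a (Multiset.mem_cons_self a s))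
    simp only [Multiset.map_cons, Multiset.sum_cons, mul_add]
    refine ⟨j1.add i1, ?_⟩
    rw [circleIntegral.integral_add j1 i1, Complex.add_re]
    by_cases ha : p a
    · rw [Multiset.countP_cons_of_pos _ ha, Multiset.countP_cons_of_neg _ (by simpa using ha)]
      have := j3 (hp a ha).1 ρ hρ (hp a ha).2
      push_cast
      linarith
    · rw [Multiset.countP_cons_of_neg _ ha,
        Multiset.countP_cons_of_pos (p := fun z => ¬ p z) _ ha]
      push_cast
      linarith

/-- Core: on an interval `[c-l,c+l]` the logarithmic derivative cannot be uniformly small. -/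
lemma core_s12 (P : ℂ[X]) (c l A : ℝ) (hl : 0 < l) (hl1 : l ≤ 1/2) (hc : |c| ≤ 1)
    (hP : ∀ t ∈ Icc (-1:ℝ) 1, P.eval ((c + l * t : ℝ) : ℂ) ≠ 0 ∧
      ‖P.derivative.eval ((c + l * t : ℝ) : ℂ)‖ ≤ A * ‖P.eval ((c + l * t : ℝ) : ℂ)‖) :
    (P.roots.countP (fun z => ‖z‖ ≤ 1 ∧ 0 ≤ z.im) : ℝ) * (l ^ 2 / 81 * 4) -
      (P.roots.countP (fun z => ¬ (‖z‖ ≤ 1 ∧ 0 ≤ z.im)) : ℝ) * 3 ≤ 3 * l * A := by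
  have hlC : (l : ℂ) ≠ 0 := by exact_mod_cast hl.ne'
  obtain ⟨-, h⟩ := sum_bound (fun z => ‖z‖ ≤ 1 ∧ 0 ≤ z.im) (fun z => (z - c) / l) (2 * l / 9)
    (by positivity) P.roots (by
      intro z hz t ht heq
      have : z = ((c + l * t : ℝ) : ℂ) := by
        rw [div_eq_iff hlC] at heq
        push_cast; linear_combination heq
      rw [this] at hz
      exact (hP t ht).1 (isRoot_of_mem_roots hz)) (by
      rintro z ⟨hz1, hz2⟩
      constructor
      · rw [Complex.div_ofReal_im]
        apply div_nonneg _ hl.le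
        simpa using hz2
      · rw [norm_div, Complex.norm_real, Real.norm_of_nonneg hl.le]
        have : ‖z - c‖ ≤ 2 := by
          refine (norm_sub_le _ _).trans ?_
          rw [Complex.norm_real, Real.norm_eq_abs]; linarith
        have h2 : 2 * l / 9 * (2 * (‖z - c‖ / l) + 1) = 4 / 9 * ‖z - c‖ + 2 * l / 9 := by
          field_simp; ring
        rw [h2]; linarith)
  have hb : ‖∮ ζ in C(0, 1), wt ζ * (P.roots.map fun z => 1 / (jouk_s12 ζ - (z - c) / l)).sum‖ ≤
      2 * Real.pi * 1 * (3 * (l * A)) := by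
    apply circleIntegral.norm_integral_le_of_norm_le_const zero_le_one
    intro ζ hζ
    have hζ' : ‖ζ‖ = 1 := by simpa using hζ
    have hre := Complex.abs_re_le_norm ζ
    rw [hζ'] at hre
    obtain ⟨h1, h2⟩ := hP ζ.re (abs_le.mp hre)
    have hsum : (P.roots.map fun z => 1 / (jouk_s12 ζ - (z - c) / l)).sum =
        l * (P.derivative.eval ((c + l * ζ.re : ℝ) : ℂ) / P.eval ((c + l * ζ.re : ℝ) : ℂ)) := by
      rw [(IsAlgClosed.splits P).eval_derivative_div_eval_of_ne_zero h1,
        ← Multiset.sum_map_mul_left]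
      congr 1
      apply Multiset.map_congr rfl
      intro z _
      rw [jouk_of_norm_one hζ']
      have : (ζ.re : ℂ) - (z - c) / l = (((c + l * ζ.re : ℝ) : ℂ) - z) / l := by
        push_cast; field_simp; ring
      rw [this, one_div_div, mul_one_div]
    rw [hsum, norm_mul, norm_mul, norm_div, Complex.norm_real, Real.norm_of_nonneg hl.le]
    have hw : ‖wt ζ‖ ≤ 3 := by
      rw [wt, norm_div, norm_neg, norm_mul, norm_mul, hζ']
      have e1 : ‖ζ ^ 2 - 1‖ ≤ 2 := by
        refine (norm_sub_le _ _).trans ?_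
        rw [norm_pow, hζ']; norm_num
      have e2 : ‖Complex.I * ζ - 2‖ ≤ 3 := by
        refine (norm_sub_le _ _).trans ?_
        rw [norm_mul, hζ']; norm_num
      have : ‖ζ ^ 2 - 1‖ * ‖Complex.I * ζ - 2‖ ≤ 2 * 3 :=
        mul_le_mul e1 e2 (norm_nonneg _) (by norm_num)
      simp only [RCLike.norm_ofNat, mul_one]
      linarith
    have hq : ‖P.derivative.eval ((c + l * ζ.re : ℝ) : ℂ)‖ / ‖P.eval ((c + l * ζ.re : ℝ) : ℂ)‖
        ≤ A := by
      rw [div_le_iff₀ (norm_pos_iff.mpr h1)]; exact h2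
    apply mul_le_mul hw _ (by positivity) (by norm_num)
    exact mul_le_mul_of_nonneg_left hq hl.le
  have h3 := h.trans ((Complex.re_le_norm _).trans hb)
  have hpi := Real.pi_pos
  have h4 : 2 * Real.pi * ((P.roots.countP (fun z => ‖z‖ ≤ 1 ∧ 0 ≤ z.im) : ℝ) * (l ^ 2 / 81 * 4) -
      (P.roots.countP (fun z => ¬ (‖z‖ ≤ 1 ∧ 0 ≤ z.im)) : ℝ) * 3) ≤
      2 * Real.pi * (3 * l * A) := by
    refine le_trans (le_of_eq ?_) (h3.trans (le_of_eq ?_)) <;> ring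
  exact le_of_mul_le_mul_left h4 (by positivity)

set_option maxHeartbeats 2000000 in
theorem lower_bound_small_k (n k : ℕ) (hk : 1 ≤ k) (hkn : 163000 * k ≤ n)
    (P : Polynomial ℂ) (hdeg : P.natDegree ≤ n)
    (hroots : n - k ≤ P.roots.countP (fun z => ‖z‖ ≤ 1 ∧ 0 ≤ z.im)) :
    (1/202 : ℝ) * Real.sqrt (((n : ℝ) - (k : ℝ)) / (8 * (k : ℝ))) *
        (⨆ x : Icc (-1:ℝ) 1, ‖P.eval ((x : ℝ) : ℂ)‖) ≤
      ⨆ x : Icc (-1:ℝ) 1, ‖(Polynomial.derivative P).eval ((x : ℝ) : ℂ)‖ := by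
  have hcont : ∀ Q : ℂ[X], Continuous (fun x : ℝ => ‖Q.eval ((x : ℝ) : ℂ)‖) := by
    intro Q
    exact (Q.continuous.comp Complex.continuous_ofReal).norm
  have hle : ∀ Q : ℂ[X], ∀ t ∈ Icc (-1:ℝ) 1, ‖Q.eval (t : ℂ)‖ ≤
      ⨆ x : Icc (-1:ℝ) 1, ‖Q.eval ((x : ℝ) : ℂ)‖ := by
    intro Q t ht
    have hbdd : BddAbove (range fun x : Icc (-1:ℝ) 1 => ‖Q.eval ((x : ℝ) : ℂ)‖) :=
      (isCompact_range ((hcont Q).comp continuous_subtype_val)).bddAbove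
    exact le_ciSup hbdd (⟨t, ht⟩ : Icc (-1:ℝ) 1)
  obtain ⟨x0, hx0, hmax⟩ := isCompact_Icc.exists_isMaxOn (⟨0, by norm_num⟩ : (Icc (-1:ℝ) 1).Nonempty)
    (hcont P).continuousOn
  have : Nonempty (Icc (-1:ℝ) 1) := ⟨⟨0, by norm_num⟩⟩
  have hM : (⨆ x : Icc (-1:ℝ) 1, ‖P.eval ((x : ℝ) : ℂ)‖) = ‖P.eval (x0 : ℂ)‖ :=
    le_antisymm (ciSup_le fun x => hmax x.2) (hle P x0 hx0)
  rw [hM]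
  set D := ⨆ x : Icc (-1:ℝ) 1, ‖(Polynomial.derivative P).eval ((x : ℝ) : ℂ)‖ with hD
  set M := ‖P.eval (x0 : ℂ)‖ with hMdef
  have hD0 : 0 ≤ D := (norm_nonneg _).trans (hle P.derivative x0 hx0)
  by_contra hcon
  push Not at hcon
  have hkR : (1:ℝ) ≤ k := by exact_mod_cast hk
  have hknR : (163000:ℝ) * k ≤ n := by exact_mod_cast hkn
  set m : ℝ := (n:ℝ) - k with hm
  have hmk : 162999 * (k:ℝ) ≤ m := by rw [hm]; linarith
  set ε : ℝ := 1/202 * Real.sqrt (m / (8 * k)) with hε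
  have hmpos : 0 < m := by linarith
  have hεpos : 0 < ε := by positivity
  have hε2 : ε ^ 2 = m / (8 * k) / 40804 := by
    rw [hε, mul_pow, Real.sq_sqrt (by positivity)]; ring
  have hMpos : 0 < M := by
    by_contra h
    have : ε * M ≤ 0 := mul_nonpos_of_nonneg_of_nonpos hεpos.le (not_lt.mp h)
    linarith
  -- choose the half-length
  set l : ℝ := Real.sqrt (100 * k / m) with hl
  have hl2 : l ^ 2 = 100 * k / m := Real.sq_sqrt (by positivity)
  have hlpos : 0 < l := by positivity
  have hlsmall : l ≤ 1/2 := by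
    have : l ^ 2 ≤ (1/2) ^ 2 := by
      rw [hl2, div_le_iff₀ hmpos]; linarith
    exact le_of_sq_le_sq this (by norm_num)
  have hεl : ε * l ≤ 1/4 := by
    have : (ε * l) ^ 2 ≤ (1/4) ^ 2 := by
      rw [mul_pow, hε2, hl2]
      have : m / (8 * k) / 40804 * (100 * k / m) = 100 / (8 * 40804) := by
        field_simp
      rw [this]; norm_num
    exact le_of_sq_le_sq this (by norm_num)
  obtain ⟨c, hc, hcl⟩ : ∃ c : ℝ, |c| ≤ 1 ∧ ∀ t ∈ Icc (-1:ℝ) 1,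
      c + l * t ∈ Icc (-1:ℝ) 1 ∧ |c + l * t - x0| ≤ 2 * l := by
    rcases le_total x0 0 with h | h
    · refine ⟨x0 + l, abs_le.mpr ⟨by linarith [hx0.1], by linarith⟩, fun t ht => ⟨⟨?_, ?_⟩, ?_⟩⟩
      · nlinarith [hx0.1, ht.1]
      · nlinarith [ht.2]
      · rw [abs_le]; constructor <;> nlinarith [ht.1, ht.2]
    · refine ⟨x0 - l, abs_le.mpr ⟨by linarith, by linarith [hx0.2]⟩, fun t ht => ⟨⟨?_, ?_⟩, ?_⟩⟩
      · nlinarith [ht.1]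
      · nlinarith [hx0.2, ht.2]
      · rw [abs_le]; constructor <;> nlinarith [ht.1, ht.2]
  have hmv : ∀ x ∈ Icc (-1:ℝ) 1, ‖P.eval (x : ℂ) - P.eval (x0 : ℂ)‖ ≤ D * |x - x0| := by
    intro x hx
    have := (convex_Icc (-1:ℝ) 1).norm_image_sub_le_of_norm_hasDerivWithin_le
      (f := fun y : ℝ => P.eval (y : ℂ)) (f' := fun y : ℝ => P.derivative.eval (y : ℂ)) (C := D)
      (fun y _ => ((P.hasDerivAt (y : ℂ)).comp_ofReal).hasDerivWithinAt)
      (fun y hy => hle P.derivative y hy) hx0 hx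
    simpa [Real.norm_eq_abs] using this
  have hhalf : ∀ t ∈ Icc (-1:ℝ) 1, M / 2 ≤ ‖P.eval ((c + l * t : ℝ) : ℂ)‖ := by
    intro t ht
    obtain ⟨a, b⟩ := hcl t ht
    have h1 := hmv _ a
    have h2 : M ≤ ‖P.eval ((c + l * t : ℝ) : ℂ)‖ +
        ‖P.eval ((c + l * t : ℝ) : ℂ) - P.eval (x0 : ℂ)‖ := by
      rw [norm_sub_rev, hMdef]
      have := norm_add_le (P.eval ((c + l * t : ℝ) : ℂ))
        (P.eval (x0 : ℂ) - P.eval ((c + l * t : ℝ) : ℂ))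
      simpa using this
    have h3 : D * |c + l * t - x0| ≤ (ε * M) * (2 * l) :=
      mul_le_mul hcon.le b (abs_nonneg _) (by positivity)
    have h4 : (ε * l) * M ≤ 1/4 * M := mul_le_mul_of_nonneg_right hεl hMpos.le
    nlinarith
  have hcore := core_s12 P c l (2 * ε) hlpos hlsmall hc (by
    intro t ht
    have h := hhalf t ht
    refine ⟨norm_pos_iff.mp (by linarith), ?_⟩
    have h1 := hle P.derivative _ (hcl t ht).1
    nlinarith)
  have hcard := Multiset.card_eq_countP_add_countP (fun z : ℂ => ‖z‖ ≤ 1 ∧ 0 ≤ z.im) P.roots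
  have hcard2 := P.card_roots'
  set N := P.roots.countP (fun z => ‖z‖ ≤ 1 ∧ 0 ≤ z.im)
  set B := P.roots.countP (fun z => ¬ (‖z‖ ≤ 1 ∧ 0 ≤ z.im))
  have hB : B ≤ k := by omega
  have hN : n ≤ N + k := by omega
  have hBR : (B:ℝ) ≤ k := by exact_mod_cast hB
  have hNR : m ≤ N := by
    have : (n:ℝ) ≤ N + k := by exact_mod_cast hN
    rw [hm]; linarith
  have h1 : m * (l ^ 2 / 81 * 4) ≤ N * (l ^ 2 / 81 * 4) :=
    mul_le_mul_of_nonneg_right hNR (by positivity)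
  have h2 : m * (l ^ 2 / 81 * 4) = 400 / 81 * k := by
    have : m * (100 * k / m / 81 * 4) = 400 / 81 * k * (m / m) := by ring
    rw [hl2, this, div_self hmpos.ne', mul_one]
  have h3 : 3 * l * (2 * ε) = 6 * (ε * l) := by ring
  rw [h3] at hcore
  rw [h2] at h1
  clear_value N B l ε m
  linarith
end

section
/- Let 1 ≤ k ≤ n. Then ‖P'‖_{[-1,1]} ≥ max{1/2, (1/808)·((n-k)/k)^{1/2}}·‖P‖_{[-1,1]} for every P ∈ 𝓕_{n,k}^c having at least one zero in [-1,1]. -/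
open Polynomial Set
open scoped Classical

/-- Joukowski parametrization of the complement of `[-1,1]`. -/
theorem jouk_exists (z : ℂ) (hz : ∀ t ∈ Icc (-1:ℝ) 1, z ≠ (t:ℂ)) :
    ∃ w : ℂ, w ≠ 0 ∧ ‖w‖ < 1 ∧ z = (w + w⁻¹) / 2 := by
  obtain ⟨d, hd⟩ := IsAlgClosed.exists_pow_nat_eq (z^2 - 1) (n := 2) (by norm_num)
  have hmul : (z - d) * (z + d) = 1 := by linear_combination -hd
  have h1 : z - d ≠ 0 := left_ne_zero_of_mul_eq_one hmul
  have h2 : z + d ≠ 0 := right_ne_zero_of_mul_eq_one hmul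
  have hinv : (z - d)⁻¹ = z + d := inv_eq_of_mul_eq_one_right hmul
  have hinv2 : (z + d)⁻¹ = z - d := by rw [← hinv, inv_inv]
  have hn : ‖z - d‖ * ‖z + d‖ = 1 := by rw [← norm_mul, hmul, norm_one]
  rcases lt_trichotomy ‖z - d‖ 1 with h | h | h
  · exact ⟨z - d, h1, h, by rw [hinv]; ring⟩
  · exfalso
    have hc : (z - d)⁻¹ = (starRingEnd ℂ) (z - d) := by
      rw [Complex.inv_def, Complex.normSq_eq_norm_sq, h]; simp
    have hz2 : z = (((z - d).re : ℝ) : ℂ) := by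
      have h3 := Complex.add_conj (z - d)
      rw [← hc, hinv] at h3
      push_cast at h3
      linear_combination h3 / 2
    have hle := Complex.abs_re_le_norm (z - d)
    rw [h] at hle
    exact hz (z - d).re (abs_le.mp hle) hz2
  · refine ⟨z + d, h2, ?_, by rw [hinv2]; ring⟩
    by_contra hcon
    push Not at hcon
    nlinarith

theorem cos_exp (φ : ℝ) : ((Real.cos φ : ℝ) : ℂ) =
    (Complex.exp (φ * Complex.I) + (Complex.exp (φ * Complex.I))⁻¹) / 2 := by
  rw [← Complex.exp_neg, Complex.ofReal_cos, Complex.cos]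
  ring_nf

theorem base_integral (w : ℂ) (hw0 : w ≠ 0) (hw : ‖w‖ < 1) :
    ∫ φ in (0:ℝ)..(2 * Real.pi), ((w + w⁻¹) / 2 - ((Real.cos φ : ℝ) : ℂ))⁻¹
      = 2 * Real.pi * (2 * w / (1 - w ^ 2)) := by
  have hne : ∀ s : ℂ, ‖s‖ ≤ 1 → 1 - w * s ≠ 0 := by
    intro s hs h
    have : ‖w * s‖ = 1 := by rw [← sub_eq_zero.mp h, norm_one]
    rw [norm_mul] at this
    nlinarith [norm_nonneg w, norm_nonneg s]
  have hd : DifferentiableOn ℂ (fun s : ℂ => 2 * w / (1 - w * s)) (Metric.closedBall 0 1) := by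
    intro s hs
    have := hne s (by simpa using hs)
    apply DifferentiableAt.differentiableWithinAt
    fun_prop (disch := assumption)
  have hc := hd.circleIntegral_sub_inv_smul (w := w) (by simpa using hw)
  rw [circleIntegral] at hc
  have key : ∀ φ : ℝ, deriv (circleMap 0 1) φ • ((circleMap 0 1 φ - w)⁻¹ • (2 * w / (1 - w * circleMap 0 1 φ)))
      = Complex.I * ((w + w⁻¹) / 2 - ((Real.cos φ : ℝ) : ℂ))⁻¹ := by
    intro φ
    rw [deriv_circleMap, cos_exp]
    simp only [circleMap_zero, Complex.ofReal_one, one_mul, smul_eq_mul]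
    have hs1 : ‖Complex.exp (φ * Complex.I)‖ = 1 := Complex.norm_exp_ofReal_mul_I φ
    have hs0 : Complex.exp (φ * Complex.I) ≠ 0 := Complex.exp_ne_zero _
    generalize Complex.exp (φ * Complex.I) = s at *
    have h1 := hne s hs1.le
    have h2 : s - w ≠ 0 := by
      intro h
      rw [sub_eq_zero.mp h] at hs1
      linarith
    have h3 : (w + w⁻¹) / 2 - (s + s⁻¹) / 2 = (s - w) * (1 - w * s) / (2 * w * s) := by
      field_simp
      ring
    rw [h3]
    field_simp
  simp_rw [key] at hc
  rw [intervalIntegral.integral_const_mul] at hc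
  have hI := Complex.I_ne_zero
  apply mul_left_cancel₀ hI
  rw [hc, smul_eq_mul]
  ring

theorem root_integral (w : ℂ) (hw0 : w ≠ 0) (hw : ‖w‖ < 1)
    (hcont : Continuous fun φ : ℝ => ((w + w⁻¹) / 2 - ((Real.cos φ : ℝ) : ℂ))⁻¹)
    (hz : ∀ φ : ℝ, (w + w⁻¹) / 2 - ((Real.cos φ : ℝ) : ℂ) ≠ 0) :
    ∫ φ in (0:ℝ)..(2 * Real.pi), (2 * ((Real.sin φ : ℝ) : ℂ)^2 * (((Real.cos φ : ℝ) : ℂ) + Complex.I))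
        * ((w + w⁻¹) / 2 - ((Real.cos φ : ℝ) : ℂ))⁻¹
      = 2 * Real.pi * (w ^ 2 + 2 * Complex.I * w) := by
  have hb := base_integral w hw0 hw
  have hzdef : ∃ z : ℂ, z = (w + w⁻¹) / 2 := ⟨_, rfl⟩
  obtain ⟨z, hzd⟩ := hzdef
  rw [← hzd] at hcont hb
  simp only [← hzd] at hz ⊢
  have hfun : ∀ φ : ℝ, (2 * ((Real.sin φ : ℝ) : ℂ)^2 * (((Real.cos φ : ℝ) : ℂ) + Complex.I))
        * (z - ((Real.cos φ : ℝ) : ℂ))⁻¹ =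
      2 * (1 - z^2) * (z + Complex.I) * (z - ((Real.cos φ : ℝ) : ℂ))⁻¹
        + (((2 * Real.cos φ ^ 2 : ℝ) : ℂ) + (2 * (z + Complex.I)) * ((Real.cos φ : ℝ) : ℂ)
          + 2 * (z^2 + Complex.I * z - 1)) := by
    intro φ
    have h := hz φ
    have hs : ((Real.sin φ : ℝ) : ℂ)^2 = 1 - ((Real.cos φ : ℝ) : ℂ)^2 := by
      rw [← Complex.ofReal_pow, Real.sin_sq]
      push_cast; ring
    rw [hs]
    push_cast at h ⊢
    field_simp
    ring
  simp_rw [hfun]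
  have i1 : IntervalIntegrable (fun φ : ℝ => 2 * (1 - z^2) * (z + Complex.I) * (z - ((Real.cos φ : ℝ) : ℂ))⁻¹) MeasureTheory.volume 0 (2 * Real.pi) :=
    (continuous_const.mul hcont).intervalIntegrable _ _
  have i2 : IntervalIntegrable (fun φ : ℝ => ((2 * Real.cos φ ^ 2 : ℝ) : ℂ)) MeasureTheory.volume 0 (2 * Real.pi) :=
    (by fun_prop : Continuous _).intervalIntegrable _ _
  have i3 : IntervalIntegrable (fun φ : ℝ => (2 * (z + Complex.I)) * ((Real.cos φ : ℝ) : ℂ)) MeasureTheory.volume 0 (2 * Real.pi) :=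
    (by fun_prop : Continuous _).intervalIntegrable _ _
  have i4 : IntervalIntegrable (fun φ : ℝ => 2 * (z^2 + Complex.I * z - 1)) MeasureTheory.volume 0 (2 * Real.pi) :=
    (by fun_prop : Continuous _).intervalIntegrable _ _
  rw [intervalIntegral.integral_add i1 ((i2.add i3).add i4), intervalIntegral.integral_add (i2.add i3) i4,
    intervalIntegral.integral_add i2 i3, intervalIntegral.integral_const_mul,
    intervalIntegral.integral_const_mul, intervalIntegral.integral_ofReal, intervalIntegral.integral_ofReal,
    hb, intervalIntegral.integral_const, intervalIntegral.integral_const_mul, integral_cos, integral_cos_sq]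
  have hw2 : 1 - w^2 ≠ 0 := by
    intro h
    have : ‖w ^ 2‖ = 1 := by rw [← sub_eq_zero.mp h, norm_one]
    rw [norm_pow] at this
    nlinarith [norm_nonneg w]
  simp only [Real.sin_two_pi, Real.sin_zero]
  have hzz : 1 - z^2 = - (1 - w^2)^2 / (4 * w^2) := by
    rw [hzd]; field_simp; ring
  rw [hzz]
  push_cast
  rw [hzd]
  simp only [Complex.real_smul]
  push_cast
  field_simp
  ring

theorem root_re_bound (w : ℂ) (hw0 : w ≠ 0) (hw : ‖w‖ < 1) :
    -3 ≤ (w ^ 2 + 2 * Complex.I * w).re ∧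
    (0 ≤ ((w + w⁻¹) / 2).im → ‖w‖^2 ≤ (w ^ 2 + 2 * Complex.I * w).re) := by
  have hre : (w ^ 2 + 2 * Complex.I * w).re = w.re^2 - w.im^2 - 2 * w.im := by
    simp [pow_two]
    ring
  have hnorm : ‖w‖^2 = w.re^2 + w.im^2 := by
    rw [Complex.sq_norm, Complex.normSq_apply]; ring
  have hpos : 0 < ‖w‖ := norm_pos_iff.mpr hw0
  have him := abs_le.mp ((Complex.abs_im_le_norm w).trans hw.le)
  rw [hre]
  refine ⟨by nlinarith [sq_nonneg w.re], fun h => ?_⟩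
  have h2 : ((w + w⁻¹) / 2).im = (w.im - w.im / ‖w‖^2) / 2 := by
    rw [show (w + w⁻¹) / 2 = (((1/2 : ℝ)) : ℂ) * (w + w⁻¹) by push_cast; ring, Complex.im_ofReal_mul, Complex.add_im, Complex.inv_im, Complex.normSq_eq_norm_sq]; ring
  rw [h2] at h
  have h3 : w.im ≤ 0 := by
    by_contra hc
    push Not at hc
    have : w.im < w.im / ‖w‖^2 := by
      rw [lt_div_iff₀ (by positivity)]
      nlinarith [mul_pos hc hpos]
    linarith
  rw [hnorm]
  nlinarith

theorem one_root (z : ℂ) (c r : ℝ) (hr : 0 < r) (hr1 : r ≤ 1) (hc : |c| ≤ 1)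
    (hz : ∀ t ∈ Icc (-1:ℝ) 1, z ≠ ((c + r * t : ℝ) : ℂ)) :
    (Continuous fun φ : ℝ => 1 / (((c + r * Real.cos φ : ℝ) : ℂ) - z)) ∧
    2 * Real.pi * (if ‖z‖ ≤ 1 ∧ 0 ≤ z.im then r^2 / 25 else -3) ≤
      (∫ φ in (0:ℝ)..(2 * Real.pi),
        (2 * ((Real.sin φ : ℝ) : ℂ)^2 * (((Real.cos φ : ℝ) : ℂ) + Complex.I))
        * (-(r : ℂ) * (1 / (((c + r * Real.cos φ : ℝ) : ℂ) - z)))).re := by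
  have hrC : (r : ℂ) ≠ 0 := by exact_mod_cast hr.ne'
  have hz' : ∀ t ∈ Icc (-1:ℝ) 1, (z - c) / r ≠ (t:ℂ) := by
    intro t ht h
    apply hz t ht
    rw [div_eq_iff hrC] at h
    push_cast
    linear_combination h
  have hcos : ∀ φ : ℝ, Real.cos φ ∈ Icc (-1:ℝ) 1 := fun φ => Real.cos_mem_Icc φ
  obtain ⟨w, hw0, hw, hzw⟩ := jouk_exists _ hz'
  have hne : ∀ φ : ℝ, (w + w⁻¹) / 2 - ((Real.cos φ : ℝ) : ℂ) ≠ 0 := by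
    intro φ
    rw [← hzw]
    exact sub_ne_zero.mpr (hz' _ (hcos φ))
  have hcont : Continuous fun φ : ℝ => ((w + w⁻¹) / 2 - ((Real.cos φ : ℝ) : ℂ))⁻¹ := by
    apply Continuous.inv₀ _ hne
    fun_prop
  have hne2 : ∀ φ : ℝ, ((c + r * Real.cos φ : ℝ) : ℂ) - z ≠ 0 := by
    intro φ
    exact sub_ne_zero.mpr (hz _ (hcos φ)).symm
  constructor
  · apply Continuous.div continuous_const _ hne2
    fun_prop
  have hint := root_integral w hw0 hw hcont hne
  have heq : ∀ φ : ℝ, -(r : ℂ) * (1 / (((c + r * Real.cos φ : ℝ) : ℂ) - z)) =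
      ((w + w⁻¹) / 2 - ((Real.cos φ : ℝ) : ℂ))⁻¹ := by
    intro φ
    have h1 := hne φ
    have h2 := hne2 φ
    rw [← hzw] at h1 ⊢
    have h3 : (z - c) / r - ((Real.cos φ : ℝ) : ℂ) = -((((c + r * Real.cos φ : ℝ) : ℂ) - z) / r) := by
      push_cast
      field_simp
      ring
    rw [h3, inv_neg, inv_div]
    ring
  simp_rw [heq]
  rw [hint]
  have hre : (2 * (Real.pi : ℂ) * (w ^ 2 + 2 * Complex.I * w)).re =
      2 * Real.pi * (w ^ 2 + 2 * Complex.I * w).re := by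
    rw [show (2 * (Real.pi : ℂ)) = ((2 * Real.pi : ℝ) : ℂ) by push_cast; ring, Complex.re_ofReal_mul]
  rw [hre]
  apply mul_le_mul_of_nonneg_left _ Real.two_pi_pos.le
  obtain ⟨b1, b2⟩ := root_re_bound w hw0 hw
  split_ifs with hD
  · refine le_trans ?_ (b2 ?_)
    · have hpos : 0 < ‖w‖ := norm_pos_iff.mpr hw0
      have hzn : ‖(z - c) / r‖ ≤ 2 / r := by
        rw [norm_div, Complex.norm_real, Real.norm_of_nonneg hr.le]
        apply div_le_div_of_nonneg_right _ hr.le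
        calc ‖z - c‖ ≤ ‖z‖ + ‖(c:ℂ)‖ := norm_sub_le _ _
          _ ≤ 1 + 1 := by
            apply add_le_add hD.1
            rw [Complex.norm_real]; exact hc
          _ = 2 := by norm_num
      have hwi : w⁻¹ = 2 * ((z - c) / r) - w := by rw [hzw]; ring
      have h5 : ‖w‖⁻¹ ≤ 5 / r := by
        rw [← norm_inv, hwi]
        calc _ ≤ ‖2 * ((z - c) / r)‖ + ‖w‖ := norm_sub_le _ _
          _ ≤ 2 * (2 / r) + 1 := by
            rw [norm_mul, Complex.norm_ofNat]
            linarith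
          _ ≤ 2 * (2 / r) + 1 / r := by
            have : 1 ≤ 1 / r := by rw [le_div_iff₀ hr]; linarith
            linarith
          _ = 5 / r := by ring
      have h6 : r / 5 ≤ ‖w‖ := by
        rw [inv_le_comm₀ hpos (by positivity), inv_div] at h5
        exact h5
      calc r^2/25 = (r/5)^2 := by ring
        _ ≤ _ := by gcongr
    · rw [← hzw, Complex.div_ofReal_im]
      apply div_nonneg _ hr.le
      simpa using hD.2
  · exact b1

theorem all_roots (c r : ℝ) (hr : 0 < r) (hr1 : r ≤ 1) (hc : |c| ≤ 1) (s : Multiset ℂ)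
    (hz : ∀ z ∈ s, ∀ t ∈ Icc (-1:ℝ) 1, z ≠ ((c + r * t : ℝ) : ℂ)) :
    (Continuous fun φ : ℝ => (s.map fun z => 1 / (((c + r * Real.cos φ : ℝ) : ℂ) - z)).sum) ∧
    2 * Real.pi * (r^2 / 25 * (s.countP (fun z => ‖z‖ ≤ 1 ∧ 0 ≤ z.im) : ℝ)
        - 3 * (s.countP (fun z => ¬ (‖z‖ ≤ 1 ∧ 0 ≤ z.im)) : ℝ)) ≤
      (∫ φ in (0:ℝ)..(2 * Real.pi),
        (2 * ((Real.sin φ : ℝ) : ℂ)^2 * (((Real.cos φ : ℝ) : ℂ) + Complex.I))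
        * (-(r : ℂ) * (s.map fun z => 1 / (((c + r * Real.cos φ : ℝ) : ℂ) - z)).sum)).re := by
  induction s using Multiset.induction_on with
  | empty => simp [continuous_const]
  | cons z s ih =>
    obtain ⟨c1, b1⟩ := one_root z c r hr hr1 hc (hz z (Multiset.mem_cons_self z s))
    obtain ⟨c2, b2⟩ := ih (fun y hy => hz y (Multiset.mem_cons_of_mem hy))
    simp only [Multiset.map_cons, Multiset.sum_cons]
    refine ⟨c1.add c2, ?_⟩
    have hdist : ∀ W x y : ℂ, W * (-(r:ℂ) * (x + y)) = W * (-(r:ℂ) * x) + W * (-(r:ℂ) * y) := by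
      intro W x y
      ring
    simp_rw [hdist]
    rw [intervalIntegral.integral_add, Complex.add_re]
    · refine le_trans (le_of_eq ?_) (add_le_add b1 b2)
      rw [Multiset.countP_cons, Multiset.countP_cons]
      by_cases h : ‖z‖ ≤ 1 ∧ 0 ≤ z.im
      · simp only [h, and_self, not_true_eq_false, if_true, if_false]
        push_cast
        ring
      · simp only [h, not_false_eq_true, if_true, if_false]
        push_cast
        ring
    · apply Continuous.intervalIntegrable
      fun_prop
    · apply Continuous.intervalIntegrable
      fun_prop

theorem lower_bound_corollary (n k : ℕ) (hk : 1 ≤ k) (hkn : k ≤ n)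
    (P : Polynomial ℂ) (hdeg : P.natDegree ≤ n)
    (hroots : n - k ≤ P.roots.countP (fun z => ‖z‖ ≤ 1 ∧ 0 ≤ z.im))
    (a : ℝ) (ha : a ∈ Icc (-1:ℝ) 1) (haz : P.eval (a : ℂ) = 0) :
    max (1/2 : ℝ) ((1/808) * Real.sqrt (((n : ℝ) - (k : ℝ)) / (k : ℝ))) *
        (⨆ x : Icc (-1:ℝ) 1, ‖P.eval ((x : ℝ) : ℂ)‖) ≤
      ⨆ x : Icc (-1:ℝ) 1, ‖(Polynomial.derivative P).eval ((x : ℝ) : ℂ)‖ := by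
  have hcP : ∀ Q : Polynomial ℂ, Continuous fun x : Icc (-1:ℝ) 1 => ‖Q.eval ((x : ℝ) : ℂ)‖ := by
    intro Q
    have := Q.continuous
    fun_prop
  have hbdd : ∀ Q : Polynomial ℂ, BddAbove (range fun x : Icc (-1:ℝ) 1 => ‖Q.eval ((x : ℝ) : ℂ)‖) :=
    fun Q => (isCompact_range (hcP Q)).bddAbove
  obtain ⟨M, hM⟩ : ∃ M, M = ⨆ x : Icc (-1:ℝ) 1, ‖(Polynomial.derivative P).eval ((x : ℝ) : ℂ)‖ := ⟨_, rfl⟩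
  have hMle : ∀ x ∈ Icc (-1:ℝ) 1, ‖(Polynomial.derivative P).eval (x : ℂ)‖ ≤ M := by
    intro x hx
    rw [hM]
    exact le_ciSup (hbdd (derivative P)) ⟨x, hx⟩
  obtain ⟨b, hb, hbS⟩ : ∃ b ∈ Icc (-1:ℝ) 1, (⨆ x : Icc (-1:ℝ) 1, ‖P.eval ((x : ℝ) : ℂ)‖) = ‖P.eval (b : ℂ)‖ := by
    have : Nonempty (Icc (-1:ℝ) 1) := ⟨⟨a, ha⟩⟩
    obtain ⟨b, -, hb⟩ := isCompact_univ.exists_isMaxOn univ_nonempty (hcP P).continuousOn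
    refine ⟨b, b.2, le_antisymm (ciSup_le fun x => hb (mem_univ x)) (le_ciSup (hbdd P) b)⟩
  rw [← hM, hbS]
  have hlip : ∀ x ∈ Icc (-1:ℝ) 1, ∀ y ∈ Icc (-1:ℝ) 1,
      ‖P.eval (x:ℂ) - P.eval (y:ℂ)‖ ≤ M * |x - y| := by
    intro x hx y hy
    have := (convex_Icc (-1:ℝ) 1).norm_image_sub_le_of_norm_hasDerivWithin_le
      (f := fun x : ℝ => P.eval (x:ℂ)) (f' := fun x : ℝ => (derivative P).eval (x:ℂ)) (C := M)
      (fun x _ => ((P.hasDerivAt (x:ℂ)).comp_ofReal).hasDerivWithinAt) hMle hy hx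
    simpa [Real.norm_eq_abs] using this
  have hM0 : 0 ≤ M := (norm_nonneg _).trans (hMle a ha)
  obtain ⟨S, hS⟩ : ∃ S, S = ‖P.eval (b:ℂ)‖ := ⟨_, rfl⟩
  rw [← hS]
  have hS0 : 0 ≤ S := by rw [hS]; exact norm_nonneg _
  have hhalf : 1 / 2 * S ≤ M := by
    have h := hlip b hb a ha
    rw [haz, sub_zero, ← hS] at h
    have : |b - a| ≤ 2 := by
      rw [abs_le]; constructor <;> linarith [hb.1, hb.2, ha.1, ha.2]
    nlinarith
  rw [max_mul_of_nonneg _ _ hS0]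
  refine max_le hhalf ?_
  rcases hS0.eq_or_lt with h0 | hSpos
  · rw [← h0, mul_zero]; exact hM0
  have hMpos : 0 < M := by linarith
  obtain ⟨r, hr⟩ : ∃ r, r = S / (4 * M) := ⟨_, rfl⟩
  have hrpos : 0 < r := by rw [hr]; positivity
  have hrM : r * (4 * M) = S := by rw [hr]; field_simp
  have hr2 : r ≤ 1 / 2 := by
    rw [hr, div_le_iff₀ (by positivity)]; linarith
  obtain ⟨c, hc1, hcI⟩ : ∃ c : ℝ, |c| ≤ 1 ∧ ∀ t ∈ Icc (-1:ℝ) 1,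
      c + r * t ∈ Icc (-1:ℝ) 1 ∧ |c + r * t - b| ≤ 2 * r := by
    obtain ⟨hb1, hb2⟩ := hb
    rcases le_total b 0 with h | h
    · refine ⟨b + r, abs_le.mpr ⟨by linarith, by linarith⟩, fun t ht => ?_⟩
      obtain ⟨ht1, ht2⟩ := ht
      have : -r ≤ r * t := by nlinarith
      have : r * t ≤ r := by nlinarith
      exact ⟨⟨by linarith, by linarith⟩, abs_le.mpr ⟨by linarith, by linarith⟩⟩
    · refine ⟨b - r, abs_le.mpr ⟨by linarith, by linarith⟩, fun t ht => ?_⟩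
      obtain ⟨ht1, ht2⟩ := ht
      have : -r ≤ r * t := by nlinarith
      have : r * t ≤ r := by nlinarith
      exact ⟨⟨by linarith, by linarith⟩, abs_le.mpr ⟨by linarith, by linarith⟩⟩
  have hlow : ∀ t ∈ Icc (-1:ℝ) 1, S / 2 ≤ ‖P.eval ((c + r * t : ℝ) : ℂ)‖ := by
    intro t ht
    obtain ⟨h1, h2⟩ := hcI t ht
    have h3 := hlip b hb _ h1
    have h4 := norm_sub_norm_le (P.eval (b:ℂ)) (P.eval ((c + r * t : ℝ) : ℂ))
    rw [← hS] at h4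
    rw [abs_sub_comm] at h2
    nlinarith [mul_le_mul_of_nonneg_left h2 hM0]
  have hne : ∀ t ∈ Icc (-1:ℝ) 1, P.eval ((c + r * t : ℝ) : ℂ) ≠ 0 := by
    intro t ht h
    have := hlow t ht
    rw [h, norm_zero] at this
    linarith
  obtain ⟨-, hb2⟩ := all_roots c r hrpos (by linarith) hc1 P.roots (by
    intro z hz t ht h
    apply hne t ht
    rw [← h]
    exact (Polynomial.mem_roots'.mp hz).2)
  have hup := (Complex.re_le_norm _).trans (intervalIntegral.norm_integral_le_of_norm_le_const
    (a := 0) (b := 2 * Real.pi) (C := 2)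
    (f := fun φ : ℝ => (2 * ((Real.sin φ : ℝ) : ℂ)^2 * (((Real.cos φ : ℝ) : ℂ) + Complex.I))
        * (-(r : ℂ) * (P.roots.map fun z => 1 / (((c + r * Real.cos φ : ℝ) : ℂ) - z)).sum)) (by
    intro φ _
    have ht := Real.cos_mem_Icc φ
    rw [← (IsAlgClosed.splits P).eval_derivative_div_eval_of_ne_zero (hne _ ht)]
    have e1 : ‖(2 * ((Real.sin φ : ℝ) : ℂ)^2 * (((Real.cos φ : ℝ) : ℂ) + Complex.I))‖ ≤ 4 := by
      rw [norm_mul, norm_mul, norm_pow, Complex.norm_real, Complex.norm_ofNat, Real.norm_eq_abs, sq_abs]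
      have h1 : ‖((Real.cos φ : ℝ) : ℂ) + Complex.I‖ ≤ 2 := by
        refine (norm_add_le _ _).trans ?_
        rw [Complex.norm_I, Complex.norm_real, Real.norm_eq_abs]
        linarith [Real.abs_cos_le_one φ]
      have h2 := Real.sin_sq_le_one φ
      nlinarith [norm_nonneg (((Real.cos φ : ℝ) : ℂ) + Complex.I), sq_nonneg (Real.sin φ)]
    have e2 : ‖-(r : ℂ) * ((derivative P).eval ((c + r * Real.cos φ : ℝ) : ℂ) / P.eval ((c + r * Real.cos φ : ℝ) : ℂ))‖ ≤ 1 / 2 := by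
      rw [norm_mul, norm_neg, Complex.norm_real, Real.norm_of_nonneg hrpos.le, norm_div, ← mul_div_assoc,
        div_le_iff₀ (norm_pos_iff.mpr (hne _ ht))]
      have h1 := hlow _ ht
      have h2 := hMle _ (hcI _ ht).1
      nlinarith [mul_le_mul_of_nonneg_left h2 hrpos.le]
    rw [norm_mul]
    calc _ ≤ 4 * (1/2 : ℝ) := mul_le_mul e1 e2 (norm_nonneg _) (by norm_num)
      _ = 2 := by norm_num))
  have hfin := hb2.trans hup
  rw [sub_zero, abs_of_pos Real.two_pi_pos, mul_comm 2 (2 * Real.pi)] at hfin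
  have hfin2 := le_of_mul_le_mul_left hfin Real.two_pi_pos
  have hcard := Multiset.card_eq_countP_add_countP (fun z : ℂ => ‖z‖ ≤ 1 ∧ 0 ≤ z.im) P.roots
  have hcard2 := (P.card_roots').trans hdeg
  obtain ⟨m1, hm1⟩ : ∃ m, m = P.roots.countP (fun z : ℂ => ‖z‖ ≤ 1 ∧ 0 ≤ z.im) := ⟨_, rfl⟩
  obtain ⟨m2, hm2⟩ : ∃ m, m = P.roots.countP (fun z : ℂ => ¬ (‖z‖ ≤ 1 ∧ 0 ≤ z.im)) := ⟨_, rfl⟩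
  rw [← hm1, ← hm2] at hfin2 hcard
  rw [← hm1] at hroots
  have hm2k : (m2 : ℝ) ≤ k := by
    have : m2 ≤ k := by omega
    exact_mod_cast this
  have hm1k : (n : ℝ) - k ≤ m1 := by
    have : n ≤ m1 + k := by omega
    have : (n : ℝ) ≤ m1 + k := by exact_mod_cast this
    linarith
  have hk1 : (1 : ℝ) ≤ k := by exact_mod_cast hk
  have h7 : r^2 * ((n : ℝ) - k) ≤ 125 * k := by
    nlinarith [mul_le_mul_of_nonneg_left hm1k (sq_nonneg r)]
  have h8 : S^2 * ((n : ℝ) - k) ≤ 2000 * k * M^2 := by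
    rw [← hrM]
    nlinarith [mul_le_mul_of_nonneg_left h7 (sq_nonneg M)]
  have h9 : Real.sqrt (((n : ℝ) - k) / k) ≤ 808 * M / S := by
    apply Real.sqrt_le_iff.mpr
    refine ⟨by positivity, ?_⟩
    rw [div_le_iff₀ (by linarith), div_pow, div_mul_eq_mul_div, le_div_iff₀ (by positivity)]
    nlinarith [mul_nonneg (by linarith : (0:ℝ) ≤ k) (sq_nonneg M)]
  rw [le_div_iff₀ hSpos] at h9
  linarith
end

section
/- There is an absolute constant c₂ > 0 such that for every 1 ≤ k ≤ n/2 there exists a nonzero real polynomial P of the form P(x) = (x²-1)^{n-k}·R(x) with R of degree at most 2k, satisfying ‖P'‖_{[-1,1]} ≤ c₂·(n/k)^{1/2}·‖P‖_{[-1,1]}. -/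
open Polynomial Set

lemma aux_sum_le (t N : ℕ) (y : ℝ) (h0 : 0 ≤ y) (h1 : y ≤ 1) :
    ∑ j ∈ Finset.range N, ((j + t).choose t : ℝ) * y ^ j * (1 - y) ^ (t + 1) ≤ 1 := by
  rcases eq_or_lt_of_le h1 with rfl | h
  · simp
  · have hs := hasSum_choose_mul_geometric_of_norm_lt_one (𝕜 := ℝ) t (r := y)
      (by rw [Real.norm_eq_abs, abs_of_nonneg h0]; exact h)
    have h2 := sum_le_hasSum (Finset.range N) (fun i _ => by positivity) hs
    rw [← Finset.sum_mul]
    have h3 : 0 < (1 - y) ^ (t + 1) := pow_pos (by linarith) _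
    calc _ ≤ 1 / (1 - y) ^ (t + 1) * (1 - y) ^ (t + 1) :=
          mul_le_mul_of_nonneg_right h2 h3.le
      _ = 1 := by field_simp

/-- Upward recursion. -/
lemma aux_up (j t : ℕ) :
    ((t : ℝ) + 1) * ((j + (t + 1)).choose (t + 1) : ℝ) = (j + t + 1) * ((j + t).choose t : ℝ) := by
  have := Nat.add_one_mul_choose_eq (j + t) t
  have h : ((j : ℝ) + t + 1) * ((j + t).choose t : ℝ)
      = ((j + t + 1).choose (t + 1) : ℝ) * (t + 1) := by exact_mod_cast this
  rw [h, ← add_assoc]; ring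

lemma aux_side (j s : ℕ) :
    ((j : ℝ) + 1) * ((j + 1 + s).choose s : ℝ) = (s + 1) * ((j + (s + 1)).choose (s + 1) : ℝ) := by
  have := Nat.choose_succ_right_eq (j + (s + 1)) s
  rw [show j + (s + 1) - s = j + 1 by omega] at this
  have h : ((j + (s + 1)).choose (s + 1) : ℝ) * (s + 1) = ((j + (s + 1)).choose s : ℝ) * (j + 1) := by
    exact_mod_cast this
  rw [show j + 1 + s = j + (s + 1) by omega]
  linarith

lemma aux_A (s k : ℕ) (hk : 1 ≤ k) (hks : k ≤ s + 1) (y : ℝ) (h0 : 0 ≤ y) (h1 : y ≤ 1) :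
    ∑ j ∈ Finset.range (k + 1), ((j + (s + 1)).choose (s + 1) : ℝ) * y ^ j * (1 - y) ^ s ≤ 6 := by
  rcases s with _ | t
  · obtain rfl : k = 1 := by omega
    simp [Finset.sum_range_succ]
    linarith
  · have hy : 0 ≤ 1 - y := by linarith
    calc _ ≤ ∑ j ∈ Finset.range (k + 1), 6 * (((j + t).choose t : ℝ) * y ^ j * (1 - y) ^ (t + 1)) := by
          apply Finset.sum_le_sum
          intro j hj
          have hj' : j ≤ t + 2 := by have := Finset.mem_range.1 hj; omega
          have hjr : (j : ℝ) ≤ t + 2 := by exact_mod_cast hj'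
          have e1 := aux_up j t
          have e2 := aux_up j (t + 1)
          push_cast at e2
          have ht : (0 : ℝ) ≤ t := by positivity
          have hj0 : (0 : ℝ) ≤ j := by positivity
          set a : ℝ := ((j + t).choose t : ℝ)
          set b : ℝ := ((j + (t + 1)).choose (t + 1) : ℝ)
          set c : ℝ := ((j + (t + 1 + 1)).choose (t + 1 + 1) : ℝ)
          have ha : 0 ≤ a := by positivity
          have hb : 0 ≤ b := by positivity
          have hba : b ≤ 3 * a := by
            have : (t + 1) * b ≤ (t + 1) * (3 * a) := by
              rw [e1]; nlinarith
            exact le_of_mul_le_mul_left this (by positivity)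
          have hcb : c ≤ 2 * b := by
            have : ((t : ℝ) + 1 + 1) * c ≤ (t + 1 + 1) * (2 * b) := by
              rw [e2]; nlinarith
            exact le_of_mul_le_mul_left this (by positivity)
          have : c ≤ 6 * a := by linarith
          calc c * y ^ j * (1 - y) ^ (t + 1) ≤ (6 * a) * y ^ j * (1 - y) ^ (t + 1) := by gcongr
            _ = _ := by ring
      _ ≤ 6 := by
          rw [← Finset.mul_sum]
          have := aux_sum_le t (k + 1) y h0 h1
          linarith

lemma aux_B (s k : ℕ) (hk : 1 ≤ k) (hks : k ≤ s + 1) (y : ℝ) (h0 : 0 ≤ y) (h1 : y ≤ 1) :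
    ((s : ℝ) + 1) * y *
      ∑ j ∈ Finset.range (k + 1), ((j + (s + 1)).choose (s + 1) : ℝ) * y ^ j * (1 - y) ^ s
      ≤ 8 * k := by
  rcases s with _ | t
  · obtain rfl : k = 1 := by omega
    simp [Finset.sum_range_succ]
    nlinarith
  · have hy : 0 ≤ 1 - y := by linarith
    have hkr : (1 : ℝ) ≤ k := by exact_mod_cast hk
    calc _ ≤ ∑ j ∈ Finset.range (k + 1), 4 * ((k : ℝ) + 1) *
            (((j + 1 + t).choose t : ℝ) * y ^ (j + 1) * (1 - y) ^ (t + 1)) := by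
          rw [Finset.mul_sum]
          apply Finset.sum_le_sum
          intro j hj
          have hj1 : j ≤ k := by have := Finset.mem_range.1 hj; omega
          have hj' : j ≤ t + 2 := by omega
          have hjr : (j : ℝ) ≤ t + 2 := by exact_mod_cast hj'
          have hjk : (j : ℝ) ≤ k := by exact_mod_cast hj1
          have e1 := aux_up (j + 1) t
          have e2 := aux_side j (t + 1)
          push_cast at e1 e2 ⊢
          have ht : (0 : ℝ) ≤ t := by positivity
          set a : ℝ := ((j + 1 + t).choose t : ℝ)
          set b : ℝ := ((j + 1 + (t + 1)).choose (t + 1) : ℝ)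
          set c : ℝ := ((j + (t + 1 + 1)).choose (t + 1 + 1) : ℝ)
          have ha : 0 ≤ a := by positivity
          have hb : 0 ≤ b := by positivity
          have hba : b ≤ 4 * a := by
            have : (t + 1) * b ≤ (t + 1) * (4 * a) := by
              rw [e1]; nlinarith
            exact le_of_mul_le_mul_left this (by positivity)
          have hcb : ((t : ℝ) + 1 + 1) * c ≤ 4 * (k + 1) * a := by
            rw [← e2]; nlinarith
          calc ((t : ℝ) + 1 + 1) * y * (c * y ^ j * (1 - y) ^ (t + 1))
              = (((t : ℝ) + 1 + 1) * c) * (y ^ (j + 1) * (1 - y) ^ (t + 1)) := by ring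
            _ ≤ (4 * (k + 1) * a) * (y ^ (j + 1) * (1 - y) ^ (t + 1)) := by gcongr
            _ = _ := by ring
      _ ≤ 8 * k := by
          rw [← Finset.mul_sum]
          have h := aux_sum_le t (k + 1 + 1) y h0 h1
          rw [Finset.sum_range_succ'] at h
          have h5 : 0 ≤ ((0 + t).choose t : ℝ) * y ^ 0 * (1 - y) ^ (t + 1) := by positivity
          have h6 : ∑ j ∈ Finset.range (k + 1),
            (((j + 1 + t).choose t : ℝ) * y ^ (j + 1) * (1 - y) ^ (t + 1)) ≤ 1 := by linarith
          calc _ ≤ 4 * ((k : ℝ) + 1) * 1 := by gcongr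
            _ ≤ _ := by linarith

lemma aux_deriv (s j : ℕ) :
    derivative ((X ^ 2 - 1) ^ (s + 1) *
      ∑ i ∈ Finset.range (j + 1), C ((i + s).choose s : ℝ) * X ^ (2 * i) : ℝ[X]) =
    2 * X * C ((s : ℝ) + 1) *
      (C ((j + (s + 1)).choose (s + 1) : ℝ) * X ^ (2 * j) * (X ^ 2 - 1) ^ s) := by
  induction j with
  | zero =>
    have h2 : (C 2 : ℝ[X]) = 2 := rfl
    simp [derivative_pow, h2]
    ring
  | succ j ih =>
    rw [Finset.sum_range_succ, mul_add, derivative_add, ih]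
    have e1 := aux_side j s
    have e2 : ((j + 1 + (s + 1)).choose (s + 1) : ℝ) =
        ((j + 1 + s).choose s : ℝ) + ((j + (s + 1)).choose (s + 1) : ℝ) := by
      have := Nat.choose_succ_succ (j + 1 + s) s
      rw [show j + (s + 1) = j + 1 + s by omega]
      exact_mod_cast this
    rw [e2]
    generalize ((j + 1 + s).choose s : ℝ) = b at *
    generalize ((j + (s + 1)).choose (s + 1) : ℝ) = c at *
    have e3 : (C ((j : ℝ) + 1) * C b : ℝ[X]) = C ((s : ℝ) + 1) * C c := by
      rw [← C_mul, ← C_mul, e1]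
    simp only [derivative_mul, derivative_pow, derivative_sub, derivative_X, derivative_one,
      derivative_C, map_add, map_one, map_natCast, Nat.add_sub_cancel] at e3 ⊢
    rw [show 2 * (j + 1) - 1 = 2 * j + 1 by omega]
    push_cast
    linear_combination (2 * X ^ (2 * j + 1) * (X ^ 2 - 1) ^ (s + 1)) * e3

theorem upper_bound_construction :
    ∃ c₂ : ℝ, 0 < c₂ ∧ ∀ n k : ℕ, 1 ≤ k → 2 * k ≤ n →
      ∃ R : Polynomial ℝ, R.natDegree ≤ 2 * k ∧
        ((X ^ 2 - 1) ^ (n - k) * R : Polynomial ℝ) ≠ 0 ∧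
        (⨆ x : Icc (-1:ℝ) 1,
            |(Polynomial.derivative ((X ^ 2 - 1) ^ (n - k) * R : Polynomial ℝ)).eval (x : ℝ)|) ≤
          c₂ * Real.sqrt ((n : ℝ) / (k : ℝ)) *
            ⨆ x : Icc (-1:ℝ) 1, |((X ^ 2 - 1) ^ (n - k) * R : Polynomial ℝ).eval (x : ℝ)| := by
  refine ⟨14, by norm_num, ?_⟩
  intro n k hk hn
  obtain ⟨s, hs⟩ : ∃ s, n - k = s + 1 := ⟨n - k - 1, by omega⟩
  rw [hs]
  have hks : k ≤ s + 1 := by omega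
  let R : ℝ[X] := ∑ j ∈ Finset.range (k + 1),
    ∑ i ∈ Finset.range (j + 1), C ((i + s).choose s : ℝ) * X ^ (2 * i)
  have hR0 : R.eval 0 = k + 1 := by
    simp [R, eval_finsetSum, Finset.sum_range_succ']
  have hP0 : |((X ^ 2 - 1) ^ (s + 1) * R : ℝ[X]).eval 0| = k + 1 := by
    rw [eval_mul, hR0, abs_mul]
    have h : |(k : ℝ) + 1| = k + 1 := abs_of_nonneg (by positivity)
    simp [h]
  have hkr : (1 : ℝ) ≤ k := by exact_mod_cast hk
  have hder : ∀ x : ℝ, (derivative ((X ^ 2 - 1) ^ (s + 1) * R : ℝ[X])).eval x =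
      2 * x * (s + 1) * ∑ j ∈ Finset.range (k + 1),
        ((j + (s + 1)).choose (s + 1) : ℝ) * (x ^ 2) ^ j * (x ^ 2 - 1) ^ s := by
    intro x
    simp only [R]
    rw [Finset.mul_sum, derivative_sum, Finset.sum_congr rfl (fun j _ => aux_deriv s j),
      ← Finset.mul_sum]
    simp [eval_finsetSum, pow_mul]
  refine ⟨R, ?_, ?_, ?_⟩
  · apply natDegree_sum_le_of_forall_le
    intro j hj
    apply natDegree_sum_le_of_forall_le
    intro i hi
    refine (natDegree_C_mul_X_pow_le _ _).trans ?_
    have := Finset.mem_range.1 hj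
    have := Finset.mem_range.1 hi
    omega
  · intro h
    rw [h] at hP0
    simp at hP0
    linarith
  · have hsup : (k : ℝ) + 1 ≤ ⨆ x : Icc (-1:ℝ) 1, |((X ^ 2 - 1) ^ (s + 1) * R : ℝ[X]).eval (x : ℝ)| := by
      have hb : BddAbove (range fun x : Icc (-1:ℝ) 1 =>
          |((X ^ 2 - 1) ^ (s + 1) * R : ℝ[X]).eval (x : ℝ)|) := by
        apply IsCompact.bddAbove
        apply isCompact_range
        fun_prop
      have := le_ciSup hb ⟨0, by norm_num, by norm_num⟩
      simp only [hP0] at this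
      exact this
    have : Nonempty (Icc (-1:ℝ) 1) := ⟨⟨0, by norm_num, by norm_num⟩⟩
    apply ciSup_le
    rintro ⟨x, hx1, hx2⟩
    simp only
    refine le_trans ?_ (mul_le_mul_of_nonneg_left hsup (by positivity))
    rw [hder]
    have hy0 : 0 ≤ x ^ 2 := sq_nonneg x
    have hy1 : x ^ 2 ≤ 1 := by nlinarith
    have hA := aux_A s k hk hks _ hy0 hy1
    have hB := aux_B s k hk hks _ hy0 hy1
    set S := ∑ j ∈ Finset.range (k + 1),
      ((j + (s + 1)).choose (s + 1) : ℝ) * (x ^ 2) ^ j * (1 - x ^ 2) ^ s with hS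
    have hSn : 0 ≤ S := by
      have : 0 ≤ 1 - x ^ 2 := by linarith
      rw [hS]; positivity
    have habs : |∑ j ∈ Finset.range (k + 1),
        ((j + (s + 1)).choose (s + 1) : ℝ) * (x ^ 2) ^ j * (x ^ 2 - 1) ^ s| = S := by
      rw [← abs_of_nonneg hSn, hS, ← Finset.sum_mul, ← Finset.sum_mul, abs_mul, abs_mul, abs_pow,
        abs_pow, abs_sub_comm]
    have hnr : (s : ℝ) + 1 ≤ n := by
      have : s + 1 ≤ n := by omega
      exact_mod_cast this
    rw [abs_mul, habs]
    have hs0 : (0 : ℝ) ≤ s := by positivity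
    have hmain : (|2 * x * (s + 1)| * S) ^ 2 ≤ (14 * Real.sqrt (n / k) * (k + 1)) ^ 2 := by
      rw [mul_pow, sq_abs, mul_pow (14 * _), mul_pow 14, Real.sq_sqrt (by positivity)]
      have h1 : (((s : ℝ) + 1) * x ^ 2 * S) * S ≤ 8 * k * 6 :=
        mul_le_mul hB hA hSn (by positivity)
      calc (2 * x * ((s : ℝ) + 1)) ^ 2 * S ^ 2 = 4 * ((s : ℝ) + 1) * ((((s : ℝ) + 1) * x ^ 2 * S) * S) := by ring
        _ ≤ 4 * (n : ℝ) * (8 * (k : ℝ) * 6) := by gcongr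
        _ = 192 * ((n : ℝ) / k) * (k : ℝ) ^ 2 := by field_simp; ring
        _ ≤ 14 ^ 2 * ((n : ℝ) / k) * ((k : ℝ) + 1) ^ 2 := by gcongr <;> norm_num
    exact (sq_le_sq₀ (by positivity) (by positivity)).1 hmain
end

section
/- Let P = Q·R where Q is a polynomial of degree n-k with all zeros in D⁺ and R is a complex polynomial of degree at most k, 1 ≤ k < n. Set δ := (2k/(n-k))^{1/2}. Then for every x ∈ [-1,1] outside a set of Lebesgue measure at most (70e + 8√2)·δ, one has |P'(x)/P(x)| ≥ ((n-k)k/2)^{1/2}. -/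
open Polynomial Set MeasureTheory

lemma aux_circle (h : ℂ → ℂ) (hd : DifferentiableOn ℂ h (Metric.ball 0 1))
    (hpos : ∀ z ∈ Metric.ball (0:ℂ) 1, 0 ≤ (h z).re) (E : Set ℝ) (hE : E ⊆ Ioc 0 (2 * Real.pi))
    (hlim : ∀ θ ∈ E, ∃ L : ℂ, 1 / 2 ≤ L.re ∧ Filter.Tendsto
      (fun n : ℕ => h (circleMap 0 (1 - 1 / ((n:ℝ) + 1)) θ)) Filter.atTop (nhds L)) :
    volume E ≤ ENNReal.ofReal (4 * Real.pi * (h 0).re) := by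
  set r : ℕ → ℝ := fun n => 1 - 1 / ((n:ℝ) + 1) with hr
  have hr0 : ∀ n, 0 ≤ r n := by
    intro n
    have : 1 / ((n:ℝ) + 1) ≤ 1 := by
      rw [div_le_one (by positivity)]; linarith [(Nat.cast_nonneg n : (0:ℝ) ≤ n)]
    simp only [hr]; linarith
  have hr1 : ∀ n, r n < 1 := by
    intro n
    have : 0 < 1 / ((n:ℝ) + 1) := by positivity
    simp only [hr]; linarith
  have hmem : ∀ n θ, circleMap 0 (r n) θ ∈ Metric.ball (0:ℂ) 1 := by
    intro n θ
    simp only [Metric.mem_ball, dist_zero_right, norm_circleMap_zero, abs_of_nonneg (hr0 n)]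
    exact hr1 n
  have hcont : ∀ n, Continuous (fun θ => h (circleMap 0 (r n) θ)) := by
    intro n
    exact hd.continuousOn.comp_continuous (continuous_circleMap 0 (r n)) (hmem n)
  have hcontR : ∀ n, Continuous (fun θ => (h (circleMap 0 (r n) θ)).re) :=
    fun n => Complex.continuous_re.comp (hcont n)
  have hint : ∀ n, ∫⁻ θ in Ioc 0 (2 * Real.pi), ENNReal.ofReal (h (circleMap 0 (r n) θ)).re
      = ENNReal.ofReal (2 * Real.pi * (h 0).re) := by
    intro n
    have hav : Real.circleAverage h 0 (r n) = h 0 := by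
      apply DiffContOnCl.circleAverage
      apply DifferentiableOn.diffContOnCl
      apply hd.mono
      rw [abs_of_nonneg (hr0 n)]
      exact (Metric.closure_ball_subset_closedBall).trans (Metric.closedBall_subset_ball (hr1 n))
    rw [← ofReal_integral_eq_lintegral_ofReal]
    · congr 1
      rw [← intervalIntegral.integral_of_le Real.two_pi_pos.le]
      have h1 := congrArg Complex.re hav
      rw [Real.circleAverage_def] at h1
      rw [Complex.smul_re] at h1
      have h2 := Complex.reCLM.intervalIntegral_comp_comm ((hcont n).intervalIntegrable (μ := volume) 0 (2 * Real.pi))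
      simp only [Complex.reCLM_apply] at h2
      rw [h2, ← h1, smul_eq_mul]
      have := Real.pi_pos.ne'
      field_simp
    · exact ((hcontR n).integrableOn_Icc).mono_set Ioc_subset_Icc_self
    · exact Filter.Eventually.of_forall fun θ => hpos _ (hmem n θ)
  set g : ℝ → ENNReal := fun θ => Filter.liminf (fun n => ENNReal.ofReal (h (circleMap 0 (r n) θ)).re) Filter.atTop with hg
  have hfm : ∀ n, Measurable (fun θ => ENNReal.ofReal (h (circleMap 0 (r n) θ)).re) :=
    fun n => (hcontR n).measurable.ennreal_ofReal
  have hgm : Measurable g := Measurable.liminf hfm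
  have hfatou : ∫⁻ θ in Ioc 0 (2 * Real.pi), g θ ≤ ENNReal.ofReal (2 * Real.pi * (h 0).re) := by
    refine (lintegral_liminf_le hfm).trans ?_
    simp only [hint]
    simp
  have hmark := mul_meas_ge_le_lintegral (μ := volume.restrict (Ioc 0 (2 * Real.pi))) hgm (ENNReal.ofReal (1/2))
  have hEs : volume E ≤ (volume.restrict (Ioc 0 (2 * Real.pi))) {x | ENNReal.ofReal (1/2) ≤ g x} := by
    rw [Measure.restrict_apply (measurableSet_le measurable_const hgm)]
    apply measure_mono
    intro θ hθ
    refine ⟨?_, hE hθ⟩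
    obtain ⟨L, hL, ht⟩ := hlim θ hθ
    have ht2 : Filter.Tendsto (fun n => ENNReal.ofReal (h (circleMap 0 (r n) θ)).re) Filter.atTop
        (nhds (ENNReal.ofReal L.re)) :=
      ENNReal.tendsto_ofReal ((Complex.continuous_re.tendsto L).comp ht)
    simp only [mem_ofPred_eq, hg]
    rw [ht2.liminf_eq]
    exact ENNReal.ofReal_le_ofReal hL
  have h3 : ENNReal.ofReal (1/2) * volume E ≤ ENNReal.ofReal (2 * Real.pi * (h 0).re) :=
    (mul_le_mul_right hEs _).trans (hmark.trans hfatou)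
  calc volume E = ENNReal.ofReal 2 * (ENNReal.ofReal (1/2) * volume E) := by
        rw [← mul_assoc, ← ENNReal.ofReal_mul (by norm_num)]; norm_num
    _ ≤ ENNReal.ofReal 2 * ENNReal.ofReal (2 * Real.pi * (h 0).re) := mul_le_mul_right h3 _
    _ = _ := by rw [← ENNReal.ofReal_mul (by norm_num)]; congr 1; ring

lemma aux_lip (A : Set ℝ) (hA : A ⊆ Icc (-1) 1) :
    volume A ≤ volume ((fun x => Real.pi - 2 * Real.arctan x) '' A) := by
  set T : ℝ → ℝ := fun θ => Real.tan ((Real.pi - θ) / 2)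
  set E := (fun x => Real.pi - 2 * Real.arctan x) '' A
  have hTE : T '' E = A := by
    ext y; constructor
    · rintro ⟨_, ⟨x, hx, rfl⟩, rfl⟩
      have : T (Real.pi - 2 * Real.arctan x) = x := by
        simp only [T]; rw [show (Real.pi - (Real.pi - 2 * Real.arctan x)) / 2 = Real.arctan x by ring, Real.tan_arctan]
      simpa [this] using hx
    · intro hy
      refine ⟨_, ⟨y, hy, rfl⟩, ?_⟩
      simp only [T]; rw [show (Real.pi - (Real.pi - 2 * Real.arctan y)) / 2 = Real.arctan y by ring, Real.tan_arctan]
  have hEI : E ⊆ Icc (Real.pi / 2) (3 * Real.pi / 2) := by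
    rintro _ ⟨x, hx, rfl⟩
    have h1 := Real.arctan_strictMono.monotone (hA hx).1
    have h2 := Real.arctan_strictMono.monotone (hA hx).2
    rw [Real.arctan_neg, Real.arctan_one] at h1
    rw [Real.arctan_one] at h2
    constructor <;> dsimp only <;> linarith
  have hcos : ∀ θ ∈ Icc (Real.pi / 2) (3 * Real.pi / 2), Real.sqrt 2 / 2 ≤ Real.cos ((Real.pi - θ)/2) := by
    intro θ hθ
    rw [← Real.cos_pi_div_four, ← Real.cos_abs ((Real.pi - θ)/2)]
    apply Real.cos_le_cos_of_nonneg_of_le_pi (abs_nonneg _) (by linarith [Real.pi_pos])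
    rw [abs_le]; constructor <;> linarith [hθ.1, hθ.2]
  have hcpos : ∀ θ ∈ Icc (Real.pi / 2) (3 * Real.pi / 2), 0 < Real.cos ((Real.pi - θ)/2) :=
    fun θ hθ => lt_of_lt_of_le (by positivity) (hcos θ hθ)
  have hLip : LipschitzOnWith 1 T (Icc (Real.pi / 2) (3 * Real.pi / 2)) := by
    have hder : ∀ θ ∈ Icc (Real.pi / 2) (3 * Real.pi / 2),
        HasDerivAt T (1 / Real.cos ((Real.pi - θ)/2) ^ 2 * (-1 / 2)) θ := by
      intro θ hθ
      have h1 : HasDerivAt (fun θ : ℝ => (Real.pi - θ) / 2) (-1 / 2) θ :=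
        ((hasDerivAt_id θ).const_sub Real.pi).div_const 2
      exact (Real.hasDerivAt_tan (hcpos θ hθ).ne').comp θ h1
    refine (convex_Icc _ _).lipschitzOnWith_of_nnnorm_hasDerivWithin_le
      (fun θ hθ => (hder θ hθ).hasDerivWithinAt) ?_
    intro θ hθ
    rw [← NNReal.coe_le_coe, coe_nnnorm, NNReal.coe_one, norm_mul, Real.norm_of_nonneg (by positivity)]
    have h2 : 1 / 2 ≤ Real.cos ((Real.pi - θ)/2) ^ 2 := by
      have := pow_le_pow_left₀ (by positivity) (hcos θ hθ) 2
      rw [div_pow, Real.sq_sqrt (by norm_num)] at this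
      linarith
    have h3 : 1 / Real.cos ((Real.pi - θ)/2) ^ 2 ≤ 2 := by
      rw [div_le_iff₀ (by have := hcpos θ hθ; positivity)]; linarith
    have h4 : ‖(-1/2 : ℝ)‖ = 1/2 := by norm_num
    rw [h4]; linarith
  have := (hLip.mono hEI).hausdorffMeasure_image_le (d := 1) (by norm_num)
  rw [hTE, hausdorffMeasure_real] at this
  simpa using this

lemma aux_cayley (x : ℝ) : (Complex.exp ((Real.pi - 2 * Real.arctan x : ℝ) * Complex.I)) ≠ 1 ∧
    Complex.I * (Complex.exp ((Real.pi - 2 * Real.arctan x : ℝ) * Complex.I) + 1) /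
      (Complex.exp ((Real.pi - 2 * Real.arctan x : ℝ) * Complex.I) - 1) = x := by
  have hx2 : (x:ℂ) - Complex.I ≠ 0 := by
    intro h; have := congrArg Complex.im h; simp at this
  have he : Complex.exp ((Real.pi - 2 * Real.arctan x : ℝ) * Complex.I) = (x + Complex.I) / (x - Complex.I) := by
    rw [Complex.exp_mul_I, ← Complex.ofReal_cos, ← Complex.ofReal_sin, Real.cos_pi_sub, Real.sin_pi_sub,
      Real.cos_two_mul, Real.sin_two_mul, Real.cos_sq_arctan, Real.sin_arctan, Real.cos_arctan]
    have h1 : (0:ℝ) < 1 + x^2 := by positivity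
    have h2 : 2 * (x / √(1 + x ^ 2)) * (1 / √(1 + x ^ 2)) = 2 * x / (1 + x^2) := by
      have h5 := Real.sq_sqrt h1.le
      have h6 : √(1 + x ^ 2) ≠ 0 := by positivity
      field_simp
      rw [h5]
    rw [h2, eq_div_iff hx2]
    have h3 : (1 + (x:ℂ)^2) ≠ 0 := by exact_mod_cast h1.ne'
    push_cast
    field_simp
    ring_nf
    simp only [Complex.I_sq]
    ring
  rw [he]
  have hI := Complex.I_ne_zero
  constructor
  · rw [ne_eq, div_eq_one_iff_eq hx2]
    intro h
    have := congrArg Complex.im h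
    simp at this; linarith
  · have e1 : ((x:ℂ) + Complex.I) / (x - Complex.I) + 1 = 2 * x / (x - Complex.I) := by
      field_simp; ring
    have e2 : ((x:ℂ) + Complex.I) / (x - Complex.I) - 1 = 2 * Complex.I / (x - Complex.I) := by
      field_simp; ring
    rw [e1, e2]
    field_simp

lemma aux_psi (Λ : ℝ) (hΛ : 0 < Λ) (w : ℂ) (hw : 0 ≤ w.im) :
    w + Complex.I * Λ ≠ 0 ∧ 0 ≤ (w / (w + Complex.I * Λ)).re ∧
    (w / (w + Complex.I * Λ)).re ≤ ‖w‖ / Λ ∧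
    (Λ ≤ ‖w‖ → 1 / 2 ≤ (w / (w + Complex.I * Λ)).re) := by
  have him : (w + Complex.I * Λ).im = w.im + Λ := by simp
  have hre : (w + Complex.I * Λ).re = w.re := by simp
  have hne : w + Complex.I * Λ ≠ 0 := by
    intro h; rw [h] at him; simp at him; linarith
  have hns : Complex.normSq (w + Complex.I * Λ) = w.re ^ 2 + (w.im + Λ) ^ 2 := by
    rw [Complex.normSq_apply, him, hre]; ring
  have hnp : 0 < w.re ^ 2 + (w.im + Λ) ^ 2 := by positivity
  have hval : (w / (w + Complex.I * Λ)).re = (w.re ^ 2 + w.im * (w.im + Λ)) / (w.re ^ 2 + (w.im + Λ) ^ 2) := by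
    rw [Complex.div_re, hns, him, hre]; ring
  have hsq : ‖w‖ ^ 2 = w.re ^ 2 + w.im ^ 2 := by
    rw [← Complex.normSq_eq_norm_sq, Complex.normSq_apply]; ring
  refine ⟨hne, ?_, ?_, ?_⟩
  · rw [hval]; positivity
  · refine (Complex.re_le_norm _).trans ?_
    rw [norm_div]
    apply div_le_div_of_nonneg_left (norm_nonneg _) hΛ
    calc Λ ≤ (w + Complex.I * Λ).im := by rw [him]; linarith
      _ ≤ _ := Complex.im_le_norm _
  · intro h
    rw [hval, le_div_iff₀ hnp]
    nlinarith [pow_le_pow_left₀ hΛ.le h 2]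

lemma aux_half_plane (f : ℂ → ℂ) (hd : ∀ w : ℂ, w.im < 0 → DifferentiableAt ℂ f w)
    (him : ∀ w : ℂ, w.im < 0 → 0 ≤ (f w).im) (Λ : ℝ) (hΛ : 0 < Λ) :
    volume {x : ℝ | x ∈ Icc (-1:ℝ) 1 ∧ ContinuousAt f x ∧ Λ ≤ ‖f x‖} ≤
      ENNReal.ofReal (4 * Real.pi * (‖f (-Complex.I)‖ / Λ)) := by
  set A := {x : ℝ | x ∈ Icc (-1:ℝ) 1 ∧ ContinuousAt f x ∧ Λ ≤ ‖f x‖}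
  refine (aux_lip A (fun x hx => hx.1)).trans ?_
  set c : ℂ → ℂ := fun ζ => Complex.I * (ζ + 1) / (ζ - 1) with hc
  have hne : ∀ ζ ∈ Metric.ball (0:ℂ) 1, ζ - 1 ≠ 0 := by
    intro ζ hζ h
    rw [sub_eq_zero] at h
    simp [h] at hζ
  have hcim : ∀ ζ ∈ Metric.ball (0:ℂ) 1, (c ζ).im < 0 := by
    intro ζ hζ
    have h1 : (0:ℝ) < Complex.normSq (ζ - 1) := Complex.normSq_pos.2 (hne ζ hζ)
    have h2 : Complex.normSq ζ < 1 := by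
      rw [Complex.normSq_eq_norm_sq]
      have : ‖ζ‖ < 1 := by simpa using hζ
      nlinarith [norm_nonneg ζ]
    have h3 : (c ζ).im = (Complex.normSq ζ - 1) / Complex.normSq (ζ - 1) := by
      simp only [hc]
      rw [Complex.div_im, ← sub_div]
      congr 1
      simp [Complex.normSq_apply]
      ring
    rw [h3]
    exact div_neg_of_neg_of_pos (by linarith) h1
  set h : ℂ → ℂ := fun ζ => f (c ζ) / (f (c ζ) + Complex.I * Λ) with hh
  have hc0 : c 0 = -Complex.I := by simp [hc, div_neg]
  have h0 : (h 0).re ≤ ‖f (-Complex.I)‖ / Λ := by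
    simp only [hh, hc0]
    exact (aux_psi Λ hΛ _ (him _ (by simp))).2.2.1
  refine (aux_circle h ?_ ?_ _ ?_ ?_).trans (ENNReal.ofReal_le_ofReal ?_)
  · intro ζ hζ
    apply DifferentiableAt.differentiableWithinAt
    have hcd : DifferentiableAt ℂ c ζ := by
      have h1 := hne ζ hζ
      simp only [hc]
      fun_prop (disch := assumption)
    have hfc : DifferentiableAt ℂ (fun ζ => f (c ζ)) ζ := (hd _ (hcim ζ hζ)).comp ζ hcd
    exact hfc.div (hfc.add_const _) (aux_psi Λ hΛ _ (him _ (hcim ζ hζ))).1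
  · intro ζ hζ
    exact (aux_psi Λ hΛ _ (him _ (hcim ζ hζ))).2.1
  · rintro _ ⟨x, hx, rfl⟩
    have h1 := Real.arctan_lt_pi_div_two x
    have h2 := Real.neg_pi_div_two_lt_arctan x
    constructor <;> dsimp only <;> linarith
  · rintro _ ⟨x, hx, rfl⟩
    obtain ⟨hx1, hxc, hxΛ⟩ := hx
    obtain ⟨e1, e2⟩ := aux_cayley x
    dsimp only
    set θ := Real.pi - 2 * Real.arctan x
    have hcm : Filter.Tendsto (fun n : ℕ => circleMap 0 (1 - 1 / ((n:ℝ) + 1)) θ) Filter.atTop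
        (nhds (Complex.exp (θ * Complex.I))) := by
      have : Filter.Tendsto (fun n : ℕ => (1 - 1 / ((n:ℝ) + 1))) Filter.atTop (nhds (1 - 0)) :=
        tendsto_one_div_add_atTop_nhds_zero_nat.const_sub 1
      have h2 := ((Complex.continuous_ofReal.tendsto _).comp this).mul_const (Complex.exp (θ * Complex.I))
      simpa [circleMap, Function.comp_def] using h2
    have hball : ∀ n : ℕ, circleMap 0 (1 - 1 / ((n:ℝ) + 1)) θ ∈ Metric.ball (0:ℂ) 1 := by
      intro n
      have h1 : 1 / ((n:ℝ) + 1) ≤ 1 := by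
        rw [div_le_one (by positivity)]; linarith [(Nat.cast_nonneg n : (0:ℝ) ≤ n)]
      have h2 : 0 < 1 / ((n:ℝ) + 1) := by positivity
      simp only [Metric.mem_ball, dist_zero_right, norm_circleMap_zero]
      rw [abs_of_nonneg] <;> linarith
    have hcc : ContinuousAt c (Complex.exp (θ * Complex.I)) := by
      have h1 := sub_ne_zero.2 e1
      simp only [hc]
      fun_prop (disch := assumption)
    have hct : Filter.Tendsto (fun n : ℕ => c (circleMap 0 (1 - 1 / ((n:ℝ) + 1)) θ)) Filter.atTop
        (nhds (x:ℂ)) := by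
      have := hcc.tendsto.comp hcm
      rw [show c (Complex.exp (θ * Complex.I)) = x from e2] at this
      exact this
    have hft := hxc.tendsto.comp hct
    have hfim : 0 ≤ (f x).im :=
      ge_of_tendsto' ((Complex.continuous_im.tendsto _).comp hft) (fun n => him _ (hcim _ (hball n)))
    have hp := aux_psi Λ hΛ _ hfim
    exact ⟨_, hp.2.2.2 hxΛ, hft.div (hft.add_const _) hp.1⟩
  · have := Real.pi_pos
    exact mul_le_mul_of_nonneg_left h0 (by positivity)

noncomputable def logDerSum (s : Multiset ℂ) (w : ℂ) : ℂ := (s.map (fun z => 1 / (w - z))).sum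

lemma logDerSum_cons (a : ℂ) (s : Multiset ℂ) (w : ℂ) : logDerSum (a ::ₘ s) w = 1 / (w - a) + logDerSum s w := by
  simp [logDerSum]

lemma logDerSum_diff (s : Multiset ℂ) (w : ℂ) (h : ∀ z ∈ s, w ≠ z) : DifferentiableAt ℂ (logDerSum s) w := by
  induction s using Multiset.induction_on with
  | empty => 
    have : logDerSum 0 = fun _ => 0 := by ext; simp [logDerSum]
    rw [this]; fun_prop
  | cons a s ih =>
    have : logDerSum (a ::ₘ s) = fun w => 1 / (w - a) + logDerSum s w := by ext w; exact logDerSum_cons a s w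
    rw [this]
    have h1 : w - a ≠ 0 := sub_ne_zero.2 (h a (Multiset.mem_cons_self a s))
    have h2 := ih (fun z hz => h z (Multiset.mem_cons_of_mem hz))
    exact DifferentiableAt.add (DifferentiableAt.div (by fun_prop) (by fun_prop) h1) h2

lemma im_one_div (w : ℂ) : (1 / w).im = - w.im / Complex.normSq w := by simp

lemma logDerSum_im (s : Multiset ℂ) (w : ℂ) (hw : w.im < 0) (h : ∀ z ∈ s, 0 ≤ z.im) :
    0 ≤ (logDerSum s w).im ∧ (s ≠ 0 → 0 < (logDerSum s w).im) := by
  induction s using Multiset.induction_on with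
  | empty => simp [logDerSum]
  | cons a s ih =>
    rw [logDerSum_cons, Complex.add_im, im_one_div]
    have ha := h a (Multiset.mem_cons_self a s)
    have h2 := (ih (fun z hz => h z (Multiset.mem_cons_of_mem hz))).1
    have h3 : (w - a).im < 0 := by rw [Complex.sub_im]; linarith
    have h4 : 0 < -(w - a).im / Complex.normSq (w - a) := by
      apply div_pos (by linarith)
      apply Complex.normSq_pos.2
      intro h; rw [h] at h3; simp at h3
    exact ⟨by linarith, fun _ => by linarith⟩

lemma logDerSum_norm_le (s : Multiset ℂ) (h : ∀ z ∈ s, 0 ≤ z.im) :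
    ‖logDerSum s (-Complex.I)‖ ≤ Multiset.card s := by
  induction s using Multiset.induction_on with
  | empty => simp [logDerSum]
  | cons a s ih =>
    rw [logDerSum_cons]
    have ha := h a (Multiset.mem_cons_self a s)
    have h2 := ih (fun z hz => h z (Multiset.mem_cons_of_mem hz))
    have h3 : 1 ≤ ‖-Complex.I - a‖ := by
      have := Complex.abs_im_le_norm (-Complex.I - a)
      rw [abs_of_neg (by simp; linarith)] at this
      simp at this; 
      rw [← norm_neg] at *
      linarith
    have h4 : ‖1 / (-Complex.I - a)‖ ≤ 1 := by
      rw [norm_div, norm_one]; exact div_le_one_of_le₀ h3 (norm_nonneg _)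
    refine (norm_add_le _ _).trans ?_
    simp only [Multiset.card_cons, Nat.cast_add, Nat.cast_one]
    linarith

lemma logDerSum_im_ge (s : Multiset ℂ) (h : ∀ z ∈ s, ‖z‖ ≤ 1 ∧ 0 ≤ z.im) :
    (Multiset.card s : ℝ) / 2 ≤ (logDerSum s (-Complex.I)).im := by
  induction s using Multiset.induction_on with
  | empty => simp [logDerSum]
  | cons a s ih =>
    rw [logDerSum_cons, Complex.add_im, im_one_div]
    obtain ⟨ha, ha2⟩ := h a (Multiset.mem_cons_self a s)
    have h2 := ih (fun z hz => h z (Multiset.mem_cons_of_mem hz))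
    have h5 : a.re ^ 2 + a.im ^ 2 ≤ 1 := by
      have : ‖a‖ ^ 2 = a.re ^ 2 + a.im ^ 2 := by
        rw [← Complex.normSq_eq_norm_sq, Complex.normSq_apply]; ring
      rw [← this]; nlinarith [norm_nonneg a]
    have h4 : 1 / 2 ≤ -(-Complex.I - a).im / Complex.normSq (-Complex.I - a) := by
      have e : Complex.normSq (-Complex.I - a) = a.re ^ 2 + (1 + a.im) ^ 2 := by
        simp [Complex.normSq_apply]; ring
      rw [e, le_div_iff₀ (by positivity)]
      simp
      nlinarith
    simp only [Multiset.card_cons, Nat.cast_add, Nat.cast_one]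
    linarith

lemma logDerSum_conj (s : Multiset ℂ) (x : ℝ) :
    logDerSum (s.map (starRingEnd ℂ)) x = starRingEnd ℂ (logDerSum s x) := by
  induction s using Multiset.induction_on with
  | empty => simp [logDerSum]
  | cons a s ih => rw [Multiset.map_cons, logDerSum_cons, logDerSum_cons, ih]; simp

/-- weak-type bound, roots in the closed upper half plane -/
lemma aux_R (s : Multiset ℂ) (h : ∀ z ∈ s, 0 ≤ z.im) (Λ : ℝ) (hΛ : 0 < Λ) :
    volume {x : ℝ | x ∈ Icc (-1:ℝ) 1 ∧ (x:ℂ) ∉ s ∧ Λ ≤ ‖logDerSum s x‖} ≤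
      ENNReal.ofReal (4 * Real.pi * (Multiset.card s / Λ)) := by
  refine (measure_mono ?_).trans ((aux_half_plane (logDerSum s) ?_ (fun w hw => (logDerSum_im s w hw h).1) Λ hΛ).trans
    (ENNReal.ofReal_le_ofReal ?_))
  · rintro x ⟨h1, h2, h3⟩
    refine ⟨h1, (logDerSum_diff s x ?_).continuousAt, h3⟩
    rintro z hz rfl; exact h2 hz
  · intro w hw
    apply logDerSum_diff
    rintro z hz rfl
    linarith [h _ hz]
  · have := Real.pi_pos
    have := logDerSum_norm_le s h
    gcongr

lemma aux_R' (s : Multiset ℂ) (h : ∀ z ∈ s, z.im ≤ 0) (Λ : ℝ) (hΛ : 0 < Λ) :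
    volume {x : ℝ | x ∈ Icc (-1:ℝ) 1 ∧ (x:ℂ) ∉ s ∧ Λ ≤ ‖logDerSum s x‖} ≤
      ENNReal.ofReal (4 * Real.pi * (Multiset.card s / Λ)) := by
  have := aux_R (s.map (starRingEnd ℂ)) (by
    intro z hz
    obtain ⟨y, hy, rfl⟩ := Multiset.mem_map.1 hz
    simpa using h y hy) Λ hΛ
  rw [Multiset.card_map] at this
  refine (measure_mono ?_).trans this
  rintro x ⟨h1, h2, h3⟩
  refine ⟨h1, ?_, ?_⟩
  · intro hx
    obtain ⟨y, hy, hyx⟩ := Multiset.mem_map.1 hx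
    have : y = x := by
      have := congrArg (starRingEnd ℂ) hyx
      simpa using this
    exact h2 (this ▸ hy)
  · rw [logDerSum_conj, RCLike.norm_conj]; exact h3

lemma aux_Q (s : Multiset ℂ) (hs : s ≠ 0) (h : ∀ z ∈ s, ‖z‖ ≤ 1 ∧ 0 ≤ z.im) (δ : ℝ) (hδ : 0 < δ) :
    volume {x : ℝ | x ∈ Icc (-1:ℝ) 1 ∧ (x:ℂ) ∉ s ∧ logDerSum s x ≠ 0 ∧ ‖logDerSum s x‖ ≤ Multiset.card s * δ} ≤
      ENNReal.ofReal (8 * Real.pi * δ) := by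
  have hcard : (0:ℝ) < Multiset.card s := by exact_mod_cast Multiset.card_pos.2 hs
  have hpos : ∀ w : ℂ, w.im < 0 → 0 < (logDerSum s w).im := fun w hw =>
    (logDerSum_im s w hw (fun z hz => (h z hz).2)).2 hs
  have hne : ∀ w : ℂ, w.im < 0 → logDerSum s w ≠ 0 := fun w hw h0 => by
    have := hpos w hw
    rw [h0] at this; simp at this
  refine (measure_mono ?_).trans ((aux_half_plane (fun w => -1 / logDerSum s w) ?_ ?_
    (1 / (Multiset.card s * δ)) (by positivity)).trans (ENNReal.ofReal_le_ofReal ?_))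
  · rintro x ⟨h1, h2, h3, h4⟩
    refine ⟨h1, ?_, ?_⟩
    · apply ContinuousAt.div continuousAt_const (logDerSum_diff s x ?_).continuousAt h3
      rintro z hz rfl; exact h2 hz
    · rw [norm_div, norm_neg, norm_one]
      exact one_div_le_one_div_of_le (norm_pos_iff.2 h3) h4
  · intro w hw
    apply DifferentiableAt.div (by fun_prop) (logDerSum_diff s w ?_) (hne w hw)
    rintro z hz rfl
    linarith [h _ hz]
  · intro w hw
    have := hpos w hw
    rw [neg_div, Complex.neg_im, im_one_div, neg_div, neg_neg]
    exact div_nonneg this.le (Complex.normSq_nonneg _)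
  · have h1 := (logDerSum_im_ge s h).trans (Complex.im_le_norm _)
    rw [norm_div, norm_neg, norm_one]
    have h2 : 1 / ‖logDerSum s (-Complex.I)‖ ≤ 1 / ((Multiset.card s : ℝ) / 2) :=
      one_div_le_one_div_of_le (by positivity) h1
    have hpi := Real.pi_pos
    calc 4 * Real.pi * (1 / ‖logDerSum s (-Complex.I)‖ / (1 / (Multiset.card s * δ)))
        ≤ 4 * Real.pi * (1 / ((Multiset.card s : ℝ) / 2) / (1 / (Multiset.card s * δ))) := by gcongr
      _ = _ := by field_simp; norm_num

theorem log_deriv_outside_small_set (n k : ℕ) (hk : 1 ≤ k) (hkn : k < n)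
    (Q : Polynomial ℂ) (hQ0 : Q ≠ 0) (hQdeg : Q.natDegree = n - k)
    (hQz : ∀ z : ℂ, Q.IsRoot z → ‖z‖ ≤ 1 ∧ 0 ≤ z.im)
    (R : Polynomial ℂ) (hR0 : R ≠ 0) (hRdeg : R.natDegree ≤ k) :
    ∃ H : Set ℝ,
      volume H ≤ ENNReal.ofReal
        ((70 * Real.exp 1 + 8 * Real.sqrt 2) * Real.sqrt (2 * (k:ℝ) / ((n:ℝ) - (k:ℝ)))) ∧
      ∀ x ∈ Icc (-1:ℝ) 1 \ H, (Q * R).eval (x : ℂ) ≠ 0 ∧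
        Real.sqrt (((n:ℝ) - (k:ℝ)) * (k:ℝ) / 2) ≤
          ‖(Polynomial.derivative (Q * R)).eval (x : ℂ) / (Q * R).eval (x : ℂ)‖ := by
  classical
  have hkpos : (0:ℝ) < k := by exact_mod_cast hk
  have hN : (0:ℝ) < (n:ℝ) - k := by
    have : (k:ℝ) < n := by exact_mod_cast hkn
    linarith
  set N : ℝ := (n:ℝ) - k with hNdef
  set δ := Real.sqrt (2 * (k:ℝ) / N) with hδdef
  have hδ : 0 < δ := Real.sqrt_pos.2 (by positivity)
  have hδ2 : δ ^ 2 = 2 * k / N := Real.sq_sqrt (by positivity)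
  have hsq : Real.sqrt (N * k / 2) = k / δ := by
    rw [Real.sqrt_eq_iff_mul_self_eq (by positivity) (by positivity), div_mul_div_comm, ← pow_two δ, hδ2]
    field_simp
  have hNδ : N * δ = 2 * (k / δ) := by
    have : N * δ ^ 2 = 2 * k := by rw [hδ2]; field_simp
    field_simp
    linarith
  have hQcard : (Multiset.card Q.roots : ℝ) = N := by
    rw [← (IsAlgClosed.splits Q).natDegree_eq_card_roots, hQdeg, Nat.cast_sub hkn.le]
  have hRcard : (Multiset.card R.roots : ℝ) ≤ k := by
    exact_mod_cast (Polynomial.card_roots' R).trans hRdeg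
  have hQs : Q.roots ≠ 0 := by
    intro h; rw [h] at hQcard; simp at hQcard; linarith
  have hQ'0 : Polynomial.derivative Q ≠ 0 := by
    intro h
    have := Polynomial.derivative_eq_zero.1 h
    omega
  set s1 := R.roots.filter (fun z => 0 ≤ z.im) with hs1
  set s2 := R.roots.filter (fun z => ¬ 0 ≤ z.im) with hs2
  have hs12 : s1 + s2 = R.roots := Multiset.filter_add_not _ _
  have hc12 : (Multiset.card s1 : ℝ) + Multiset.card s2 ≤ k := by
    rw [← hs12, Multiset.card_add] at hRcard
    exact_mod_cast hRcard
  set Λ : ℝ := k / δ / 2 with hΛdef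
  have hΛ : 0 < Λ := by positivity
  set HQ := {x : ℝ | x ∈ Icc (-1:ℝ) 1 ∧ (x:ℂ) ∉ Q.roots ∧ logDerSum Q.roots x ≠ 0 ∧
    ‖logDerSum Q.roots x‖ ≤ Multiset.card Q.roots * δ} with hHQ
  set H1 := {x : ℝ | x ∈ Icc (-1:ℝ) 1 ∧ (x:ℂ) ∉ s1 ∧ Λ ≤ ‖logDerSum s1 x‖} with hH1
  set H2 := {x : ℝ | x ∈ Icc (-1:ℝ) 1 ∧ (x:ℂ) ∉ s2 ∧ Λ ≤ ‖logDerSum s2 x‖} with hH2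
  set H0 := {x : ℝ | (x:ℂ) ∈ (Q * R * Polynomial.derivative Q).roots.toFinset} with hH0
  have hprod : Q * R * Polynomial.derivative Q ≠ 0 := mul_ne_zero (mul_ne_zero hQ0 hR0) hQ'0
  have hv0 : volume H0 = 0 := by
    apply Set.Finite.measure_zero
    exact Set.Finite.preimage (Complex.ofReal_injective.injOn) (Finset.finite_toSet _)
  have hvQ : volume HQ ≤ ENNReal.ofReal (8 * Real.pi * δ) :=
    aux_Q Q.roots hQs (fun z hz => hQz z (Polynomial.isRoot_of_mem_roots hz)) δ hδ
  have hv1 := aux_R s1 (fun z hz => (Multiset.mem_filter.1 hz).2) Λ hΛ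
  have hv2 := aux_R' s2 (fun z hz => (not_le.1 (Multiset.mem_filter.1 hz).2).le) Λ hΛ
  have hpi := Real.pi_pos
  refine ⟨H0 ∪ HQ ∪ H1 ∪ H2, ?_, ?_⟩
  · calc volume (H0 ∪ HQ ∪ H1 ∪ H2) ≤ volume H0 + volume HQ + volume H1 + volume H2 := by
          refine (measure_union_le _ _).trans ?_
          gcongr
          refine (measure_union_le _ _).trans ?_
          gcongr
          exact measure_union_le _ _
      _ ≤ 0 + ENNReal.ofReal (8 * Real.pi * δ) +
          ENNReal.ofReal (4 * Real.pi * (Multiset.card s1 / Λ)) +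
          ENNReal.ofReal (4 * Real.pi * (Multiset.card s2 / Λ)) := by
          rw [hv0]; gcongr
      _ = ENNReal.ofReal (8 * Real.pi * δ + 4 * Real.pi * (Multiset.card s1 / Λ) +
          4 * Real.pi * (Multiset.card s2 / Λ)) := by
          rw [zero_add, ENNReal.ofReal_add, ENNReal.ofReal_add] <;> positivity
      _ ≤ _ := by
          apply ENNReal.ofReal_le_ofReal
          have e1 : (Multiset.card s1 : ℝ) / Λ + Multiset.card s2 / Λ ≤ 2 * δ := by
            rw [← add_div, div_le_iff₀ hΛ]
            have : 2 * δ * Λ = k := by rw [hΛdef]; field_simp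
            linarith
          have e2 : 8 * Real.pi * δ + 4 * Real.pi * (Multiset.card s1 / Λ) +
              4 * Real.pi * (Multiset.card s2 / Λ) ≤ 16 * Real.pi * δ := by nlinarith
          refine e2.trans ?_
          apply mul_le_mul_of_nonneg_right _ hδ.le
          have := Real.pi_le_four
          have := Real.add_one_le_exp (1:ℝ)
          have := Real.sqrt_nonneg 2
          linarith
  · rintro x ⟨hx, hxH⟩
    simp only [mem_union, not_or] at hxH
    obtain ⟨⟨⟨hx0, hxQ⟩, hx1⟩, hx2⟩ := hxH
    have hx0' : (Q * R * Polynomial.derivative Q).eval (x:ℂ) ≠ 0 := by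
      intro h
      apply hx0
      show (x:ℂ) ∈ (Q * R * Polynomial.derivative Q).roots.toFinset
      rw [Multiset.mem_toFinset, Polynomial.mem_roots hprod]
      exact h
    rw [Polynomial.eval_mul, Polynomial.eval_mul] at hx0'
    have hQ'x : (Polynomial.derivative Q).eval (x:ℂ) ≠ 0 := right_ne_zero_of_mul hx0'
    have hQx : Q.eval (x:ℂ) ≠ 0 := left_ne_zero_of_mul (left_ne_zero_of_mul hx0')
    have hRx : R.eval (x:ℂ) ≠ 0 := right_ne_zero_of_mul (left_ne_zero_of_mul hx0')
    refine ⟨by rw [Polynomial.eval_mul]; exact mul_ne_zero hQx hRx, ?_⟩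
    have hxQr : (x:ℂ) ∉ Q.roots := fun h => hQx (Polynomial.isRoot_of_mem_roots h)
    have hxRr : (x:ℂ) ∉ R.roots := fun h => hRx (Polynomial.isRoot_of_mem_roots h)
    have hlQ : (Polynomial.derivative Q).eval (x:ℂ) / Q.eval (x:ℂ) = logDerSum Q.roots x :=
      (IsAlgClosed.splits Q).eval_derivative_div_eval_of_ne_zero hQx
    have hlR : (Polynomial.derivative R).eval (x:ℂ) / R.eval (x:ℂ) = logDerSum s1 x + logDerSum s2 x := by
      rw [(IsAlgClosed.splits R).eval_derivative_div_eval_of_ne_zero hRx, ← hs12]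
      simp [logDerSum]
    have hsum : (Polynomial.derivative (Q * R)).eval (x:ℂ) / (Q * R).eval (x:ℂ) =
        logDerSum Q.roots x + (logDerSum s1 x + logDerSum s2 x) := by
      rw [← hlQ, ← hlR, Polynomial.derivative_mul, Polynomial.eval_add, Polynomial.eval_mul,
        Polynomial.eval_mul, Polynomial.eval_mul]
      field_simp
    have hb1 : ‖logDerSum s1 x‖ < Λ := by
      by_contra hc
      exact hx1 ⟨hx, fun h => hxRr (Multiset.mem_filter.1 h).1, not_lt.1 hc⟩
    have hb2 : ‖logDerSum s2 x‖ < Λ := by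
      by_contra hc
      exact hx2 ⟨hx, fun h => hxRr (Multiset.mem_filter.1 h).1, not_lt.1 hc⟩
    have hbQ : N * δ < ‖logDerSum Q.roots x‖ := by
      by_contra hc
      refine hxQ ⟨hx, hxQr, ?_, ?_⟩
      · rw [← hlQ]; exact div_ne_zero hQ'x hQx
      · rw [hQcard]; exact not_lt.1 hc
    rw [hsum, hsq]
    have t1 := norm_sub_le_norm_add (logDerSum Q.roots x) (logDerSum s1 x + logDerSum s2 x)
    have t2 := norm_add_le (logDerSum s1 (x:ℂ)) (logDerSum s2 x)
    have t3 : Λ + Λ = k / δ := by rw [hΛdef]; ring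
    linarith
end
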